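/- Let μ₁, μ₂ ∈ M¹₊(Ω) with μ₁ ≤ μ₂, and let μ₁*, μ₂* be their reduced measures. Then μ₁* ≤ μ₂*, and moreover μ₂* − μ₁* ≤ μ₂ − μ₁, i.e., μ₂*(A) + μ₁(A) ≤ μ₁*(A) + μ₂(A) for every Borel set A ⊂ Ω. -/

import Mathlib

open MeasureTheory Set Filter Topology
open scoped ENNReal NNReal

noncomputable section

/-- Euclidean space `ℝ^N`. -/
abbrev Euc (N : ℕ) : Type := EuclideanSpace ℝ (Fin N)

/-- `ρ(x) = dist(x, ∂Ω)`, realized as the distance from `x` to the complement of `Ω`. -/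
def rho {N : ℕ} (Ω : Set (Euc N)) (x : Euc N) : ℝ := Metric.infDist x Ωᶜ

/-- The Laplacian (in the space variable) of `f : ℝ^N → ℝ`. -/
def lap {N : ℕ} (f : Euc N → ℝ) (x : Euc N) : ℝ :=
  ∑ i : Fin N, fderiv ℝ (fun y => fderiv ℝ f y (EuclideanSpace.single i 1)) x
    (EuclideanSpace.single i 1)

/-- The parabolic cylinder `Q_T = Ω × (0,T)`. -/
def QT {N : ℕ} (Ω : Set (Euc N)) (T : ℝ) : Set (Euc N × ℝ) := Ω ×ˢ Ioo 0 T

/-- `∂_t ζ + Δ ζ` for a function `ζ(x,t)` (curried). -/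
def heatAdj {N : ℕ} (ζ : Euc N → ℝ → ℝ) (p : Euc N × ℝ) : ℝ :=
  deriv (ζ p.1) p.2 + lap (fun y => ζ y p.2) p.1

/-- `C^{2,1}` regularity: `ζ`, `∂_t ζ`, `∇_x ζ` and `D²_x ζ` exist and are continuous. -/
def C21 {N : ℕ} (ζ : Euc N → ℝ → ℝ) : Prop :=
  Continuous (fun p : Euc N × ℝ => ζ p.1 p.2) ∧
  (∀ (x : Euc N) (t : ℝ), DifferentiableAt ℝ (ζ x) t) ∧
  Continuous (fun p : Euc N × ℝ => deriv (ζ p.1) p.2) ∧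
  (∀ (t : ℝ) (x : Euc N), DifferentiableAt ℝ (fun y => ζ y t) x) ∧
  Continuous (fun p : Euc N × ℝ => fderiv ℝ (fun y => ζ y p.2) p.1) ∧
  (∀ (t : ℝ) (x : Euc N), DifferentiableAt ℝ (fun y => fderiv ℝ (fun z => ζ z t) y) x) ∧
  Continuous (fun p : Euc N × ℝ => fderiv ℝ (fun y => fderiv ℝ (fun z => ζ z p.2) y) p.1)

/-- Membership in `C^{2,1}_{ℓ,0}(Q̄_T)` : `C^{2,1}` regularity together with
vanishing on `∂Ω × [0,T] ∪ Ω̄ × {T}`. -/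
def TestZero {N : ℕ} (Ω : Set (Euc N)) (T : ℝ) (ζ : Euc N → ℝ → ℝ) : Prop :=
  C21 ζ ∧ (∀ x ∈ frontier Ω, ∀ t ∈ Icc (0:ℝ) T, ζ x t = 0) ∧
  (∀ x ∈ closure Ω, ζ x T = 0)

/-- `g : ℝ → ℝ` continuous, nondecreasing and vanishing on `(-∞,0]`. -/
def GoodG (g : ℝ → ℝ) : Prop := Continuous g ∧ Monotone g ∧ ∀ r : ℝ, r ≤ 0 → g r = 0

/-- `μ ∈ M¹₊(Ω)` : a positive Radon measure on `Ω` with `∫_Ω ρ dμ < ∞`. -/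
def MemM1 {N : ℕ} (Ω : Set (Euc N)) (μ : Measure (Euc N)) : Prop :=
  μ Ωᶜ = 0 ∧ (∀ K : Set (Euc N), K ⊆ Ω → IsCompact K → μ K < ⊤) ∧
  (∫⁻ x, ENNReal.ofReal (rho Ω x) ∂μ) < ⊤

/-- A positive Radon measure on the (open) set `U`. -/
def RadonOn {N : ℕ} (U : Set (Euc N)) (ν : Measure (Euc N)) : Prop :=
  ν Uᶜ = 0 ∧ ∀ K : Set (Euc N), K ⊆ U → IsCompact K → ν K < ⊤

/-- Weak solution of `(P_μ)` : `∂_t u - Δu + g(u) = 0` in `Q_T`, `u = 0` on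
`∂Ω × (0,T)`, `u(·,0) = μ`. -/
def WeakSol {N : ℕ} (Ω : Set (Euc N)) (T : ℝ) (g : ℝ → ℝ) (μ : Measure (Euc N))
    (u : Euc N × ℝ → ℝ) : Prop :=
  IntegrableOn u (QT Ω T) ∧
  IntegrableOn (fun p => g (u p) * rho Ω p.1) (QT Ω T) ∧
  ∀ ζ : Euc N → ℝ → ℝ, TestZero Ω T ζ →
    (∫ p in QT Ω T,
      (-(u p) * deriv (ζ p.1) p.2 - u p * lap (fun y => ζ y p.2) p.1 + ζ p.1 p.2 * g (u p)))
      = ∫ x, ζ x 0 ∂μ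

/-- Weak subsolution of `(P_μ)`. -/
def WeakSubSol {N : ℕ} (Ω : Set (Euc N)) (T : ℝ) (g : ℝ → ℝ) (μ : Measure (Euc N))
    (u : Euc N × ℝ → ℝ) : Prop :=
  IntegrableOn u (QT Ω T) ∧
  IntegrableOn (fun p => g (u p) * rho Ω p.1) (QT Ω T) ∧
  ∀ ζ : Euc N → ℝ → ℝ, TestZero Ω T ζ → (∀ x t, 0 ≤ ζ x t) →
    (∫ p in QT Ω T,
      (-(u p) * deriv (ζ p.1) p.2 - u p * lap (fun y => ζ y p.2) p.1 + ζ p.1 p.2 * g (u p)))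
      ≤ ∫ x, ζ x 0 ∂μ

/-- `μ` is a good measure relative to `g` : `(P_μ)` admits a weak solution. -/
def GoodMeasure {N : ℕ} (Ω : Set (Euc N)) (T : ℝ) (g : ℝ → ℝ) (μ : Measure (Euc N)) : Prop :=
  ∃ u, WeakSol Ω T g μ u

/-- Essential limit of `F(t)` as `t → 0⁺` equals `L`. -/
def EssLimInit (F : ℝ → ℝ) (L : ℝ) : Prop :=
  Tendsto F ((𝓝[>] (0:ℝ)) ⊓ (ae (volume : Measure ℝ))) (𝓝 L)

/-- Essential limit of `F(t)` as `t → 0⁺` is `+∞`. -/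
def EssLimInitTop (F : ℝ → ℝ) : Prop :=
  Tendsto F ((𝓝[>] (0:ℝ)) ⊓ (ae (volume : Measure ℝ))) atTop

/-- `ν` is the initial trace of `u` on `U ⊆ Ω` : for every `φ ∈ C_c(U)`,
`ess lim_{t→0} ∫_Ω u(·,t) φ dx = ∫ φ dν`. -/
def InitTraceOn {N : ℕ} (Ω U : Set (Euc N)) (u : Euc N × ℝ → ℝ) (ν : Measure (Euc N)) : Prop :=
  ∀ φ : Euc N → ℝ, Continuous φ → HasCompactSupport φ → tsupport φ ⊆ U →
    EssLimInit (fun t => ∫ x in Ω, u (x, t) * φ x) (∫ x, φ x ∂ν)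

/-- `μstar` is the reduced measure of `μ` : the largest good measure `≤ μ`. -/
def IsReducedMeasure {N : ℕ} (Ω : Set (Euc N)) (T : ℝ) (g : ℝ → ℝ)
    (μ μstar : Measure (Euc N)) : Prop :=
  MemM1 Ω μstar ∧ μstar ≤ μ ∧ GoodMeasure Ω T g μstar ∧
  ∀ ν : Measure (Euc N), MemM1 Ω ν → GoodMeasure Ω T g ν → ν ≤ μ → ν ≤ μstar

/-- The `N`-dimensional Hausdorff measure on `ℝ^N`. -/
def hausN {N : ℕ} : Measure (Euc N) := MeasureTheory.Measure.hausdorffMeasure (N : ℝ)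

/-!
Everything rests on one fact: a measure `ν ≤ μ` carried by a compact subset `K` of `Ω` is good as
soon as `μ` is. Given it, restrict to `K` and consider `μ₂* ⊓ μ₁`: it lies below the good measure
`μ₂*`, hence is good, and it lies below `μ₁`, hence below `μ₁*` by maximality. As
`μ₂* ⊔ μ₁ ≤ μ₂`, the identity `a + b = a ⊓ b + a ⊔ b` gives `μ₂* + μ₁ ≤ μ₁* + μ₂` on `K`, and `K`
exhausts `Ω`.

For the fact, replace `g` by Lipschitz functions `gₙ ↑ g`. The heat potential of `ν` is a
supersolution, and a monotone iteration below it, whose linear steps are solved by duality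
(Hahn–Banach and the Riesz representation theorem), produces solutions `uₙ` with datum `ν`, which
decrease to some `u`. Only the convergence `gₙ(uₙ) → g(u)` in `L¹` is in question. Away from
`K × {0}` the heat potential is bounded. Near it, Kato's inequality for `(uₙ - U)⁺`, where `U` is a
solution with datum `μ`, tested with a cutoff that decreases in time, bounds the mass of `gₙ(uₙ)` in
a thin initial layer by that of `g(U)` plus a small error, uniformly in `n`. So the `gₙ(uₙ)` are
uniformly integrable, and Vitali's theorem applies.
-/

section ParabolicCalculus

variable {E : Type*} [NormedAddCommGroup E] [NormedSpace ℝ E]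

/-- `ζ` is of class `C^{2,1}`, with time derivative `a`, spatial gradient `b` and spatial Hessian
`c`. This is `C21` with the derivatives named. -/
structure HasC21Deriv (ζ a : E → ℝ → ℝ) (b : E → ℝ → E →L[ℝ] ℝ)
    (c : E → ℝ → E →L[ℝ] E →L[ℝ] ℝ) : Prop where
  continuous : Continuous fun p : E × ℝ => ζ p.1 p.2
  hasDerivAt : ∀ x t, HasDerivAt (ζ x) (a x t) t
  hasFDerivAt : ∀ x t, HasFDerivAt (fun y => ζ y t) (b x t) x
  hasFDerivAt_fderiv : ∀ x t, HasFDerivAt (fun y => b y t) (c x t) x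
  continuous_deriv : Continuous fun p : E × ℝ => a p.1 p.2
  continuous_fderiv : Continuous fun p : E × ℝ => b p.1 p.2
  continuous_hessian : Continuous fun p : E × ℝ => c p.1 p.2

/-- A function of one real variable that is of class `C²`, with derivatives `j'` and `j''`. -/
structure HasC2Deriv (j j' j'' : ℝ → ℝ) : Prop where
  hasDerivAt : ∀ s, HasDerivAt j (j' s) s
  hasDerivAt_deriv : ∀ s, HasDerivAt j' (j'' s) s
  continuous_deriv2 : Continuous j''

-- Instance synthesis does not find this from the topological group structure on its own.
instance instContinuousAddBilinForm : ContinuousAdd (E →L[ℝ] E →L[ℝ] ℝ) :=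
  ⟨(ContinuousLinearMap.topologicalAddGroup (σ := RingHom.id ℝ) (E := E)
    (F := E →L[ℝ] ℝ)).toContinuousAdd.continuous_add⟩

namespace HasC2Deriv

variable {j j' j'' : ℝ → ℝ}

theorem continuous (h : HasC2Deriv j j' j'') : Continuous j :=
  continuous_iff_continuousAt.2 fun s => (h.hasDerivAt s).continuousAt

theorem continuous_deriv (h : HasC2Deriv j j' j'') : Continuous j' :=
  continuous_iff_continuousAt.2 fun s => (h.hasDerivAt_deriv s).continuousAt

theorem contDiff (h : HasC2Deriv j j' j'') : ContDiff ℝ 2 j := by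
  have hj : deriv j = j' := funext fun s => (h.hasDerivAt s).deriv
  have hj' : deriv j' = j'' := funext fun s => (h.hasDerivAt_deriv s).deriv
  rw [show (2 : WithTop ℕ∞) = 1 + 1 by norm_num, contDiff_succ_iff_deriv, hj,
    contDiff_one_iff_deriv, hj']
  exact ⟨fun s => (h.hasDerivAt s).differentiableAt, by simp,
    fun s => (h.hasDerivAt_deriv s).differentiableAt, h.continuous_deriv2⟩

end HasC2Deriv

theorem hasC2Deriv_of_contDiff {j : ℝ → ℝ} (h : ContDiff ℝ 2 j) :
    HasC2Deriv j (deriv j) (deriv (deriv j)) := by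
  have h' : ContDiff ℝ 1 (deriv j) := h.deriv'
  exact ⟨fun s => (h.differentiable (by norm_num) s).hasDerivAt,
    fun s => (h'.differentiable (by norm_num) s).hasDerivAt, h'.continuous_deriv le_rfl⟩

namespace HasC21Deriv

variable {ζ a : E → ℝ → ℝ} {b : E → ℝ → E →L[ℝ] ℝ} {c : E → ℝ → E →L[ℝ] E →L[ℝ] ℝ}

theorem comp (h : HasC21Deriv ζ a b c) {j j' j'' : ℝ → ℝ} (hj : HasC2Deriv j j' j'') :
    HasC21Deriv (fun x t => j (ζ x t)) (fun x t => j' (ζ x t) * a x t)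
      (fun x t => j' (ζ x t) • b x t)
      (fun x t => j' (ζ x t) • c x t + (j'' (ζ x t) • b x t).smulRight (b x t)) where
  continuous := hj.continuous.comp h.continuous
  hasDerivAt x t := (hj.hasDerivAt _).comp t (h.hasDerivAt x t)
  hasFDerivAt x t := (hj.hasDerivAt _).comp_hasFDerivAt x (h.hasFDerivAt x t)
  hasFDerivAt_fderiv x t :=
    ((hj.hasDerivAt_deriv _).comp_hasFDerivAt x (h.hasFDerivAt x t)).smul
      (h.hasFDerivAt_fderiv x t)
  continuous_deriv := (hj.continuous_deriv.comp h.continuous).mul h.continuous_deriv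
  continuous_fderiv := (hj.continuous_deriv.comp h.continuous).smul h.continuous_fderiv
  continuous_hessian :=
    ((hj.continuous_deriv.comp h.continuous).smul h.continuous_hessian).add <|
      ((ContinuousLinearMap.smulRightL ℝ E (E →L[ℝ] ℝ)).continuous.comp
        ((hj.continuous_deriv2.comp h.continuous).smul h.continuous_fderiv)).clm_apply
          h.continuous_fderiv

theorem time_mul (h : HasC21Deriv ζ a b c) {θ θ' : ℝ → ℝ} (hθ : ∀ s, HasDerivAt θ (θ' s) s)
    (hθ' : Continuous θ') :
    HasC21Deriv (fun x t => θ t * ζ x t) (fun x t => θ' t * ζ x t + θ t * a x t)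
      (fun x t => θ t • b x t) (fun x t => θ t • c x t) :=
  have hθc : Continuous θ := continuous_iff_continuousAt.2 fun s => (hθ s).continuousAt
  { continuous := (hθc.comp continuous_snd).mul h.continuous
    hasDerivAt := fun x t => (hθ t).mul (h.hasDerivAt x t)
    hasFDerivAt := fun x t => (h.hasFDerivAt x t).const_mul (θ t)
    hasFDerivAt_fderiv := fun x t => (h.hasFDerivAt_fderiv x t).const_smul (θ t)
    continuous_deriv := ((hθ'.comp continuous_snd).mul h.continuous).add
      ((hθc.comp continuous_snd).mul h.continuous_deriv)
    continuous_fderiv := (hθc.comp continuous_snd).smul h.continuous_fderiv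
    continuous_hessian := (hθc.comp continuous_snd).smul h.continuous_hessian }

theorem add {ζ' a' : E → ℝ → ℝ} {b' : E → ℝ → E →L[ℝ] ℝ} {c' : E → ℝ → E →L[ℝ] E →L[ℝ] ℝ}
    (h : HasC21Deriv ζ a b c) (h' : HasC21Deriv ζ' a' b' c') :
    HasC21Deriv (fun x t => ζ x t + ζ' x t) (fun x t => a x t + a' x t)
      (fun x t => b x t + b' x t) (fun x t => c x t + c' x t) where
  continuous := h.continuous.add h'.continuous
  hasDerivAt x t := (h.hasDerivAt x t).add (h'.hasDerivAt x t)
  hasFDerivAt x t := (h.hasFDerivAt x t).add (h'.hasFDerivAt x t)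
  hasFDerivAt_fderiv x t := (h.hasFDerivAt_fderiv x t).add (h'.hasFDerivAt_fderiv x t)
  continuous_deriv := h.continuous_deriv.add h'.continuous_deriv
  continuous_fderiv := h.continuous_fderiv.add h'.continuous_fderiv
  continuous_hessian := h.continuous_hessian.add h'.continuous_hessian

theorem const_mul (h : HasC21Deriv ζ a b c) (r : ℝ) :
    HasC21Deriv (fun x t => r * ζ x t) (fun x t => r * a x t) (fun x t => r • b x t)
      (fun x t => r • c x t) := by
  simpa using h.time_mul (fun s => hasDerivAt_const s r) continuous_const

theorem hasCompactSupport_deriv (h : HasC21Deriv ζ a b c)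
    (hs : HasCompactSupport fun p : E × ℝ => ζ p.1 p.2) :
    HasCompactSupport fun p : E × ℝ => a p.1 p.2 := by
  refine hs.mono' fun p hp => ?_
  contrapose! hp
  have hev : ∀ᶠ s in 𝓝 p.2, ζ p.1 s = 0 :=
    (Continuous.tendsto (f := fun s : ℝ => (p.1, s)) (by fun_prop) p.2).eventually
      (notMem_tsupport_iff_eventuallyEq.1 hp)
  simpa using (h.hasDerivAt p.1 p.2).unique ((hasDerivAt_const p.2 0).congr_of_eventuallyEq hev)

theorem hasCompactSupport_fderiv (h : HasC21Deriv ζ a b c)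
    (hs : HasCompactSupport fun p : E × ℝ => ζ p.1 p.2) :
    HasCompactSupport fun p : E × ℝ => b p.1 p.2 := by
  refine hs.mono' fun p hp => ?_
  contrapose! hp
  have hev : ∀ᶠ y in 𝓝 p.1, ζ y p.2 = 0 :=
    (Continuous.tendsto (f := fun y : E => (y, p.2)) (by fun_prop) p.1).eventually
      (notMem_tsupport_iff_eventuallyEq.1 hp)
  simpa using (h.hasFDerivAt p.1 p.2).unique ((hasFDerivAt_const 0 p.1).congr_of_eventuallyEq hev)

theorem hasCompactSupport_hessian (h : HasC21Deriv ζ a b c)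
    (hs : HasCompactSupport fun p : E × ℝ => ζ p.1 p.2) :
    HasCompactSupport fun p : E × ℝ => c p.1 p.2 := by
  refine (h.hasCompactSupport_fderiv hs).mono' fun p hp => ?_
  contrapose! hp
  have hev : ∀ᶠ y in 𝓝 p.1, b y p.2 = 0 :=
    (Continuous.tendsto (f := fun y : E => (y, p.2)) (by fun_prop) p.1).eventually
      (notMem_tsupport_iff_eventuallyEq.1 hp)
  simpa using (h.hasFDerivAt_fderiv p.1 p.2).unique
    ((hasFDerivAt_const 0 p.1).congr_of_eventuallyEq hev)

end HasC21Deriv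

end ParabolicCalculus

section HeatOperator

variable {N : ℕ}

/-- The trace `∑ᵢ c(eᵢ, eᵢ)` of a bilinear form in the standard basis. -/
def bilinTrace (c : Euc N →L[ℝ] Euc N →L[ℝ] ℝ) : ℝ :=
  ∑ i : Fin N, c (EuclideanSpace.single i 1) (EuclideanSpace.single i 1)

theorem bilinTrace_add (c d : Euc N →L[ℝ] Euc N →L[ℝ] ℝ) :
    bilinTrace (c + d) = bilinTrace c + bilinTrace d := by
  simp [bilinTrace, Finset.sum_add_distrib]

theorem bilinTrace_smul (r : ℝ) (c : Euc N →L[ℝ] Euc N →L[ℝ] ℝ) :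
    bilinTrace (r • c) = r * bilinTrace c := by
  simp [bilinTrace, Finset.mul_sum]

theorem continuous_bilinTrace : Continuous (bilinTrace (N := N)) :=
  continuous_finsetSum _ fun _ _ =>
    (continuous_id.clm_apply continuous_const).clm_apply continuous_const

namespace HasC21Deriv

variable {ζ a : Euc N → ℝ → ℝ} {b : Euc N → ℝ → Euc N →L[ℝ] ℝ}
  {c : Euc N → ℝ → Euc N →L[ℝ] Euc N →L[ℝ] ℝ}

theorem lap_eq (h : HasC21Deriv ζ a b c) (x : Euc N) (t : ℝ) :
    lap (fun y => ζ y t) x = bilinTrace (c x t) := by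
  refine Finset.sum_congr rfl fun i _ => ?_
  have hb : (fun y => fderiv ℝ (fun y => ζ y t) y (EuclideanSpace.single i 1)) =
      fun y => b y t (EuclideanSpace.single i 1) :=
    funext fun y => by rw [(h.hasFDerivAt y t).fderiv]
  rw [hb, ((h.hasFDerivAt_fderiv x t).clm_apply
    (hasFDerivAt_const (EuclideanSpace.single i (1 : ℝ)) x)).fderiv]
  simp

theorem heatAdj_eq (h : HasC21Deriv ζ a b c) (p : Euc N × ℝ) :
    heatAdj ζ p = a p.1 p.2 + bilinTrace (c p.1 p.2) := by
  rw [heatAdj, h.lap_eq, (h.hasDerivAt p.1 p.2).deriv]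

theorem c21 (h : HasC21Deriv ζ a b c) : C21 ζ := by
  have ha : ∀ x t, deriv (ζ x) t = a x t := fun x t => (h.hasDerivAt x t).deriv
  have hb : ∀ t, fderiv ℝ (fun z => ζ z t) = fun y => b y t :=
    fun t => funext fun y => (h.hasFDerivAt y t).fderiv
  have hc : ∀ x t, fderiv ℝ (fun y => b y t) x = c x t :=
    fun x t => (h.hasFDerivAt_fderiv x t).fderiv
  simp only [C21, ha, hb, hc]
  exact ⟨h.continuous, fun x t => (h.hasDerivAt x t).differentiableAt, h.continuous_deriv,
    fun t x => (h.hasFDerivAt x t).differentiableAt, h.continuous_fderiv,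
    fun t x => (h.hasFDerivAt_fderiv x t).differentiableAt, h.continuous_hessian⟩

/-- Convexity of `j` makes the term `j''(ζ)|∇ζ|²` in the chain rule nonnegative. -/
theorem mul_heatAdj_le_heatAdj_comp (h : HasC21Deriv ζ a b c) {j j' j'' : ℝ → ℝ}
    (hj : HasC2Deriv j j' j'') (hj'' : ∀ s, 0 ≤ j'' s) (p : Euc N × ℝ) :
    j' (ζ p.1 p.2) * heatAdj ζ p ≤ heatAdj (fun x t => j (ζ x t)) p := by
  rw [(h.comp hj).heatAdj_eq, h.heatAdj_eq, mul_add, bilinTrace_add, bilinTrace_smul]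
  have htr : 0 ≤ bilinTrace ((j'' (ζ p.1 p.2) • b p.1 p.2).smulRight (b p.1 p.2)) := by
    refine Finset.sum_nonneg fun i _ => ?_
    have := mul_nonneg (hj'' (ζ p.1 p.2)) (mul_self_nonneg (b p.1 p.2 (EuclideanSpace.single i 1)))
    simpa [mul_assoc] using this
  linarith

end HasC21Deriv

namespace C21

variable {ζ ψ : Euc N → ℝ → ℝ}

theorem exists_hasC21Deriv (h : C21 ζ) : ∃ a b c, HasC21Deriv ζ a b c := by
  obtain ⟨hζ, hd, hd', hf, hf', hh, hh'⟩ := h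
  exact ⟨fun x t => deriv (ζ x) t, fun x t => fderiv ℝ (fun y => ζ y t) x,
    fun x t => fderiv ℝ (fun y => fderiv ℝ (fun z => ζ z t) y) x,
    hζ, fun x t => (hd x t).hasDerivAt, fun x t => (hf t x).hasFDerivAt,
    fun x t => (hh t x).hasFDerivAt, hd', hf', hh'⟩

theorem continuous (h : C21 ζ) : Continuous fun p : Euc N × ℝ => ζ p.1 p.2 := h.1

theorem continuous_heatAdj (h : C21 ζ) : Continuous (heatAdj ζ) := by
  obtain ⟨a, b, c, h⟩ := h.exists_hasC21Deriv
  rw [funext h.heatAdj_eq]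
  exact h.continuous_deriv.add (continuous_bilinTrace.comp h.continuous_hessian)

theorem continuous_slice (h : C21 ζ) (t : ℝ) : Continuous fun x => ζ x t :=
  h.continuous.comp (continuous_id.prodMk continuous_const)

theorem zero : C21 fun (_ : Euc N) (_ : ℝ) => (0 : ℝ) := by
  simp [C21, continuous_const]

theorem comp (h : C21 ζ) {j : ℝ → ℝ} (hj : ContDiff ℝ 2 j) : C21 fun x t => j (ζ x t) := by
  obtain ⟨a, b, c, h⟩ := h.exists_hasC21Deriv
  exact (h.comp (hasC2Deriv_of_contDiff hj)).c21

theorem eventually_slices {p : Euc N × ℝ} (h : ∀ᶠ q in 𝓝 p, ψ q.1 q.2 = ζ q.1 q.2) :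
    ψ p.1 =ᶠ[𝓝 p.2] ζ p.1 ∧ (fun y => ψ y p.2) =ᶠ[𝓝 p.1] fun y => ζ y p.2 :=
  ⟨(Continuous.tendsto (f := fun s : ℝ => (p.1, s)) (by fun_prop) p.2).eventually h,
    (Continuous.tendsto (f := fun y : Euc N => (y, p.2)) (by fun_prop) p.1).eventually h⟩

theorem of_eventuallyEq
    (h : ∀ p : Euc N × ℝ, ∃ ζ, C21 ζ ∧ ∀ᶠ q in 𝓝 p, ψ q.1 q.2 = ζ q.1 q.2) : C21 ψ := by
  choose ζ hζ hev using h
  have hfderiv : ∀ p q : Euc N × ℝ, (∀ᶠ r : Euc N × ℝ in 𝓝 q, ψ r.1 r.2 = ζ p r.1 r.2) →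
      fderiv ℝ (fun y => ψ y q.2) =ᶠ[𝓝 q.1] fderiv ℝ (fun y => ζ p y q.2) :=
    fun p q hq => (eventually_slices hq).2.fderiv
  refine ⟨?_, fun x t => ?_, ?_, fun t x => ?_, ?_, fun t x => ?_, ?_⟩
  · exact continuous_iff_continuousAt.2 fun p => (hζ p).1.continuousAt.congr_of_eventuallyEq (hev p)
  · exact ((hζ (x, t)).2.1 x t).congr_of_eventuallyEq (eventually_slices (hev (x, t))).1
  · refine continuous_iff_continuousAt.2 fun p =>
      (hζ p).2.2.1.continuousAt.congr_of_eventuallyEq ?_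
    filter_upwards [(hev p).eventually_nhds] with q hq using (eventually_slices hq).1.deriv_eq
  · exact ((hζ (x, t)).2.2.2.1 t x).congr_of_eventuallyEq (eventually_slices (hev (x, t))).2
  · refine continuous_iff_continuousAt.2 fun p =>
      (hζ p).2.2.2.2.1.continuousAt.congr_of_eventuallyEq ?_
    filter_upwards [(hev p).eventually_nhds] with q hq using (eventually_slices hq).2.fderiv_eq
  · exact ((hζ (x, t)).2.2.2.2.2.1 t x).congr_of_eventuallyEq (hfderiv _ _ (hev (x, t)))
  · refine continuous_iff_continuousAt.2 fun p =>
      (hζ p).2.2.2.2.2.2.continuousAt.congr_of_eventuallyEq ?_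
    filter_upwards [(hev p).eventually_nhds] with q hq using (hfderiv p q hq).fderiv_eq

end C21

theorem heatAdj_congr {ζ ψ : Euc N → ℝ → ℝ} {p : Euc N × ℝ}
    (h : ∀ᶠ q in 𝓝 p, ψ q.1 q.2 = ζ q.1 q.2) : heatAdj ψ p = heatAdj ζ p := by
  obtain ⟨ht, hx⟩ := C21.eventually_slices h
  refine congr_arg₂ (· + ·) ht.deriv_eq (Finset.sum_congr rfl fun i _ => ?_)
  have hx' : (fun y => fderiv ℝ (fun y => ψ y p.2) y (EuclideanSpace.single i 1)) =ᶠ[𝓝 p.1]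
      fun y => fderiv ℝ (fun y => ζ y p.2) y (EuclideanSpace.single i 1) :=
    hx.fderiv.fun_comp fun L => L (EuclideanSpace.single i 1)
  rw [hx'.fderiv_eq]

theorem heatAdj_eq_zero {ψ : Euc N → ℝ → ℝ} {p : Euc N × ℝ} (h : ∀ᶠ q in 𝓝 p, ψ q.1 q.2 = 0) :
    heatAdj ψ p = 0 :=
  (heatAdj_congr (ζ := fun _ _ => 0) h).trans (by simp [heatAdj, lap])

theorem heatAdj_add {ζ ζ' : Euc N → ℝ → ℝ} (h : C21 ζ) (h' : C21 ζ') (p : Euc N × ℝ) :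
    heatAdj (fun x t => ζ x t + ζ' x t) p = heatAdj ζ p + heatAdj ζ' p := by
  obtain ⟨a, b, c, h⟩ := h.exists_hasC21Deriv
  obtain ⟨a', b', c', h'⟩ := h'.exists_hasC21Deriv
  rw [(h.add h').heatAdj_eq, h.heatAdj_eq, h'.heatAdj_eq, bilinTrace_add]
  ring

theorem heatAdj_const_mul {ζ : Euc N → ℝ → ℝ} (h : C21 ζ) (r : ℝ) (p : Euc N × ℝ) :
    heatAdj (fun x t => r * ζ x t) p = r * heatAdj ζ p := by
  obtain ⟨a, b, c, h⟩ := h.exists_hasC21Deriv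
  rw [(h.const_mul r).heatAdj_eq, h.heatAdj_eq, bilinTrace_smul]
  ring

end HeatOperator

section SmoothRamp

variable {ε s : ℝ}

/-- A smooth monotone step, equal to `0` on `(-∞, ε]` and to `1` on `[2ε, ∞)`. -/
def smoothStep (ε s : ℝ) : ℝ := Real.smoothTransition (s / ε - 1)

/-- The primitive of `smoothStep ε` from `0`: a smooth convex approximation of the positive part. -/
def smoothRamp (ε s : ℝ) : ℝ := ∫ r in (0 : ℝ)..s, smoothStep ε r

theorem contDiff_smoothStep (ε : ℝ) : ContDiff ℝ 2 (smoothStep ε) :=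
  Real.smoothTransition.contDiff.comp (by fun_prop)

theorem smoothStep_nonneg (ε s : ℝ) : 0 ≤ smoothStep ε s := Real.smoothTransition.nonneg _

theorem smoothStep_le_one (ε s : ℝ) : smoothStep ε s ≤ 1 := Real.smoothTransition.le_one _

theorem smoothStep_of_le (hε : 0 < ε) (hs : s ≤ ε) : smoothStep ε s = 0 :=
  Real.smoothTransition.zero_of_nonpos <| sub_nonpos.2 <| (div_le_one hε).2 hs

theorem smoothStep_of_two_mul_le (hε : 0 < ε) (hs : 2 * ε ≤ s) : smoothStep ε s = 1 :=
  Real.smoothTransition.one_of_one_le <| le_sub_iff_add_le.2 <| (le_div_iff₀ hε).2 (by linarith)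

theorem monotone_smoothStep (hε : 0 < ε) : Monotone (smoothStep ε) := fun a b hab =>
  Real.smoothTransition.monotone (by gcongr)

theorem hasC2Deriv_smoothRamp (ε : ℝ) :
    HasC2Deriv (smoothRamp ε) (smoothStep ε) (deriv (smoothStep ε)) where
  hasDerivAt s :=
    have hc := (contDiff_smoothStep ε).continuous
    intervalIntegral.integral_hasDerivAt_right (hc.intervalIntegrable _ _)
      (hc.stronglyMeasurableAtFilter _ _) hc.continuousAt
  hasDerivAt_deriv s := ((contDiff_smoothStep ε).differentiable (by norm_num) s).hasDerivAt
  continuous_deriv2 := (contDiff_smoothStep ε).continuous_deriv (by norm_num)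

theorem deriv_smoothStep_nonneg (hε : 0 < ε) (s : ℝ) : 0 ≤ deriv (smoothStep ε) s :=
  (monotone_smoothStep hε).deriv_nonneg

theorem smoothRamp_zero (ε : ℝ) : smoothRamp ε 0 = 0 := intervalIntegral.integral_same

theorem monotone_smoothRamp (ε : ℝ) : Monotone (smoothRamp ε) :=
  monotone_of_deriv_nonneg (fun s => ((hasC2Deriv_smoothRamp ε).hasDerivAt s).differentiableAt)
    fun s => by
      rw [((hasC2Deriv_smoothRamp ε).hasDerivAt s).deriv]
      exact smoothStep_nonneg ε s

theorem smoothRamp_of_le (hε : 0 < ε) (hs : s ≤ ε) : smoothRamp ε s = 0 := by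
  have hstep : EqOn (smoothStep ε) 0 (uIcc 0 s) := fun r hr =>
    smoothStep_of_le hε (hr.2.trans (max_le hε.le hs))
  rw [smoothRamp, intervalIntegral.integral_congr hstep]
  simp

theorem smoothRamp_nonneg (hε : 0 < ε) (s : ℝ) : 0 ≤ smoothRamp ε s := by
  rcases le_total s 0 with hs | hs
  · exact (smoothRamp_of_le hε (hs.trans hε.le)).ge
  · exact (smoothRamp_zero ε).ge.trans (monotone_smoothRamp ε hs)

theorem monotone_sub_smoothRamp (ε : ℝ) : Monotone fun s => s - smoothRamp ε s := by
  have hd s := (hasDerivAt_id' s).fun_sub ((hasC2Deriv_smoothRamp ε).hasDerivAt s)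
  refine monotone_of_deriv_nonneg (fun s => (hd s).differentiableAt) fun s => ?_
  rw [(hd s).deriv]
  exact sub_nonneg.2 (smoothStep_le_one ε s)

theorem smoothRamp_le_max (hε : 0 < ε) (s : ℝ) : smoothRamp ε s ≤ max s 0 := by
  rcases le_total s 0 with hs | hs
  · rw [smoothRamp_of_le hε (hs.trans hε.le)]
    exact le_max_right _ _
  · have := monotone_sub_smoothRamp ε hs
    simp only [smoothRamp_zero] at this
    exact (by linarith : smoothRamp ε s ≤ s).trans (le_max_left _ _)

theorem max_sub_le_smoothRamp (hε : 0 < ε) (s : ℝ) : max s 0 - 2 * ε ≤ smoothRamp ε s := by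
  have h0 := smoothRamp_nonneg hε s
  rcases le_total s (2 * ε) with hs | hs
  · have : max s 0 ≤ 2 * ε := max_le hs (by linarith)
    linarith
  · have hc : Continuous (smoothStep ε) := (contDiff_smoothStep ε).continuous
    have hlin : ∫ r in (2 * ε)..s, smoothStep ε r = s - 2 * ε := by
      rw [intervalIntegral.integral_congr (g := fun _ => (1 : ℝ)) fun r hr =>
        smoothStep_of_two_mul_le hε (uIcc_of_le hs ▸ hr).1]
      simp
    have hadd := intervalIntegral.integral_add_adjacent_intervals
      (μ := volume) (hc.intervalIntegrable 0 (2 * ε)) (hc.intervalIntegrable (2 * ε) s)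
    have := smoothRamp_nonneg hε (2 * ε)
    rw [max_eq_left (by linarith), smoothRamp, ← hadd, hlin]
    change 0 ≤ ∫ r in (0 : ℝ)..(2 * ε), smoothStep ε r at this
    linarith

theorem tendsto_smoothRamp (s : ℝ) :
    Tendsto (fun n : ℕ => smoothRamp (1 / (n + 1)) s) atTop (𝓝 (max s 0)) := by
  have hε := tendsto_one_div_add_atTop_nhds_zero_nat (𝕜 := ℝ)
  have hlow : Tendsto (fun n : ℕ => max s 0 - 2 * (1 / ((n : ℝ) + 1))) atTop (𝓝 (max s 0)) := by
    simpa using (hε.const_mul 2).const_sub (max s 0)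
  exact tendsto_of_tendsto_of_tendsto_of_le_of_le hlow tendsto_const_nhds
    (fun n => max_sub_le_smoothRamp Nat.one_div_pos_of_nat s)
    fun n => smoothRamp_le_max Nat.one_div_pos_of_nat s

theorem tendsto_smoothStep (s : ℝ) :
    Tendsto (fun n : ℕ => smoothStep (1 / (n + 1)) s) atTop (𝓝 (if 0 < s then 1 else 0)) := by
  refine tendsto_const_nhds.congr' ?_
  split_ifs with hs
  · have hε := (tendsto_one_div_add_atTop_nhds_zero_nat (𝕜 := ℝ)).const_mul 2
    rw [mul_zero] at hε
    filter_upwards [hε.eventually_le_const hs] with n hn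
    exact (smoothStep_of_two_mul_le Nat.one_div_pos_of_nat hn).symm
  · exact .of_forall fun n => (smoothStep_of_le Nat.one_div_pos_of_nat
      ((not_lt.1 hs).trans Nat.one_div_pos_of_nat.le)).symm

theorem abs_smoothRamp_sub_le (ε s t : ℝ) : |smoothRamp ε s - smoothRamp ε t| ≤ |s - t| := by
  wlog hst : t ≤ s generalizing s t
  · rw [abs_sub_comm, abs_sub_comm s t]
    exact this t s (le_of_not_ge hst)
  have h := monotone_sub_smoothRamp ε hst
  simp only at h
  rw [abs_of_nonneg (sub_nonneg.2 (monotone_smoothRamp ε hst)), abs_of_nonneg (sub_nonneg.2 hst)]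
  linarith

end SmoothRamp

section DominatedFunctionals

theorem exists_linearMap_comp_eq_of_le_sublinear {V X : Type*} [AddCommGroup V] [Module ℝ V]
    [AddCommGroup X] [Module ℝ X] (A : V →ₗ[ℝ] X) (F : V →ₗ[ℝ] ℝ) {P : X → ℝ}
    (hsmul : ∀ c : ℝ, 0 < c → ∀ x, P (c • x) = c * P x) (hadd : ∀ x y, P (x + y) ≤ P x + P y)
    (hF : ∀ v, F v ≤ P (A v)) : ∃ Λ : X →ₗ[ℝ] ℝ, Λ ∘ₗ A = F ∧ ∀ x, Λ x ≤ P x := by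
  have hP0 : P 0 = 0 := by
    have := hsmul 2 two_pos 0
    rw [smul_zero] at this
    linarith
  have hker : ∀ v, A v = 0 → F v = 0 := fun v hv => by
    have h₁ := hF v
    have h₂ := hF (-v)
    rw [map_neg, map_neg, hv, neg_zero, hP0] at h₂
    rw [hv, hP0] at h₁
    linarith
  obtain ⟨s, hs⟩ := A.rangeRestrict.exists_rightInverse_of_surjective A.range_rangeRestrict
  have hAs : ∀ y : LinearMap.range A, A (s y) = y := fun y =>
    congrArg Subtype.val (LinearMap.congr_fun hs y)
  obtain ⟨Λ, hΛ, hΛP⟩ := exists_extension_of_le_sublinear ⟨LinearMap.range A, F ∘ₗ s⟩ P hsmul hadd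
    fun y => (hF (s y)).trans_eq (congrArg P (hAs y))
  refine ⟨Λ, LinearMap.ext fun v => (hΛ ⟨A v, A.mem_range_self v⟩).trans ?_, hΛP⟩
  have := hker (s ⟨A v, A.mem_range_self v⟩ - v) (by rw [map_sub, hAs]; exact sub_self _)
  rw [map_sub, sub_eq_zero] at this
  exact this

variable {α : Type*} [MeasurableSpace α] {m : Measure α}

theorem integral_max_zero_le_mul_norm [IsFiniteMeasure m] (φ : Lp ℝ 2 m) :
    ∫ p, max (φ p) 0 ∂m ≤ m.real univ ^ (1 / 2 : ℝ) * ‖φ‖ := by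
  have hφ : Integrable φ m := (Lp.memLp φ).integrable (by norm_num)
  have hholder := eLpNorm_le_eLpNorm_mul_rpow_measure_univ (μ := m) (p := 1) (q := 2) (by norm_num)
    (Lp.aestronglyMeasurable φ)
  calc ∫ p, max (φ p) 0 ∂m ≤ ∫ p, ‖φ p‖ ∂m :=
        integral_mono hφ.pos_part hφ.norm fun p => max_le (le_abs_self _) (norm_nonneg _)
    _ = (eLpNorm φ 1 m).toReal := by
        rw [integral_norm_eq_lintegral_enorm hφ.1, eLpNorm_one_eq_lintegral_enorm]
    _ ≤ (eLpNorm φ 2 m * m univ ^ (1 / (1 : ℝ≥0∞).toReal - 1 / (2 : ℝ≥0∞).toReal)).toReal :=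
        ENNReal.toReal_mono (ENNReal.mul_ne_top (Lp.memLp φ).2.ne
          (ENNReal.rpow_ne_top_of_nonneg (by norm_num) (measure_ne_top _ _))) hholder
    _ = m.real univ ^ (1 / 2 : ℝ) * ‖φ‖ := by
        rw [ENNReal.toReal_mul, ← ENNReal.toReal_rpow, Lp.norm_def, mul_comm]
        norm_num [Measure.real]

theorem ae_mem_Icc_of_forall_integral_mul_le {k : α → ℝ} [IsFiniteMeasure m] (hk : MemLp k 2 m)
    (h : ∀ f : α → ℝ, MemLp f 2 m → ∫ p, k p * f p ∂m ≤ ∫ p, max (f p) 0 ∂m) :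
    ∀ᵐ p ∂m, k p ∈ Icc 0 1 := by
  have hneg : MemLp (fun p => max (-k p) 0) 2 m := hk.neg.pos_part
  have hpos : MemLp (fun p => max (k p - 1) 0) 2 m := (hk.sub (memLp_const 1)).pos_part
  have hneg_le : ∫ p, max (-k p) 0 ^ 2 ∂m ≤ 0 := calc
    _ = ∫ p, k p * -max (-k p) 0 ∂m := integral_congr_ae <| .of_forall fun p => by
      rcases le_total (k p) 0 with hp | hp <;> simp [hp, sq]
    _ ≤ ∫ p, max (-max (-k p) 0) 0 ∂m := h _ hneg.neg
    _ = 0 := by simp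
  have hpos_le : ∫ p, max (k p - 1) 0 ^ 2 ∂m ≤ 0 := calc
    _ = ∫ p, (k p * max (k p - 1) 0 - max (k p - 1) 0) ∂m :=
      integral_congr_ae <| .of_forall fun p => by
        rcases le_total (k p) 1 with hp | hp <;> simp [hp, sq, sub_mul]
    _ = ∫ p, k p * max (k p - 1) 0 ∂m - ∫ p, max (k p - 1) 0 ∂m :=
      integral_sub (hk.integrable_mul hpos) (hpos.integrable (by norm_num))
    _ ≤ 0 := sub_nonpos.2 ((h _ hpos).trans_eq (by simp))
  have hneg_ae := (integral_eq_zero_iff_of_nonneg (fun p => sq_nonneg _) hneg.integrable_sq).1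
    (hneg_le.antisymm (integral_nonneg fun p => sq_nonneg _))
  have hpos_ae := (integral_eq_zero_iff_of_nonneg (fun p => sq_nonneg _) hpos.integrable_sq).1
    (hpos_le.antisymm (integral_nonneg fun p => sq_nonneg _))
  filter_upwards [hneg_ae, hpos_ae] with p hp₀ hp₁
  simpa using And.intro hp₀ hp₁

theorem exists_density_of_le_integral_max_zero [IsFiniteMeasure m] (Λ : Lp ℝ 2 m →ₗ[ℝ] ℝ)
    (hΛ : ∀ φ, Λ φ ≤ ∫ p, max (φ p) 0 ∂m) :
    ∃ q : α → ℝ, StronglyMeasurable q ∧ (∀ p, q p ∈ Icc 0 1) ∧ ∀ φ, Λ φ = ∫ p, q p * φ p ∂m := by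
  let Λc : Lp ℝ 2 m →L[ℝ] ℝ := Λ.mkContinuous (m.real univ ^ (1 / 2 : ℝ)) fun φ => by
    have hneg := (hΛ (-φ)).trans (integral_max_zero_le_mul_norm (-φ))
    rw [map_neg, norm_neg] at hneg
    exact abs_le.2 ⟨by linarith, (hΛ φ).trans (integral_max_zero_le_mul_norm φ)⟩
  let k : Lp ℝ 2 m := (InnerProductSpace.toDual ℝ (Lp ℝ 2 m)).symm Λc
  have hk : ∀ φ, Λ φ = ∫ p, k p * φ p ∂m := fun φ => by
    have hinner : Λ φ = inner ℝ k φ := by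
      rw [InnerProductSpace.toDual_symm_apply]
      rfl
    rw [hinner, L2.inner_def]
    simp [mul_comm]
  have hk01 : ∀ᵐ p ∂m, k p ∈ Icc 0 1 := by
    refine ae_mem_Icc_of_forall_integral_mul_le (Lp.memLp k) fun f hf => ?_
    have h := hΛ hf.toLp
    rw [hk] at h
    refine (integral_congr_ae ?_).trans_le (h.trans_eq (integral_congr_ae ?_))
    · filter_upwards [hf.coeFn_toLp] with p hp using by rw [hp]
    · filter_upwards [hf.coeFn_toLp] with p hp using by rw [hp]
  obtain ⟨k', hk'_meas, hk'⟩ := Lp.aestronglyMeasurable k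
  refine ⟨fun p => max 0 (min 1 (k' p)), stronglyMeasurable_const.sup
    (stronglyMeasurable_const.inf hk'_meas),
    fun p => ⟨le_max_left _ _, max_le zero_le_one (min_le_left _ _)⟩, fun φ => ?_⟩
  rw [hk]
  refine integral_congr_ae ?_
  filter_upwards [hk01, hk'] with p hp hp'
  rw [← hp', min_eq_right hp.2, max_eq_right hp.1]

theorem integral_withDensity_ofReal {W : α → ℝ} (hW0 : ∀ p, 0 ≤ W p) (hW : Integrable W m)
    (φ : α → ℝ) : ∫ p, φ p ∂m.withDensity (fun p => ENNReal.ofReal (W p)) =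
      ∫ p, W p * φ p ∂m := by
  rw [integral_withDensity_eq_integral_toReal_smul₀ hW.1.aemeasurable.ennreal_ofReal (by simp)]
  simp [ENNReal.toReal_ofReal (hW0 _)]

/-- The linear form is extended from the range of `A` to `L²(W dm)` by Hahn–Banach, where Riesz
representation applies. -/
theorem exists_le_integral_mul_eq_of_le {W : α → ℝ} (hW0 : ∀ p, 0 ≤ W p) (hW : Integrable W m)
    {V : Type*} [AddCommGroup V] [Module ℝ V] (A : V →ₗ[ℝ] α → ℝ)
    (hAm : ∀ v, AEStronglyMeasurable (A v) m) (hAb : ∀ v, ∃ C, ∀ᵐ p ∂m, |A v p| ≤ C)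
    (F : V →ₗ[ℝ] ℝ) (hF : ∀ v, F v ≤ ∫ p, W p * max (A v p) 0 ∂m) :
    ∃ u : α → ℝ, AEStronglyMeasurable u m ∧ (∀ p, 0 ≤ u p) ∧ (∀ p, u p ≤ W p) ∧
      ∀ v, ∫ p, u p * A v p ∂m = F v := by
  set m' : Measure α := m.withDensity fun p => ENNReal.ofReal (W p)
  have : IsFiniteMeasure m' := isFiniteMeasure_withDensity_ofReal hW.2
  have hac : m' ≪ m := withDensity_absolutelyContinuous _ _
  have hmem : ∀ v, MemLp (A v) 2 m' := fun v =>
    (hAb v).elim fun C hC => MemLp.of_bound ((hAm v).mono_ac hac) C (hac.ae_le hC)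
  let A' : V →ₗ[ℝ] Lp ℝ 2 m' :=
    { toFun := fun v => (hmem v).toLp
      map_add' := fun v w => by simp only [map_add, ← MemLp.toLp_add]
      map_smul' := fun r v => by simp only [map_smul, RingHom.id_apply, ← MemLp.toLp_const_smul] }
  have hA' : ∀ v, A' v =ᵐ[m'] A v := fun v => (hmem v).coeFn_toLp
  have hpos : ∀ φ : Lp ℝ 2 m', Integrable (fun p => max (φ p) 0) m' := fun φ =>
    ((Lp.memLp φ).integrable (by norm_num)).pos_part
  let P : Lp ℝ 2 m' → ℝ := fun φ => ∫ p, max (φ p) 0 ∂m'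
  have hP_smul : ∀ c : ℝ, 0 < c → ∀ φ, P (c • φ) = c * P φ := fun c hc φ => by
    rw [← integral_const_mul]
    refine integral_congr_ae ((Lp.coeFn_smul c φ).mono fun p hp => ?_)
    simp only [hp, Pi.smul_apply, smul_eq_mul, mul_max_of_nonneg _ _ hc.le, mul_zero]
  have hP_add : ∀ φ ψ, P (φ + ψ) ≤ P φ + P ψ := fun φ ψ => by
    rw [← integral_add (hpos φ) (hpos ψ)]
    refine integral_mono_ae (hpos _) ((hpos φ).add (hpos ψ)) ?_
    filter_upwards [Lp.coeFn_add φ ψ] with p hp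
    rw [hp, Pi.add_apply]
    exact max_le (add_le_add (le_max_left _ _) (le_max_left _ _))
      (add_nonneg (le_max_right _ _) (le_max_right _ _))
  have hFP : ∀ v, F v ≤ P (A' v) := fun v => by
    refine (hF v).trans_eq ?_
    rw [← integral_withDensity_ofReal hW0 hW fun p => max (A v p) 0]
    exact integral_congr_ae ((hA' v).mono fun p hp => congrArg (max · 0) hp.symm)
  obtain ⟨Λ, hΛA, hΛ⟩ := exists_linearMap_comp_eq_of_le_sublinear A' F hP_smul hP_add hFP
  obtain ⟨q, hqm, hq01, hq⟩ := exists_density_of_le_integral_max_zero Λ hΛ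
  refine ⟨fun p => W p * q p, hW.1.mul hqm.aestronglyMeasurable,
    fun p => mul_nonneg (hW0 p) (hq01 p).1, fun p => mul_le_of_le_one_right (hW0 p) (hq01 p).2,
    fun v => ?_⟩
  simp only [mul_assoc]
  rw [← hΛA, ← integral_withDensity_ofReal hW0 hW fun p => q p * A v p, LinearMap.comp_apply, hq]
  exact integral_congr_ae ((hA' v).mono fun p hp => congrArg (q p * ·) hp.symm)

end DominatedFunctionals

section SmoothRampLimits

variable {X : Type*} [MeasurableSpace X] {m : Measure X}

theorem abs_smoothRamp_le {ε : ℝ} (hε : 0 < ε) (s : ℝ) : |smoothRamp ε s| ≤ |s| := by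
  rw [abs_of_nonneg (smoothRamp_nonneg hε s)]
  exact (smoothRamp_le_max hε s).trans (max_le (le_abs_self _) (abs_nonneg _))

theorem abs_smoothStep_le_one (ε s : ℝ) : |smoothStep ε s| ≤ 1 := by
  rw [abs_of_nonneg (smoothStep_nonneg ε s)]
  exact smoothStep_le_one ε s

theorem continuous_smoothStep (ε : ℝ) : Continuous (smoothStep ε) :=
  (contDiff_smoothStep ε).continuous

theorem continuous_smoothRamp (ε : ℝ) : Continuous (smoothRamp ε) :=
  (hasC2Deriv_smoothRamp ε).continuous

theorem tendsto_integral_smoothRamp {z : X → ℝ} (hz : Integrable z m) :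
    Tendsto (fun n : ℕ => ∫ p, smoothRamp (1 / (n + 1)) (z p) ∂m) atTop
      (𝓝 (∫ p, max (z p) 0 ∂m)) :=
  tendsto_integral_of_dominated_convergence (fun p => |z p|)
    (fun _ => (continuous_smoothRamp _).comp_aestronglyMeasurable hz.1) hz.abs
    (fun _ => .of_forall fun p => abs_smoothRamp_le Nat.one_div_pos_of_nat (z p))
    (.of_forall fun p => tendsto_smoothRamp (z p))

theorem tendsto_integral_smoothStep_mul {z a : X → ℝ} (hz : AEStronglyMeasurable z m)
    (ha : Integrable a m) :
    Tendsto (fun n : ℕ => ∫ p, smoothStep (1 / (n + 1)) (z p) * a p ∂m) atTop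
      (𝓝 (∫ p, {p | 0 < z p}.indicator a p ∂m)) := by
  refine tendsto_integral_of_dominated_convergence (fun p => |a p|)
    (fun _ => ((continuous_smoothStep _).comp_aestronglyMeasurable hz).mul ha.1) ha.abs
    (fun n => .of_forall fun p => ?_) (.of_forall fun p => ?_)
  · rw [Real.norm_eq_abs, abs_mul]
    exact mul_le_of_le_one_left (abs_nonneg _) (abs_smoothStep_le_one _ _)
  · have h := (tendsto_smoothStep (z p)).mul_const (a p)
    by_cases hp : 0 < z p <;> simpa [hp] using h

theorem tendsto_integral_smoothRamp_mul {z b : X → ℝ} (hz : AEStronglyMeasurable z m)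
    (hb : AEStronglyMeasurable b m) (hzb : Integrable (fun p => z p * b p) m) :
    Tendsto (fun n : ℕ => ∫ p, smoothRamp (1 / (n + 1)) (z p) * b p ∂m) atTop
      (𝓝 (∫ p, {p | 0 < z p}.indicator (fun p => z p * b p) p ∂m)) := by
  refine tendsto_integral_of_dominated_convergence (fun p => |z p * b p|)
    (fun _ => ((continuous_smoothRamp _).comp_aestronglyMeasurable hz).mul hb) hzb.abs
    (fun n => .of_forall fun p => ?_) (.of_forall fun p => ?_)
  · rw [Real.norm_eq_abs, abs_mul, abs_mul]
    exact mul_le_mul_of_nonneg_right (abs_smoothRamp_le Nat.one_div_pos_of_nat _) (abs_nonneg _)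
  · have h := (tendsto_smoothRamp (z p)).mul_const (b p)
    by_cases hp : 0 < z p
    · simpa [hp, max_eq_left hp.le] using h
    · simpa [hp, max_eq_right (not_lt.1 hp)] using h

end SmoothRampLimits

section WeakFormulation

variable {N : ℕ} {Ω : Set (Euc N)} {T : ℝ} {ν : Measure (Euc N)} {ζ : Euc N → ℝ → ℝ}
  {u f f' : Euc N × ℝ → ℝ}

theorem measurableSet_QT (hΩo : IsOpen Ω) (T : ℝ) : MeasurableSet (QT Ω T) :=
  (hΩo.prod isOpen_Ioo).measurableSet

theorem isCompact_closure_prod_Icc (hΩb : Bornology.IsBounded Ω) (T : ℝ) :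
    IsCompact (closure Ω ×ˢ Icc 0 T) :=
  hΩb.isCompact_closure.prod isCompact_Icc

theorem QT_subset_closure_prod_Icc : QT Ω T ⊆ closure Ω ×ˢ Icc 0 T :=
  prod_mono subset_closure Ioo_subset_Icc_self

theorem exists_forall_mem_QT_norm_le (hΩb : Bornology.IsBounded Ω) (T : ℝ) {X : Type*}
    [NormedAddCommGroup X] {h : Euc N × ℝ → X} (hh : Continuous h) :
    ∃ C, 0 ≤ C ∧ ∀ p ∈ QT Ω T, ‖h p‖ ≤ C := by
  obtain ⟨C, hC⟩ := (isCompact_closure_prod_Icc hΩb T).exists_bound_of_continuousOn hh.continuousOn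
  exact ⟨max C 0, le_max_right _ _,
    fun p hp => (hC p (QT_subset_closure_prod_Icc hp)).trans (le_max_left _ _)⟩

theorem integrableOn_QT_continuous_mul (hΩo : IsOpen Ω) (hΩb : Bornology.IsBounded Ω)
    {h : Euc N × ℝ → ℝ} (hh : Continuous h) (hu : IntegrableOn u (QT Ω T)) :
    IntegrableOn (fun p => h p * u p) (QT Ω T) :=
  hu.continuousOn_mul_of_subset hh.continuousOn (isCompact_closure_prod_Icc hΩb T)
    (measurableSet_QT hΩo T) QT_subset_closure_prod_Icc

theorem integrable_of_continuous_of_bounded [IsFiniteMeasure ν] (hΩb : Bornology.IsBounded Ω)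
    (hν : ν Ωᶜ = 0) {h : Euc N → ℝ} (hh : Continuous h) : Integrable h ν := by
  have hint := hh.continuousOn.integrableOn_compact (μ := ν) hΩb.isCompact_closure
  rwa [IntegrableOn, Measure.restrict_eq_self_of_ae_mem] at hint
  have hΩ : ∀ᵐ x ∂ν, x ∈ Ω := hν
  exact hΩ.mono fun x hx => subset_closure hx

/-- The integrand of the weak formulation of `∂ₜu - Δu + f = 0` against the test function `ζ`. -/
def heatIntegrand (u f : Euc N × ℝ → ℝ) (ζ : Euc N → ℝ → ℝ) (p : Euc N × ℝ) : ℝ :=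
  -(u p) * heatAdj ζ p + ζ p.1 p.2 * f p

/-- `u` solves `∂ₜu - Δu + f = 0` in `Q_T` weakly, with `u = 0` on `∂Ω × (0,T)` and initial
data `ν`. -/
def WeakHeatEq (Ω : Set (Euc N)) (T : ℝ) (ν : Measure (Euc N)) (u f : Euc N × ℝ → ℝ) : Prop :=
  ∀ ζ, TestZero Ω T ζ → ∫ p in QT Ω T, heatIntegrand u f ζ p = ∫ x, ζ x 0 ∂ν

/-- `u` is a weak supersolution of `∂ₜu - Δu + f = 0` with initial data `ν`, in Kato's form: the
test functions are the positive parts of the `ζ`, which are not `C²`, and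
`1_{ζ > 0} (∂ₜζ + Δζ)` stands for the heat operator applied to them. -/
def KatoIneq (Ω : Set (Euc N)) (T : ℝ) (ν : Measure (Euc N)) (u f : Euc N × ℝ → ℝ) : Prop :=
  ∀ ζ, TestZero Ω T ζ → ∫ x, max (ζ x 0) 0 ∂ν ≤
    ∫ p in QT Ω T, {p | 0 < ζ p.1 p.2}.indicator (heatIntegrand u f ζ) p

theorem integrableOn_neg_mul_heatAdj (hΩo : IsOpen Ω) (hΩb : Bornology.IsBounded Ω)
    (hζ : C21 ζ) (hu : IntegrableOn u (QT Ω T)) :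
    IntegrableOn (fun p => -(u p) * heatAdj ζ p) (QT Ω T) := by
  simpa only [Pi.neg_apply, mul_comm] using
    integrableOn_QT_continuous_mul hΩo hΩb hζ.continuous_heatAdj hu.neg

theorem integrableOn_heatIntegrand (hΩo : IsOpen Ω) (hΩb : Bornology.IsBounded Ω) (hζ : C21 ζ)
    (hu : IntegrableOn u (QT Ω T)) (hf : IntegrableOn f (QT Ω T)) :
    IntegrableOn (heatIntegrand u f ζ) (QT Ω T) :=
  (integrableOn_neg_mul_heatAdj hΩo hΩb hζ hu).add
    (integrableOn_QT_continuous_mul hΩo hΩb hζ.continuous hf)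

theorem C21.measurableSet_pos (hζ : C21 ζ) : MeasurableSet {p : Euc N × ℝ | 0 < ζ p.1 p.2} :=
  (isOpen_lt continuous_const hζ.continuous).measurableSet

theorem TestZero.smoothRamp_comp (hζ : TestZero Ω T ζ) (ε : ℝ) :
    TestZero Ω T fun x t => smoothRamp ε (ζ x t) :=
  ⟨hζ.1.comp (hasC2Deriv_smoothRamp ε).contDiff,
    fun x hx t ht => by simp only [hζ.2.1 x hx t ht, smoothRamp_zero],
    fun x hx => by simp only [hζ.2.2 x hx, smoothRamp_zero]⟩

theorem heatIntegrand_smoothRamp_le {ε : ℝ} (hε : 0 < ε) (hζ : C21 ζ) {p : Euc N × ℝ}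
    (hu0 : 0 ≤ u p) :
    heatIntegrand u f (fun x t => smoothRamp ε (ζ x t)) p ≤
      smoothStep ε (ζ p.1 p.2) * (-(u p) * heatAdj ζ p) + smoothRamp ε (ζ p.1 p.2) * f p := by
  obtain ⟨a, b, c, hζ⟩ := hζ.exists_hasC21Deriv
  have h := mul_le_mul_of_nonneg_left (hζ.mul_heatAdj_le_heatAdj_comp (hasC2Deriv_smoothRamp ε)
    (deriv_smoothStep_nonneg hε) p) hu0
  rw [heatIntegrand]
  linarith

theorem katoIneq_of_smoothRamp [IsFiniteMeasure ν] (hΩo : IsOpen Ω)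
    (hΩb : Bornology.IsBounded Ω) (hν : ν Ωᶜ = 0) (hu0 : ∀ p, 0 ≤ u p)
    (hu : IntegrableOn u (QT Ω T)) (hf : IntegrableOn f (QT Ω T))
    (h : ∀ ε > 0, ∀ ζ, TestZero Ω T ζ → ∫ x, smoothRamp ε (ζ x 0) ∂ν ≤
      ∫ p in QT Ω T, heatIntegrand u f (fun x t => smoothRamp ε (ζ x t)) p) :
    KatoIneq Ω T ν u f := by
  intro ζ hζ
  have hζc := hζ.1.continuous
  have ha := integrableOn_neg_mul_heatAdj hΩo hΩb hζ.1 hu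
  have hb := integrableOn_QT_continuous_mul hΩo hΩb hζc hf
  have hlhs := tendsto_integral_smoothRamp (integrable_of_continuous_of_bounded hΩb hν
    (hζ.1.continuous_slice 0))
  have hrhs := (tendsto_integral_smoothStep_mul hζc.aestronglyMeasurable ha).add
    (tendsto_integral_smoothRamp_mul hζc.aestronglyMeasurable hf.1 hb)
  rw [← integral_add (ha.indicator hζ.1.measurableSet_pos) (hb.indicator hζ.1.measurableSet_pos)]
    at hrhs
  simp only [← indicator_add] at hrhs
  refine le_of_tendsto_of_tendsto hlhs hrhs (.of_forall fun n => ?_)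
  have hstep : Continuous fun p : Euc N × ℝ => smoothStep (1 / ((n : ℝ) + 1)) (ζ p.1 p.2) :=
    (continuous_smoothStep _).comp hζc
  have hramp : Continuous fun p : Euc N × ℝ => smoothRamp (1 / ((n : ℝ) + 1)) (ζ p.1 p.2) :=
    (continuous_smoothRamp _).comp hζc
  have hε : (0 : ℝ) < 1 / ((n : ℝ) + 1) := Nat.one_div_pos_of_nat
  refine (h _ hε ζ hζ).trans ?_
  simp only
  rw [← integral_add (integrableOn_QT_continuous_mul hΩo hΩb hstep ha)
    (integrableOn_QT_continuous_mul hΩo hΩb hramp hf)]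
  exact integral_mono
    (integrableOn_heatIntegrand hΩo hΩb (hζ.smoothRamp_comp _).1 hu hf)
    ((integrableOn_QT_continuous_mul hΩo hΩb hstep ha).add
      (integrableOn_QT_continuous_mul hΩo hΩb hramp hf))
    fun p => heatIntegrand_smoothRamp_le hε hζ.1 (hu0 p)

theorem WeakHeatEq.katoIneq [IsFiniteMeasure ν] (h : WeakHeatEq Ω T ν u f) (hΩo : IsOpen Ω)
    (hΩb : Bornology.IsBounded Ω) (hν : ν Ωᶜ = 0) (hu0 : ∀ p, 0 ≤ u p)
    (hu : IntegrableOn u (QT Ω T)) (hf : IntegrableOn f (QT Ω T)) : KatoIneq Ω T ν u f :=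
  katoIneq_of_smoothRamp hΩo hΩb hν hu0 hu hf fun ε _ _ hζ => (h _ (hζ.smoothRamp_comp ε)).ge

theorem KatoIneq.mono (h : KatoIneq Ω T ν u f) (hΩo : IsOpen Ω) (hΩb : Bornology.IsBounded Ω)
    (hu : IntegrableOn u (QT Ω T)) (hf : IntegrableOn f (QT Ω T))
    (hf' : IntegrableOn f' (QT Ω T)) (hff' : ∀ p, f p ≤ f' p) : KatoIneq Ω T ν u f' := by
  intro ζ hζ
  refine (h ζ hζ).trans (integral_mono
    ((integrableOn_heatIntegrand hΩo hΩb hζ.1 hu hf).indicator hζ.1.measurableSet_pos)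
    ((integrableOn_heatIntegrand hΩo hΩb hζ.1 hu hf').indicator hζ.1.measurableSet_pos)
    fun p => ?_)
  by_cases hp : 0 < ζ p.1 p.2
  · simpa [hp, heatIntegrand] using mul_le_mul_of_nonneg_left (hff' p) hp.le
  · simp [hp]

end WeakFormulation

section TestSpace

variable {N : ℕ} {Ω : Set (Euc N)} {T lam : ℝ} {ν : Measure (Euc N)} {w : Euc N × ℝ → ℝ}

/-- The real vector space of test functions. -/
def testSpace (Ω : Set (Euc N)) (T : ℝ) : Submodule ℝ (Euc N → ℝ → ℝ) where
  carrier := {ζ | TestZero Ω T ζ}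
  add_mem' := by
    rintro ζ ζ' ⟨hζ, hζ₁, hζ₂⟩ ⟨hζ', hζ'₁, hζ'₂⟩
    obtain ⟨a, b, c, h⟩ := hζ.exists_hasC21Deriv
    obtain ⟨a', b', c', h'⟩ := hζ'.exists_hasC21Deriv
    exact ⟨(h.add h').c21, fun x hx t ht => by simp [hζ₁ x hx t ht, hζ'₁ x hx t ht],
      fun x hx => by simp [hζ₂ x hx, hζ'₂ x hx]⟩
  zero_mem' := ⟨C21.zero, fun _ _ _ _ => rfl, fun _ _ => rfl⟩
  smul_mem' := by
    rintro r ζ ⟨hζ, hζ₁, hζ₂⟩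
    obtain ⟨a, b, c, h⟩ := hζ.exists_hasC21Deriv
    exact ⟨(h.const_mul r).c21, fun x hx t ht => by simp [hζ₁ x hx t ht],
      fun x hx => by simp [hζ₂ x hx]⟩

/-- The operator `ζ ↦ λζ - ∂ₜζ - Δζ`, formally adjoint to `∂ₜ - Δ + λ`. -/
def resolventAdj (Ω : Set (Euc N)) (T lam : ℝ) : testSpace Ω T →ₗ[ℝ] Euc N × ℝ → ℝ where
  toFun ζ p := lam * ζ.1 p.1 p.2 - heatAdj ζ.1 p
  map_add' ζ ζ' := funext fun p =>
    (congr_arg (lam * (ζ.1 p.1 p.2 + ζ'.1 p.1 p.2) - ·) (heatAdj_add ζ.2.1 ζ'.2.1 p)).trans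
      (by simp only [Pi.add_apply]; ring)
  map_smul' r ζ := funext fun p =>
    (congr_arg (lam * (r * ζ.1 p.1 p.2) - ·) (heatAdj_const_mul ζ.2.1 r p)).trans
      (by simp only [Pi.smul_apply, smul_eq_mul, RingHom.id_apply]; ring)

theorem resolventAdj_apply (ζ : testSpace Ω T) (p : Euc N × ℝ) :
    resolventAdj Ω T lam ζ p = lam * ζ.1 p.1 p.2 - heatAdj ζ.1 p :=
  rfl

theorem continuous_resolventAdj (lam : ℝ) (ζ : testSpace Ω T) :
    Continuous (resolventAdj Ω T lam ζ) :=
  (ζ.2.1.continuous.const_mul lam).sub ζ.2.1.continuous_heatAdj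

/-- The right-hand side of `∂ₜu - Δu + λu = w`, `u(·,0) = ν`, as a functional of the test
function. -/
def sourceFunctional [IsFiniteMeasure ν] (hΩo : IsOpen Ω) (hΩb : Bornology.IsBounded Ω)
    (hν : ν Ωᶜ = 0) (hw : IntegrableOn w (QT Ω T)) : testSpace Ω T →ₗ[ℝ] ℝ where
  toFun ζ := ∫ x, ζ.1 x 0 ∂ν + ∫ p in QT Ω T, ζ.1 p.1 p.2 * w p
  map_add' ζ ζ' := by
    have hν_int (η : testSpace Ω T) : Integrable (fun x => η.1 x 0) ν :=
      integrable_of_continuous_of_bounded hΩb hν (η.2.1.continuous_slice 0)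
    have hw_int (η : testSpace Ω T) := integrableOn_QT_continuous_mul hΩo hΩb η.2.1.continuous hw
    simp only [Submodule.coe_add, Pi.add_apply, add_mul]
    rw [integral_add (hν_int ζ) (hν_int ζ'), integral_add (hw_int ζ) (hw_int ζ')]
    ring
  map_smul' r ζ := by
    simp only [Submodule.coe_smul, Pi.smul_apply, smul_eq_mul, mul_assoc, integral_const_mul,
      RingHom.id_apply]
    ring

end TestSpace

/-- A nonlinearity `G` of the class of `g` for which `s ↦ λs - G s` is monotone as well, i.e. a
Lipschitz one with constant `λ`. -/
structure LipschitzAbsorption (lam : ℝ) (G : ℝ → ℝ) : Prop where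
  goodG : GoodG G
  monotone_mul_sub : Monotone fun s => lam * s - G s

theorem GoodG.nonneg {g : ℝ → ℝ} (hg : GoodG g) (s : ℝ) : 0 ≤ g s := by
  rcases le_total s 0 with hs | hs
  · rw [hg.2.2 s hs]
  · rw [← hg.2.2 0 le_rfl]
    exact hg.2.1 hs

namespace LipschitzAbsorption

variable {lam : ℝ} {G : ℝ → ℝ}

theorem nonneg (h : LipschitzAbsorption lam G) (s : ℝ) : 0 ≤ G s :=
  h.goodG.nonneg s

theorem apply_le (h : LipschitzAbsorption lam G) {s : ℝ} (hs : 0 ≤ s) : G s ≤ lam * s := by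
  have := h.monotone_mul_sub hs
  simp only [h.goodG.2.2 0 le_rfl, mul_zero, sub_zero] at this
  linarith

theorem const_nonneg (h : LipschitzAbsorption lam G) : 0 ≤ lam := by
  simpa using (h.nonneg 1).trans (h.apply_le zero_le_one)

theorem integrable_comp (h : LipschitzAbsorption lam G) {X : Type*} [MeasurableSpace X]
    {m : Measure X} {u : X → ℝ} (hu0 : ∀ p, 0 ≤ u p) (hu : Integrable u m) :
    Integrable (fun p => G (u p)) m :=
  (hu.const_mul lam).mono' (h.goodG.1.comp_aestronglyMeasurable hu.1) <| .of_forall fun p => by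
    rw [Real.norm_eq_abs, abs_of_nonneg (h.nonneg _)]
    exact h.apply_le (hu0 p)

end LipschitzAbsorption

section MonotoneIteration

variable {N : ℕ} {Ω : Set (Euc N)} {T lam : ℝ} {ν : Measure (Euc N)} {G : ℝ → ℝ}
  {u W : Euc N × ℝ → ℝ}

theorem integrableOn_of_nonneg_of_le {X : Type*} [MeasurableSpace X] {m : Measure X}
    {v W : X → ℝ} (hv : AEStronglyMeasurable v m) (hv0 : ∀ p, 0 ≤ v p) (hvW : ∀ p, v p ≤ W p)
    (hW : Integrable W m) : Integrable v m :=
  hW.mono' hv (.of_forall fun p => (abs_of_nonneg (hv0 p)).trans_le (hvW p))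

theorem KatoIneq.sourceFunctional_le [IsFiniteMeasure ν]
    (hk : KatoIneq Ω T ν u fun p => G (u p)) (hΩo : IsOpen Ω) (hΩb : Bornology.IsBounded Ω)
    (hν : ν Ωᶜ = 0) (hG : LipschitzAbsorption lam G) (hu0 : ∀ p, 0 ≤ u p)
    (hu : IntegrableOn u (QT Ω T)) (hw : IntegrableOn (fun p => lam * u p - G (u p)) (QT Ω T))
    (ζ : testSpace Ω T) :
    sourceFunctional hΩo hΩb hν hw ζ ≤
      ∫ p in QT Ω T, u p * max (resolventAdj Ω T lam ζ p) 0 := by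
  have hζ := ζ.2.1
  have hpos : ∫ x, ζ.1 x 0 ∂ν ≤ ∫ x, max (ζ.1 x 0) 0 ∂ν :=
    integral_mono (integrable_of_continuous_of_bounded hΩb hν (hζ.continuous_slice 0))
      (integrable_of_continuous_of_bounded hΩb hν
        ((hζ.continuous_slice 0).max continuous_const)) fun x => le_max_left _ _
  have hint₁ := (integrableOn_heatIntegrand hΩo hΩb hζ hu
    (hG.integrable_comp hu0 hu)).indicator hζ.measurableSet_pos
  have hint₂ := integrableOn_QT_continuous_mul hΩo hΩb hζ.continuous hw
  have hint₃ : IntegrableOn (fun p => u p * max (resolventAdj Ω T lam ζ p) 0) (QT Ω T) := by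
    simpa only [mul_comm] using integrableOn_QT_continuous_mul hΩo hΩb
      ((continuous_resolventAdj lam ζ).max continuous_const) hu
  refine (add_le_add_left (hpos.trans (hk ζ.1 ζ.2)) _).trans ?_
  rw [← integral_add hint₁ hint₂]
  refine integral_mono (hint₁.add hint₂) hint₃ fun p => ?_
  by_cases hp : 0 < ζ.1 p.1 p.2
  · have := mul_le_mul_of_nonneg_left (le_max_left (resolventAdj Ω T lam ζ p) 0) (hu0 p)
    rw [indicator_of_mem (show p ∈ {p : Euc N × ℝ | 0 < ζ.1 p.1 p.2} from hp), heatIntegrand]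
    rw [resolventAdj_apply] at this ⊢
    linarith
  · have hmax := mul_nonneg (hu0 p) (le_max_right (resolventAdj Ω T lam ζ p) 0)
    have hsource := mul_nonpos_of_nonpos_of_nonneg (not_lt.1 hp)
      (sub_nonneg.2 (hG.apply_le (hu0 p)))
    simpa [hp] using hsource.trans hmax

-- The implicit Euler-type scheme `∂ₜv - Δv + λv = λu - G(u)`: `v ≤ u` comes from the domination of
-- the source functional, and `v` is again a supersolution since `λv - G(v) ≤ λu - G(u)`.
theorem KatoIneq.exists_linearized_solution [IsFiniteMeasure ν]
    (hk : KatoIneq Ω T ν u fun p => G (u p)) (hΩo : IsOpen Ω) (hΩb : Bornology.IsBounded Ω)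
    (hν : ν Ωᶜ = 0) (hG : LipschitzAbsorption lam G) (hu0 : ∀ p, 0 ≤ u p)
    (hu : IntegrableOn u (QT Ω T)) :
    ∃ v : Euc N × ℝ → ℝ, (∀ p, 0 ≤ v p) ∧ (∀ p, v p ≤ u p) ∧ IntegrableOn v (QT Ω T) ∧
      WeakHeatEq Ω T ν v (fun p => lam * v p - (lam * u p - G (u p))) ∧
      KatoIneq Ω T ν v fun p => G (v p) := by
  have hw : IntegrableOn (fun p => lam * u p - G (u p)) (QT Ω T) :=
    (hu.const_mul lam).sub (hG.integrable_comp hu0 hu)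
  obtain ⟨v, hvm, hv0, hvu, hv⟩ := exists_le_integral_mul_eq_of_le hu0 hu (resolventAdj Ω T lam)
    (fun ζ => (continuous_resolventAdj lam ζ).aestronglyMeasurable)
    (fun ζ => by
      obtain ⟨C, -, hC⟩ := exists_forall_mem_QT_norm_le hΩb T (continuous_resolventAdj lam ζ)
      exact ⟨C, (ae_restrict_mem (measurableSet_QT hΩo T)).mono hC⟩)
    (sourceFunctional hΩo hΩb hν hw) (hk.sourceFunctional_le hΩo hΩb hν hG hu0 hu hw)
  have hvi : IntegrableOn v (QT Ω T) := integrableOn_of_nonneg_of_le hvm hv0 hvu hu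
  have hfi : IntegrableOn (fun p => lam * v p - (lam * u p - G (u p))) (QT Ω T) :=
    (hvi.const_mul lam).sub hw
  have heq : WeakHeatEq Ω T ν v (fun p => lam * v p - (lam * u p - G (u p))) := by
    intro ζ hζ
    have hint : IntegrableOn (fun p => v p * resolventAdj Ω T lam ⟨ζ, hζ⟩ p) (QT Ω T) := by
      simpa only [mul_comm] using
        integrableOn_QT_continuous_mul hΩo hΩb (continuous_resolventAdj lam ⟨ζ, hζ⟩) hvi
    have hζν : ∫ x, ζ x 0 ∂ν = _ := eq_sub_of_add_eq (hv ⟨ζ, hζ⟩).symm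
    rw [hζν, ← integral_sub hint (integrableOn_QT_continuous_mul hΩo hΩb hζ.1.continuous
      hw)]
    refine integral_congr_ae (.of_forall fun p => ?_)
    simp only [heatIntegrand, resolventAdj_apply]
    ring
  refine ⟨v, hv0, hvu, hvi, heq, (heq.katoIneq hΩo hΩb hν hv0 hvi hfi).mono hΩo hΩb hvi hfi
    (hG.integrable_comp hv0 hvi) fun p => ?_⟩
  have := hG.monotone_mul_sub (hvu p)
  simp only at this
  linarith

theorem tendsto_integral_neg_mul_heatAdj {ζ : Euc N → ℝ → ℝ} {un : ℕ → Euc N × ℝ → ℝ}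
    (hΩo : IsOpen Ω) (hΩb : Bornology.IsBounded Ω) (hζ : C21 ζ) (hW : IntegrableOn W (QT Ω T))
    (hum : ∀ n, AEStronglyMeasurable (un n) (volume.restrict (QT Ω T)))
    (huW : ∀ n p, |un n p| ≤ W p) (hul : ∀ p, Tendsto (un · p) atTop (𝓝 (u p))) :
    Tendsto (fun n => ∫ p in QT Ω T, -(un n p) * heatAdj ζ p) atTop
      (𝓝 (∫ p in QT Ω T, -(u p) * heatAdj ζ p)) := by
  refine tendsto_integral_of_dominated_convergence (fun p => |heatAdj ζ p * W p|)
    (fun n => (hum n).neg.mul hζ.continuous_heatAdj.aestronglyMeasurable)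
    (integrableOn_QT_continuous_mul hΩo hΩb hζ.continuous_heatAdj hW).abs
    (fun n => .of_forall fun p => ?_) (.of_forall fun p => (hul p).neg.mul_const _)
  rw [Real.norm_eq_abs, abs_mul, abs_neg, abs_mul, mul_comm]
  exact mul_le_mul_of_nonneg_left ((huW n p).trans (le_abs_self _)) (abs_nonneg _)

theorem tendsto_integral_continuous_mul {h f : Euc N × ℝ → ℝ} {fn : ℕ → Euc N × ℝ → ℝ}
    (hΩo : IsOpen Ω) (hΩb : Bornology.IsBounded Ω) (hh : Continuous h)
    (hfi : ∀ n, IntegrableOn (fn n) (QT Ω T)) (hf : IntegrableOn f (QT Ω T))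
    (hfl : Tendsto (fun n => ∫ p in QT Ω T, |fn n p - f p|) atTop (𝓝 0)) :
    Tendsto (fun n => ∫ p in QT Ω T, h p * fn n p) atTop (𝓝 (∫ p in QT Ω T, h p * f p)) := by
  obtain ⟨C, -, hC⟩ := exists_forall_mem_QT_norm_le hΩb T hh
  have hint {k : Euc N × ℝ → ℝ} (hk : IntegrableOn k (QT Ω T)) :
      IntegrableOn (fun p => h p * k p) (QT Ω T) :=
    integrableOn_QT_continuous_mul hΩo hΩb hh hk
  rw [tendsto_iff_dist_tendsto_zero]
  have hCfl : Tendsto (fun n => C * ∫ p in QT Ω T, |fn n p - f p|) atTop (𝓝 0) := by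
    simpa only [mul_zero] using hfl.const_mul C
  refine squeeze_zero (fun n => dist_nonneg) (fun n => ?_) hCfl
  rw [Real.dist_eq, ← integral_sub (hint (hfi n)) (hint hf), ← integral_const_mul]
  refine abs_integral_le_integral_abs.trans (integral_mono_ae ((hint (hfi n)).sub (hint hf)).abs
    (((hfi n).sub hf).abs.const_mul C) ?_)
  filter_upwards [ae_restrict_mem (measurableSet_QT hΩo T)] with p hp
  rw [← mul_sub, abs_mul]
  exact mul_le_mul_of_nonneg_right (hC p hp) (abs_nonneg _)

theorem WeakHeatEq.of_tendsto {un fn : ℕ → Euc N × ℝ → ℝ} {f : Euc N × ℝ → ℝ}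
    (h : ∀ n, WeakHeatEq Ω T ν (un n) (fn n)) (hΩo : IsOpen Ω) (hΩb : Bornology.IsBounded Ω)
    (hW : IntegrableOn W (QT Ω T))
    (hum : ∀ n, AEStronglyMeasurable (un n) (volume.restrict (QT Ω T)))
    (huW : ∀ n p, |un n p| ≤ W p) (hul : ∀ p, Tendsto (un · p) atTop (𝓝 (u p)))
    (hfi : ∀ n, IntegrableOn (fn n) (QT Ω T)) (hf : IntegrableOn f (QT Ω T))
    (hfl : Tendsto (fun n => ∫ p in QT Ω T, |fn n p - f p|) atTop (𝓝 0)) :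
    WeakHeatEq Ω T ν u f := by
  intro ζ hζ
  have huni (n : ℕ) : IntegrableOn (un n) (QT Ω T) := hW.mono' (hum n) (.of_forall (huW n))
  have hui : IntegrableOn u (QT Ω T) :=
    hW.mono' (aestronglyMeasurable_of_tendsto_ae atTop hum (.of_forall hul))
      (.of_forall fun p => le_of_tendsto (hul p).abs (.of_forall fun n => huW n p))
  have hsplit {v k : Euc N × ℝ → ℝ} (hv : IntegrableOn v (QT Ω T))
      (hk : IntegrableOn k (QT Ω T)) : ∫ p in QT Ω T, heatIntegrand v k ζ p =
        (∫ p in QT Ω T, -(v p) * heatAdj ζ p) + ∫ p in QT Ω T, ζ p.1 p.2 * k p :=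
    integral_add (integrableOn_neg_mul_heatAdj hΩo hΩb hζ.1 hv)
      (integrableOn_QT_continuous_mul hΩo hΩb hζ.1.continuous hk)
  have hlim := (tendsto_integral_neg_mul_heatAdj hΩo hΩb hζ.1 hW hum huW hul).add
    (tendsto_integral_continuous_mul hΩo hΩb hζ.1.continuous hfi hf hfl)
  rw [hsplit hui hf]
  refine tendsto_nhds_unique hlim (tendsto_const_nhds.congr fun n => ?_)
  rw [← hsplit (huni n) (hfi n), h n ζ hζ]

theorem LipschitzAbsorption.abs_residual_le (hG : LipschitzAbsorption lam G) {M s s' r : ℝ}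
    (hs0 : 0 ≤ s) (hs : s ≤ M) (hs0' : 0 ≤ s') (hs' : s' ≤ M) (hr0 : 0 ≤ r) (hr : r ≤ M) :
    |lam * s' - (lam * s - G s) - G r| ≤ 2 * (lam * M) := by
  have hlam (t : ℝ) (ht : t ≤ M) : lam * t ≤ lam * M :=
    mul_le_mul_of_nonneg_left ht hG.const_nonneg
  have hlam0 := mul_nonneg hG.const_nonneg hs0'
  have := hlam s hs
  have := hlam s' hs'
  have := hlam r hr
  have := hG.apply_le hs0
  have := hG.apply_le hr0
  have := hG.nonneg s
  have := hG.nonneg r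
  rw [abs_le]
  constructor <;> linarith

theorem WeakHeatEq.of_antitone_iteration (hG : LipschitzAbsorption lam G) (hΩo : IsOpen Ω)
    (hΩb : Bornology.IsBounded Ω) {U : ℕ → Euc N × ℝ → ℝ} {v : Euc N × ℝ → ℝ}
    (hU0 : ∀ n p, 0 ≤ U n p) (hU : ∀ n, IntegrableOn (U n) (QT Ω T))
    (hanti : ∀ p, Antitone fun n => U n p)
    (heq : ∀ n, WeakHeatEq Ω T ν (U (n + 1))
      fun p => lam * U (n + 1) p - (lam * U n p - G (U n p)))
    (hv0 : ∀ p, 0 ≤ v p) (hvU : ∀ p, v p ≤ U 0 p) (hv : IntegrableOn v (QT Ω T))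
    (hlim : ∀ p, Tendsto (fun n => U n p) atTop (𝓝 (v p))) :
    WeakHeatEq Ω T ν v fun p => G (v p) := by
  have hUU (n : ℕ) (p : Euc N × ℝ) : U n p ≤ U 0 p := hanti p (Nat.zero_le n)
  have hGv := hG.integrable_comp hv0 hv
  have hfi (n : ℕ) : IntegrableOn (fun p => lam * U (n + 1) p - (lam * U n p - G (U n p)))
      (QT Ω T) :=
    ((hU _).const_mul lam).sub (((hU _).const_mul lam).sub (hG.integrable_comp (hU0 n) (hU n)))
  refine .of_tendsto heq hΩo hΩb (hU 0) (fun n => (hU _).1)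
    (fun n p => (abs_of_nonneg (hU0 _ p)).trans_le (hUU _ p))
    (fun p => (hlim p).comp (tendsto_add_atTop_nat 1)) hfi hGv ?_
  have hdct := tendsto_integral_of_dominated_convergence (fun p => 2 * (lam * U 0 p))
    (fun n => ((hfi n).sub hGv).abs.1) (((hU 0).const_mul lam).const_mul 2)
    (fun n => .of_forall fun p => ?_) (.of_forall fun p => ?_) (f := fun _ => 0)
  · simpa using hdct
  · exact (abs_abs _).trans_le
      (hG.abs_residual_le (hU0 n p) (hUU n p) (hU0 _ p) (hUU _ p) (hv0 p) (hvU p))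
  · have hres := (((hlim p).comp (tendsto_add_atTop_nat 1)).const_mul lam).sub
      (((hlim p).const_mul lam).sub ((hG.goodG.1.tendsto _).comp (hlim p)))
    simpa using (hres.sub_const (G (v p))).abs

theorem KatoIneq.exists_solution [IsFiniteMeasure ν] (hk : KatoIneq Ω T ν u fun p => G (u p))
    (hΩo : IsOpen Ω) (hΩb : Bornology.IsBounded Ω) (hν : ν Ωᶜ = 0)
    (hG : LipschitzAbsorption lam G) (hu0 : ∀ p, 0 ≤ u p) (hu : IntegrableOn u (QT Ω T)) :
    ∃ v : Euc N × ℝ → ℝ, (∀ p, 0 ≤ v p) ∧ (∀ p, v p ≤ u p) ∧ IntegrableOn v (QT Ω T) ∧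
      WeakHeatEq Ω T ν v fun p => G (v p) := by
  let S := {w : Euc N × ℝ → ℝ //
    (∀ p, 0 ≤ w p) ∧ IntegrableOn w (QT Ω T) ∧ KatoIneq Ω T ν w fun p => G (w p)}
  have hstep (w : S) : ∃ w' : S, (∀ p, w'.1 p ≤ w.1 p) ∧
      WeakHeatEq Ω T ν w'.1 fun p => lam * w'.1 p - (lam * w.1 p - G (w.1 p)) := by
    obtain ⟨v, hv0, hvw, hvi, heq, hkv⟩ :=
      w.2.2.2.exists_linearized_solution hΩo hΩb hν hG w.2.1 w.2.2.1
    exact ⟨⟨v, hv0, hvi, hkv⟩, hvw, heq⟩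
  choose next hnext_le hnext_eq using hstep
  let U : ℕ → S := fun n => next^[n] ⟨u, hu0, hu, hk⟩
  have hU_succ (n : ℕ) : U (n + 1) = next (U n) := Function.iterate_succ_apply' _ _ _
  have hanti (p : Euc N × ℝ) : Antitone fun n => (U n).1 p :=
    antitone_nat_of_succ_le fun n => hU_succ n ▸ hnext_le _ p
  have hbdd (p : Euc N × ℝ) : BddBelow (range fun n => (U n).1 p) :=
    ⟨0, forall_mem_range.2 fun n => (U n).2.1 p⟩
  have hlim (p : Euc N × ℝ) := tendsto_atTop_ciInf (hanti p) (hbdd p)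
  have hv0 (p : Euc N × ℝ) : 0 ≤ ⨅ n, (U n).1 p := le_ciInf fun n => (U n).2.1 p
  have hvu (p : Euc N × ℝ) : ⨅ n, (U n).1 p ≤ u p := ciInf_le (hbdd p) 0
  have hvi : IntegrableOn (fun p => ⨅ n, (U n).1 p) (QT Ω T) := integrableOn_of_nonneg_of_le
    (aestronglyMeasurable_of_tendsto_ae atTop (fun n => (U n).2.2.1.1) (.of_forall hlim))
    hv0 hvu hu
  exact ⟨_, hv0, hvu, hvi, .of_antitone_iteration hG hΩo hΩb (fun n => (U n).2.1)
    (fun n => (U n).2.2.1) hanti (fun n => hU_succ n ▸ hnext_eq _) hv0 hvu hvi hlim⟩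

end MonotoneIteration

section LipschitzApproximation

theorem continuous_of_monotone_of_monotone_mul_sub {G : ℝ → ℝ} {lam : ℝ} (hG : Monotone G)
    (hG' : Monotone fun s => lam * s - G s) : Continuous G := by
  refine (LipschitzWith.of_dist_le_mul (K := lam.toNNReal) fun s s' => ?_).continuous
  wlog h : s' ≤ s generalizing s s'
  · rw [dist_comm, dist_comm s]
    exact this s' s (le_of_not_ge h)
  rw [Real.dist_eq, Real.dist_eq, abs_of_nonneg (sub_nonneg.2 (hG h)),
    abs_of_nonneg (sub_nonneg.2 h)]
  have hsub : G s - G s' ≤ lam * (s - s') := by linarith [hG' h]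
  exact hsub.trans (mul_le_mul_of_nonneg_right (Real.le_coe_toNNReal lam) (sub_nonneg.2 h))

/-- The `n`-Lipschitz approximation of `g` from below, its inf-convolution with `n|·|`. -/
def lipApprox (g : ℝ → ℝ) (n : ℕ) (s : ℝ) : ℝ := ⨅ r : ℝ, (g (s - r) + n * |r|)

variable {g : ℝ → ℝ} (hg : GoodG g)

include hg

theorem bddBelow_range_lipApprox (n : ℕ) (s : ℝ) :
    BddBelow (range fun r : ℝ => g (s - r) + n * |r|) :=
  ⟨0, forall_mem_range.2 fun _ => add_nonneg (hg.nonneg _) (by positivity)⟩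

theorem lipApprox_nonneg (n : ℕ) (s : ℝ) : 0 ≤ lipApprox g n s :=
  le_ciInf fun _ => add_nonneg (hg.nonneg _) (by positivity)

theorem lipApprox_le (n : ℕ) (s : ℝ) : lipApprox g n s ≤ g s := by
  simpa [lipApprox] using ciInf_le (bddBelow_range_lipApprox hg n s) 0

theorem monotone_lipApprox (n : ℕ) : Monotone (lipApprox g n) := fun s _ h =>
  ciInf_mono (bddBelow_range_lipApprox hg n s) fun r =>
    add_le_add_left (hg.2.1 (sub_le_sub_right h r)) _

theorem monotone_mul_sub_lipApprox (n : ℕ) : Monotone fun s => n * s - lipApprox g n s := by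
  intro s s' h
  have hle : lipApprox g n s' - n * (s' - s) ≤ lipApprox g n s := by
    refine le_ciInf fun r => ?_
    have hinf : lipApprox g n s' ≤ g (s' - (r + (s' - s))) + n * |r + (s' - s)| :=
      ciInf_le (bddBelow_range_lipApprox hg n s') _
    rw [show s' - (r + (s' - s)) = s - r by ring] at hinf
    have habs : |r + (s' - s)| ≤ |r| + (s' - s) :=
      (abs_add_le _ _).trans_eq (by rw [abs_of_nonneg (sub_nonneg.2 h)])
    linarith [mul_le_mul_of_nonneg_left habs (Nat.cast_nonneg (α := ℝ) n)]
  simp only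
  linarith

theorem lipschitzAbsorption_lipApprox (n : ℕ) : LipschitzAbsorption n (lipApprox g n) where
  goodG := ⟨continuous_of_monotone_of_monotone_mul_sub (monotone_lipApprox hg n)
      (monotone_mul_sub_lipApprox hg n), monotone_lipApprox hg n,
    fun s hs => le_antisymm ((lipApprox_le hg n s).trans_eq (hg.2.2 s hs))
      (lipApprox_nonneg hg n s)⟩
  monotone_mul_sub := monotone_mul_sub_lipApprox hg n

theorem lipApprox_mono {n m : ℕ} (h : n ≤ m) (s : ℝ) : lipApprox g n s ≤ lipApprox g m s :=
  ciInf_mono (bddBelow_range_lipApprox hg n s) fun r => by gcongr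

theorem tendsto_lipApprox (s : ℝ) : Tendsto (fun n => lipApprox g n s) atTop (𝓝 (g s)) := by
  refine tendsto_order.2 ⟨fun a ha => ?_,
    fun a ha => .of_forall fun n => (lipApprox_le hg n s).trans_lt ha⟩
  obtain ⟨b, hab, hb⟩ := exists_between ha
  obtain ⟨d, hd, hgd⟩ := Metric.eventually_nhds_iff.1 (hg.1.continuousAt.eventually_const_lt hb)
  filter_upwards [eventually_ge_atTop ⌈g s / d⌉₊] with n hn
  refine hab.trans_le (le_ciInf fun r => ?_)
  rcases lt_or_ge |r| d with hr | hr
  · have hgr : b < g (s - r) := hgd (by simpa [Real.dist_eq] using hr)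
    have : 0 ≤ n * |r| := by positivity
    linarith
  · have hnd : g s ≤ n * d := (div_le_iff₀ hd).1 (Nat.ceil_le.1 hn)
    have := mul_le_mul_of_nonneg_left hr (Nat.cast_nonneg (α := ℝ) n)
    linarith [hg.nonneg (s - r)]

theorem tendsto_lipApprox_comp {u : ℕ → ℝ} {v : ℝ} (hu : Tendsto u atTop (𝓝 v))
    (huv : ∀ n, v ≤ u n) : Tendsto (fun n => lipApprox g n (u n)) atTop (𝓝 (g v)) :=
  tendsto_of_tendsto_of_tendsto_of_le_of_le (tendsto_lipApprox hg v) ((hg.1.tendsto v).comp hu)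
    (fun n => monotone_lipApprox hg n (huv n)) fun n => lipApprox_le hg n _

end LipschitzApproximation

theorem exists_antitone_solutions_lipApprox {N : ℕ} {Ω : Set (Euc N)} {T : ℝ}
    {ν : Measure (Euc N)} [IsFiniteMeasure ν] {g : ℝ → ℝ} {W : Euc N × ℝ → ℝ} (hg : GoodG g)
    (hΩo : IsOpen Ω) (hΩb : Bornology.IsBounded Ω) (hν : ν Ωᶜ = 0) (hW0 : ∀ p, 0 ≤ W p)
    (hW : IntegrableOn W (QT Ω T)) (hk : KatoIneq Ω T ν W fun _ => 0) :
    ∃ u : ℕ → Euc N × ℝ → ℝ, (∀ n p, 0 ≤ u n p) ∧ (∀ n p, u n p ≤ W p) ∧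
      (∀ p, Antitone fun n => u n p) ∧ (∀ n, IntegrableOn (u n) (QT Ω T)) ∧
      ∀ n, WeakHeatEq Ω T ν (u n) fun p => lipApprox g n (u n p) := by
  have hlip := lipschitzAbsorption_lipApprox hg
  let P (n : ℕ) (w : Euc N × ℝ → ℝ) : Prop := (∀ p, 0 ≤ w p) ∧ (∀ p, w p ≤ W p) ∧
    IntegrableOn w (QT Ω T) ∧ WeakHeatEq Ω T ν w fun p => lipApprox g n (w p)
  have hzero : ∃ w, P 0 w :=
    (hk.mono hΩo hΩb hW integrableOn_zero ((hlip 0).integrable_comp hW0 hW)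
      fun p => lipApprox_nonneg hg _ _).exists_solution hΩo hΩb hν (hlip 0) hW0 hW
  have hsucc (n : ℕ) (w) (hw : P n w) : ∃ w', P (n + 1) w' ∧ ∀ p, w' p ≤ w p := by
    obtain ⟨hw0, hwW, hwi, hweq⟩ := hw
    have hint (m : ℕ) := (hlip m).integrable_comp hw0 hwi
    obtain ⟨v, hv0, hvw, hvi, hveq⟩ :=
      ((hweq.katoIneq hΩo hΩb hν hw0 hwi (hint n)).mono hΩo hΩb hwi (hint n) (hint (n + 1))
        fun p => lipApprox_mono hg n.le_succ _).exists_solution hΩo hΩb hν (hlip (n + 1)) hw0 hwi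
    exact ⟨v, ⟨hv0, fun p => (hvw p).trans (hwW p), hvi, hveq⟩, hvw⟩
  choose! next hnext hnext_le using hsucc
  obtain ⟨w₀, hw₀⟩ := hzero
  let u : ℕ → Euc N × ℝ → ℝ := fun n => Nat.rec w₀ next n
  have hP (n : ℕ) : P n (u n) := Nat.rec hw₀ (fun n ih => hnext n _ ih) n
  exact ⟨u, fun n => (hP n).1, fun n => (hP n).2.1,
    fun p => antitone_nat_of_succ_le fun n => hnext_le n _ (hP n) p,
    fun n => (hP n).2.2.1, fun n => (hP n).2.2.2⟩

section Gaussian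

variable {V : Type*} [NormedAddCommGroup V]

/-- The Gaussian profile `exp (-|z|² / 4)` of the heat kernel, not normalized. -/
def gaussian (z : V) : ℝ :=
  Real.exp (-(1 / 4) * ‖z‖ ^ 2)

theorem gaussian_pos (z : V) : 0 < gaussian z :=
  Real.exp_pos _

theorem continuous_gaussian : Continuous (gaussian (V := V)) := by
  unfold gaussian
  fun_prop

theorem norm_mul_gaussian_le (z : V) :
    ‖z‖ * gaussian z ≤ 2 * Real.exp (-(1 / 8) * ‖z‖ ^ 2) := by
  have hsplit : gaussian z =
      Real.exp (-(1 / 8) * ‖z‖ ^ 2) * Real.exp (-(1 / 8 * ‖z‖ ^ 2)) := by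
    rw [gaussian, ← Real.exp_add]
    ring_nf
  have hle : ‖z‖ * Real.exp (-(1 / 8 * ‖z‖ ^ 2)) ≤ 2 := by
    rw [Real.exp_neg, ← div_eq_mul_inv, div_le_iff₀ (Real.exp_pos _)]
    nlinarith [Real.add_one_le_exp (1 / 8 * ‖z‖ ^ 2), sq_nonneg (‖z‖ - 2)]
  rw [hsplit]
  linarith [mul_le_mul_of_nonneg_left hle (Real.exp_pos (-(1 / 8) * ‖z‖ ^ 2)).le]

variable [InnerProductSpace ℝ V]

theorem hasFDerivAt_gaussian (z : V) :
    HasFDerivAt gaussian ((-(1 / 2) * gaussian z) • innerSL ℝ z) z := by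
  refine ((hasStrictFDerivAt_norm_sq z).hasFDerivAt.const_mul (-(1 / 4) : ℝ)).exp.congr_fderiv ?_
  ext v
  simp only [smul_apply, smul_eq_mul, nsmul_eq_mul, gaussian]
  push_cast
  ring

variable [FiniteDimensional ℝ V] [MeasurableSpace V] [BorelSpace V]

theorem integrable_exp_neg_mul_sq_norm {b : ℝ} (hb : 0 < b) :
    Integrable fun z : V => Real.exp (-b * ‖z‖ ^ 2) := by
  refine (GaussianFourier.integrable_cexp_neg_mul_sq_norm_add (V := V) (b := (b : ℂ))
    (by simpa using hb) 0 0).re.congr (Eventually.of_forall fun z => ?_)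
  have hexp : -(b : ℂ) * (‖z‖ : ℂ) ^ 2 = ((-b * ‖z‖ ^ 2 : ℝ) : ℂ) := by push_cast; ring
  simp only [zero_mul, add_zero, hexp, ← Complex.ofReal_exp]
  exact Complex.ofReal_re _

theorem integrable_gaussian : Integrable (gaussian (V := V)) :=
  integrable_exp_neg_mul_sq_norm (by norm_num)

theorem integral_gaussian_pos : 0 < ∫ z : V, gaussian z := by
  have hsupp : Function.support (gaussian (V := V)) = univ :=
    Function.support_eq_univ fun z => (gaussian_pos z).ne'
  rw [integral_pos_iff_support_of_nonneg (fun z => (gaussian_pos z).le) integrable_gaussian, hsupp]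
  exact Measure.measure_univ_pos.2 (NeZero.ne _)

theorem integrable_norm_mul_gaussian : Integrable fun z : V => ‖z‖ * gaussian z := by
  refine ((integrable_exp_neg_mul_sq_norm (by norm_num : (0 : ℝ) < 1 / 8)).const_mul 2).mono'
    (continuous_norm.mul continuous_gaussian).aestronglyMeasurable
    (Eventually.of_forall fun z => ?_)
  rw [Real.norm_of_nonneg (mul_nonneg (norm_nonneg _) (gaussian_pos z).le)]
  exact norm_mul_gaussian_le z

theorem integrable_gaussian_mul {f : V → ℝ} (hf : Continuous f) {C : ℝ} (hC : ∀ z, ‖f z‖ ≤ C) :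
    Integrable fun z => gaussian z * f z :=
  integrable_gaussian.mul_bdd hf.aestronglyMeasurable (Eventually.of_forall hC)

theorem integrable_gaussian_mul_of_le_mul_norm {f : V → ℝ} (hf : Continuous f) {C : ℝ}
    (hC : ∀ z, ‖f z‖ ≤ C * ‖z‖) : Integrable fun z => gaussian z * f z := by
  refine (integrable_norm_mul_gaussian.const_mul C).mono'
    (continuous_gaussian.mul hf).aestronglyMeasurable (Eventually.of_forall fun z => ?_)
  rw [norm_mul, Real.norm_of_nonneg (gaussian_pos z).le]
  linarith [mul_le_mul_of_nonneg_left (hC z) (gaussian_pos z).le]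

theorem integral_gaussian_mul_inner_mul {f : V → ℝ} {f' : V → V →L[ℝ] ℝ}
    (hf : ∀ z, HasFDerivAt f (f' z) z) (hf' : Continuous f') {C D : ℝ} (hC : ∀ z, ‖f z‖ ≤ C)
    (hD : ∀ z, ‖f' z‖ ≤ D) (v : V) :
    ∫ z, gaussian z * (inner ℝ z v * f z) = 2 * ∫ z, gaussian z * f' z v := by
  have hfc : Continuous f := continuous_iff_continuousAt.2 fun z => (hf z).continuousAt
  have hder : ∀ z, fderiv ℝ gaussian z v = -(1 / 2) * (gaussian z * inner ℝ z v) := fun z => by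
    rw [(hasFDerivAt_gaussian z).fderiv]
    simp [mul_assoc]
  have hinner : Integrable fun z => gaussian z * (inner ℝ z v * f z) := by
    refine integrable_gaussian_mul_of_le_mul_norm (C := ‖v‖ * C) (by fun_prop) fun z => ?_
    rw [norm_mul]
    calc ‖inner ℝ z v‖ * ‖f z‖ ≤ ‖z‖ * ‖v‖ * C :=
          mul_le_mul (norm_inner_le_norm z v) (hC z) (norm_nonneg _) (by positivity)
      _ = ‖v‖ * C * ‖z‖ := by ring
  have hf'v : Integrable fun z => gaussian z * f' z v :=
    integrable_gaussian_mul (by fun_prop) fun z => (f' z).le_of_opNorm_le (hD z) v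
  have hibp := integral_mul_fderiv_eq_neg_fderiv_mul_of_integrable (μ := (volume : Measure V))
    (f := gaussian) (g := f) (v := v)
    (by simpa only [hder, mul_assoc] using hinner.const_mul (-(1 / 2)))
    (by simpa only [(hf _).fderiv] using hf'v)
    (integrable_gaussian_mul hfc hC) (fun z _ => (hasFDerivAt_gaussian z).differentiableAt)
    fun z _ => (hf z).differentiableAt
  simp only [hder, (hf _).fderiv, mul_assoc] at hibp
  rw [integral_const_mul] at hibp
  linarith

theorem continuous_integral_gaussian_mul {f : V × ℝ → ℝ} (hf : Continuous f) {C : ℝ}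
    (hC : ∀ p, ‖f p‖ ≤ C) (y : V) :
    Continuous fun t : ℝ => ∫ z, gaussian z * f (y + √t • z, t) := by
  refine continuous_of_dominated (bound := fun z => gaussian z * C)
    (fun t => (continuous_gaussian.mul (hf.comp (by fun_prop))).aestronglyMeasurable)
    (fun t => Eventually.of_forall fun z => ?_) (integrable_gaussian.mul_const C)
    (Eventually.of_forall fun z => continuous_const.mul (hf.comp (by fun_prop)))
  rw [norm_mul, Real.norm_of_nonneg (gaussian_pos z).le]
  exact mul_le_mul_of_nonneg_left (hC _) (gaussian_pos z).le

end Gaussian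

section HeatIdentity

variable {E : Type*} [NormedAddCommGroup E] [NormedSpace ℝ E]

theorem HasC21Deriv.hasDerivAt_comp_sqrt_smul {ψ a : E → ℝ → ℝ} {b : E → ℝ → E →L[ℝ] ℝ}
    {c : E → ℝ → E →L[ℝ] E →L[ℝ] ℝ} (h : HasC21Deriv ψ a b c) (y z : E) {s : ℝ} (hs : 0 < s) :
    HasDerivAt (fun s : ℝ => ψ (y + √s • z) s)
      (a (y + √s • z) s + 1 / (2 * √s) * b (y + √s • z) s z) s := by
  have hψ := hasStrictFDerivAt_uncurry_coprod (𝕜 := ℝ) (u := (y + √s • z, s)) (f := ψ)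
    (f₁ := b) (f₂ := fun x t => ContinuousLinearMap.toSpanSingleton ℝ (a x t))
    (Eventually.of_forall fun v => h.hasFDerivAt v.1 v.2)
    (Eventually.of_forall fun v => (h.hasDerivAt v.1 v.2).hasFDerivAt)
    h.continuous_fderiv.continuousAt
    ((ContinuousLinearMap.toSpanSingletonCLE (𝕜 := ℝ) (E := ℝ)).continuous.comp
      h.continuous_deriv).continuousAt
  have hpath : HasDerivAt (fun s : ℝ => (y + √s • z, s)) ((1 / (2 * √s)) • z, 1) s :=
    (((Real.hasDerivAt_sqrt hs.ne').smul_const z).const_add y).prodMk (hasDerivAt_id' s)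
  refine (HasFDerivAt.comp_hasDerivAt (f := fun s : ℝ => (y + √s • z, s)) s hψ.hasFDerivAt
    hpath).congr_deriv ?_
  simp [Function.HasUncurry.uncurry, add_comm]

variable {N : ℕ}

theorem integral_gaussian_mul_clm_apply {β : Euc N → Euc N →L[ℝ] ℝ}
    {γ : Euc N → Euc N →L[ℝ] Euc N →L[ℝ] ℝ} (hβ : ∀ z, HasFDerivAt β (γ z) z)
    (hγ : Continuous γ) {C D : ℝ} (hC : ∀ z, ‖β z‖ ≤ C) (hD : ∀ z, ‖γ z‖ ≤ D) :
    ∫ z, gaussian z * β z z = 2 * ∫ z, gaussian z * bilinTrace (γ z) := by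
  let e (i : Fin N) : Euc N := EuclideanSpace.single i 1
  have he : ∀ i, ‖e i‖ = 1 := fun i => by simp [e]
  have hβc : Continuous β := continuous_iff_continuousAt.2 fun z => (hβ z).continuousAt
  have hβC : ∀ z i, ‖β z (e i)‖ ≤ C := fun z i => by
    simpa [he] using (β z).le_of_opNorm_le (hC z) (e i)
  have hγD : ∀ z i, ‖γ z (e i) (e i)‖ ≤ D := fun z i => by
    simpa [he] using ((γ z).le_opNorm₂ (e i) (e i)).trans (by simpa [he] using hD z)
  have hβe : ∀ i z, HasFDerivAt (fun z => β z (e i))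
      ((ContinuousLinearMap.apply ℝ ℝ (e i)).comp (γ z)) z := fun i z =>
    (ContinuousLinearMap.apply ℝ ℝ (e i)).hasFDerivAt.comp z (hβ z)
  have hexpand : ∀ z, gaussian z * β z z =
      ∑ i, gaussian z * (inner ℝ z (e i) * β z (e i)) := fun z => by
    have hz : z = ∑ i, inner ℝ z (e i) • e i := by
      ext j
      simp [e, EuclideanSpace.inner_single_right, Finset.sum_apply, Pi.single_apply]
    conv_lhs => rw [show β z z = β z (∑ i, inner ℝ z (e i) • e i) from congrArg _ hz]
    simp only [map_sum, map_smul, smul_eq_mul, Finset.mul_sum]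
  simp only [hexpand, bilinTrace, Finset.mul_sum]
  rw [integral_finsetSum _ fun i _ => ?_, integral_finsetSum _ fun i _ => ?_, Finset.mul_sum]
  · refine Finset.sum_congr rfl fun i _ => ?_
    exact integral_gaussian_mul_inner_mul (hβe i) (by fun_prop) (fun z => hβC z i)
      (D := ‖ContinuousLinearMap.apply ℝ ℝ (e i)‖ * D) (fun z =>
        (ContinuousLinearMap.opNorm_comp_le _ _).trans (by gcongr; exact hD z)) (e i)
  · exact integrable_gaussian_mul ((hγ.clm_apply continuous_const).clm_apply continuous_const)
      fun z => hγD z i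
  · refine integrable_gaussian_mul_of_le_mul_norm (C := C)
      (Continuous.mul (by fun_prop) (hβc.clm_apply continuous_const)) fun z => ?_
    rw [norm_mul, mul_comm C]
    exact mul_le_mul (by simpa [he] using norm_inner_le_norm (𝕜 := ℝ) z (e i)) (hβC z i)
      (norm_nonneg _) (norm_nonneg _)

theorem HasC21Deriv.hasDerivAt_integral_gaussian_mul {ψ a : Euc N → ℝ → ℝ}
    {b : Euc N → ℝ → Euc N →L[ℝ] ℝ} {c : Euc N → ℝ → Euc N →L[ℝ] Euc N →L[ℝ] ℝ}
    (h : HasC21Deriv ψ a b c) {A B C : ℝ} (hψ : ∀ x t, ‖ψ x t‖ ≤ C) (ha : ∀ x t, ‖a x t‖ ≤ A)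
    (hb : ∀ x t, ‖b x t‖ ≤ B) (y : Euc N) {t : ℝ} (ht : 0 < t) :
    HasDerivAt (fun t : ℝ => ∫ z, gaussian z * ψ (y + √t • z) t)
      (∫ z, gaussian z * (a (y + √t • z) t + 1 / (2 * √t) * b (y + √t • z) t z)) t := by
  have hpath : ∀ s : ℝ, Continuous fun z : Euc N => (y + √s • z, s) := fun s => by fun_prop
  have hbz : Continuous fun z : Euc N => b (y + √t • z) t z :=
    (h.continuous_fderiv.comp (hpath t)).clm_apply continuous_id
  refine (hasDerivAt_integral_of_dominated_loc_of_deriv_le (s := Ioi (t / 2))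
    (bound := fun z => gaussian z * A + 1 / (2 * √(t / 2)) * B * (‖z‖ * gaussian z))
    (F := fun s z => gaussian z * ψ (y + √s • z) s)
    (F' := fun s z => gaussian z * (a (y + √s • z) s + 1 / (2 * √s) * b (y + √s • z) s z))
    (Ioi_mem_nhds (by linarith))
    (Eventually.of_forall fun s =>
      (continuous_gaussian.mul (h.continuous.comp (hpath s))).aestronglyMeasurable)
    (integrable_gaussian_mul (h.continuous.comp (hpath t)) fun z => hψ _ _)
    (continuous_gaussian.mul ((h.continuous_deriv.comp (hpath t)).add
      (continuous_const.mul hbz))).aestronglyMeasurable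
    (Eventually.of_forall fun z s (hs : t / 2 < s) => ?_)
    ((integrable_gaussian.mul_const A).add (integrable_norm_mul_gaussian.const_mul _))
    (Eventually.of_forall fun z s (hs : t / 2 < s) =>
      (h.hasDerivAt_comp_sqrt_smul y z (by linarith)).const_mul (gaussian z))).2
  have : 0 < √(t / 2) := Real.sqrt_pos.2 (by linarith)
  have hdrift : ‖1 / (2 * √s) * b (y + √s • z) s z‖ ≤ 1 / (2 * √(t / 2)) * (B * ‖z‖) := by
    rw [norm_mul, Real.norm_of_nonneg (by positivity)]
    exact mul_le_mul (by gcongr) ((b _ _).le_of_opNorm_le (hb _ _) z) (norm_nonneg _)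
      (by positivity)
  rw [norm_mul, Real.norm_of_nonneg (gaussian_pos z).le]
  have hsum := (norm_add_le (a (y + √s • z) s) (1 / (2 * √s) * b (y + √s • z) s z)).trans
    (add_le_add (ha _ _) hdrift)
  exact (mul_le_mul_of_nonneg_left hsum (gaussian_pos z).le).trans_eq (by ring)

/-- Integrating by parts against the Gaussian turns the drift `b · z / (2 √t)` into the Laplacian
term. -/
theorem HasC21Deriv.integral_gaussian_mul_eq_integral_gaussian_mul_heatAdj
    {ψ a : Euc N → ℝ → ℝ} {b : Euc N → ℝ → Euc N →L[ℝ] ℝ}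
    {c : Euc N → ℝ → Euc N →L[ℝ] Euc N →L[ℝ] ℝ} (h : HasC21Deriv ψ a b c) {A B D : ℝ}
    (ha : ∀ x t, ‖a x t‖ ≤ A) (hb : ∀ x t, ‖b x t‖ ≤ B) (hc : ∀ x t, ‖c x t‖ ≤ D)
    {L : ℝ} (hL : ∀ p, ‖heatAdj ψ p‖ ≤ L) (y : Euc N) {t : ℝ} (ht : 0 < t) :
    ∫ z, gaussian z * (a (y + √t • z) t + 1 / (2 * √t) * b (y + √t • z) t z) =
      ∫ z, gaussian z * heatAdj ψ (y + √t • z, t) := by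
  have hpath : Continuous fun z : Euc N => (y + √t • z, t) := by fun_prop
  have hcz : Continuous fun z : Euc N => c (y + √t • z) t := h.continuous_hessian.comp hpath
  have hibp := integral_gaussian_mul_clm_apply (β := fun z => b (y + √t • z) t)
    (γ := fun z => √t • c (y + √t • z) t) (D := √t * D)
    (fun z => by
      have hz : HasFDerivAt (fun z : Euc N => y + √t • z)
          (√t • ContinuousLinearMap.id ℝ (Euc N)) z :=
        ((hasFDerivAt_id z).const_smul √t).const_add y
      refine ((h.hasFDerivAt_fderiv (y + √t • z) t).comp z hz).congr_fderiv ?_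
      ext v w
      simp)
    (Continuous.smul (f := fun _ : Euc N => √t) continuous_const hcz) (fun z => hb _ _)
    (fun z => (ContinuousLinearMap.opNorm_smul_le _ _).trans (by
      rw [Real.norm_of_nonneg (Real.sqrt_nonneg t)]
      exact mul_le_mul_of_nonneg_left (hc _ _) (Real.sqrt_nonneg t)))
  have hia : Integrable fun z => gaussian z * a (y + √t • z) t :=
    integrable_gaussian_mul (h.continuous_deriv.comp hpath) fun z => ha _ _
  have hib : Integrable fun z => gaussian z * b (y + √t • z) t z :=
    integrable_gaussian_mul_of_le_mul_norm
      ((h.continuous_fderiv.comp hpath).clm_apply continuous_id)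
      fun z => (b _ _).le_of_opNorm_le (hb _ _) z
  have hiL : Integrable fun z => gaussian z * heatAdj ψ (y + √t • z, t) :=
    integrable_gaussian_mul (h.c21.continuous_heatAdj.comp hpath) fun z => hL _
  have htrace : ∀ z, gaussian z * bilinTrace (√t • c (y + √t • z) t) =
      √t * (gaussian z * heatAdj ψ (y + √t • z, t) - gaussian z * a (y + √t • z) t) := fun z => by
    rw [bilinTrace_smul, h.heatAdj_eq]
    ring
  simp only [mul_add, mul_left_comm (gaussian _) (1 / (2 * √t))]
  simp only [htrace] at hibp
  rw [integral_add hia (hib.const_mul _), integral_const_mul, hibp, integral_const_mul,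
    integral_sub hiL hia]
  have : 0 < √t := Real.sqrt_pos.2 ht
  field_simp
  ring

theorem HasC21Deriv.exists_forall_norm_le {ψ a : Euc N → ℝ → ℝ} {b : Euc N → ℝ → Euc N →L[ℝ] ℝ}
    {c : Euc N → ℝ → Euc N →L[ℝ] Euc N →L[ℝ] ℝ} (h : HasC21Deriv ψ a b c)
    (hs : HasCompactSupport fun p : Euc N × ℝ => ψ p.1 p.2) :
    ∃ M, ∀ x t, ‖ψ x t‖ ≤ M ∧ ‖a x t‖ ≤ M ∧ ‖b x t‖ ≤ M ∧ ‖c x t‖ ≤ M := by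
  obtain ⟨C, hC⟩ := h.continuous.bounded_above_of_compact_support hs
  obtain ⟨A, hA⟩ := h.continuous_deriv.bounded_above_of_compact_support
    (h.hasCompactSupport_deriv hs)
  obtain ⟨B, hB⟩ := h.continuous_fderiv.bounded_above_of_compact_support
    (h.hasCompactSupport_fderiv hs)
  have hc : Continuous fun p : Euc N × ℝ => ‖c p.1 p.2‖ :=
    (continuous_norm (E := Euc N →L[ℝ] Euc N →L[ℝ] ℝ)).comp h.continuous_hessian
  have hcs : HasCompactSupport fun p : Euc N × ℝ => ‖c p.1 p.2‖ :=
    (h.hasCompactSupport_hessian hs).comp_left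
      (norm_zero (E := Euc N →L[ℝ] Euc N →L[ℝ] ℝ))
  obtain ⟨D, hD⟩ := hc.bounded_above_of_compact_support hcs
  exact ⟨max (max C A) (max B D), fun x t =>
    ⟨(hC (x, t)).trans ((le_max_left C A).trans (le_max_left _ _)),
      (hA (x, t)).trans ((le_max_right C A).trans (le_max_left _ _)),
      (hB (x, t)).trans ((le_max_left B D).trans (le_max_right _ _)),
      (Real.norm_of_nonneg (norm_nonneg (c x t))).symm.le.trans
        ((hD (x, t)).trans ((le_max_right B D).trans (le_max_right _ _)))⟩⟩

theorem HasC21Deriv.hasCompactSupport_heatAdj {ψ a : Euc N → ℝ → ℝ}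
    {b : Euc N → ℝ → Euc N →L[ℝ] ℝ} {c : Euc N → ℝ → Euc N →L[ℝ] Euc N →L[ℝ] ℝ}
    (h : HasC21Deriv ψ a b c) (hs : HasCompactSupport fun p : Euc N × ℝ => ψ p.1 p.2) :
    HasCompactSupport (heatAdj ψ) := by
  have htr : HasCompactSupport fun p : Euc N × ℝ => bilinTrace (c p.1 p.2) :=
    (h.hasCompactSupport_hessian hs).comp_left (g := bilinTrace) (by simp [bilinTrace])
  rw [funext h.heatAdj_eq]
  exact (h.hasCompactSupport_deriv hs).add htr

theorem C21.exists_norm_heatAdj_le {ψ : Euc N → ℝ → ℝ} (h : C21 ψ)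
    (hs : HasCompactSupport fun p : Euc N × ℝ => ψ p.1 p.2) : ∃ L, ∀ p, ‖heatAdj ψ p‖ ≤ L := by
  obtain ⟨a, b, c, hd⟩ := h.exists_hasC21Deriv
  exact h.continuous_heatAdj.bounded_above_of_compact_support (hd.hasCompactSupport_heatAdj hs)

theorem C21.integral_gaussian_mul_heatAdj {ψ : Euc N → ℝ → ℝ} (h : C21 ψ)
    (hs : HasCompactSupport fun p : Euc N × ℝ => ψ p.1 p.2) {T : ℝ} (hT : 0 ≤ T)
    (hψT : ∀ x, ψ x T = 0) (y : Euc N) :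
    ∫ t in (0 : ℝ)..T, ∫ z, gaussian z * heatAdj ψ (y + √t • z, t) =
      -((∫ z : Euc N, gaussian z) * ψ y 0) := by
  obtain ⟨a, b, c, hd⟩ := h.exists_hasC21Deriv
  obtain ⟨M, hM⟩ := hd.exists_forall_norm_le hs
  obtain ⟨L, hL⟩ := h.exists_norm_heatAdj_le hs
  have hder : ∀ t ∈ Ioo 0 T, HasDerivAt (fun t : ℝ => ∫ z, gaussian z * ψ (y + √t • z) t)
      (∫ z, gaussian z * heatAdj ψ (y + √t • z, t)) t := fun t ht => by
    rw [← hd.integral_gaussian_mul_eq_integral_gaussian_mul_heatAdj (fun x t => (hM x t).2.1)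
      (fun x t => (hM x t).2.2.1) (fun x t => (hM x t).2.2.2) hL y ht.1]
    exact hd.hasDerivAt_integral_gaussian_mul (fun x t => (hM x t).1) (fun x t => (hM x t).2.1)
      (fun x t => (hM x t).2.2.1) y ht.1
  rw [intervalIntegral.integral_eq_sub_of_hasDerivAt_of_le hT
    (continuous_integral_gaussian_mul h.continuous (fun p => (hM p.1 p.2).1) y).continuousOn hder
    ((continuous_integral_gaussian_mul h.continuous_heatAdj hL y).intervalIntegrable _ _)]
  simp [hψT, integral_mul_const]

end HeatIdentity

section HeatPotential

variable {N : ℕ}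

/-- The heat kernel centred at `y`, evaluated at `p = (x, t)` with `t > 0`. For `t ≤ 0` the value
is a junk value. -/
def heatKernel (p : Euc N × ℝ) (y : Euc N) : ℝ :=
  (∫ z : Euc N, gaussian z)⁻¹ * (√p.2 ^ N)⁻¹ * gaussian ((√p.2)⁻¹ • (p.1 - y))

/-- The heat potential of `ν`: the solution of the heat equation on the whole space with initial
datum `ν`. -/
def heatPotential (ν : Measure (Euc N)) (p : Euc N × ℝ) : ℝ :=
  ∫ y, heatKernel p y ∂ν

theorem heatKernel_nonneg (p : Euc N × ℝ) (y : Euc N) : 0 ≤ heatKernel p y :=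
  mul_nonneg (mul_nonneg (inv_nonneg.2 integral_gaussian_pos.le) (by positivity))
    (gaussian_pos _).le

theorem heatPotential_nonneg (ν : Measure (Euc N)) (p : Euc N × ℝ) : 0 ≤ heatPotential ν p :=
  integral_nonneg fun y => heatKernel_nonneg p y

theorem measurable_heatKernel : Measurable fun q : Euc N × (Euc N × ℝ) => heatKernel q.2 q.1 := by
  have harg : Measurable fun q : Euc N × (Euc N × ℝ) => (√q.2.2)⁻¹ • (q.2.1 - q.1) :=
    Measurable.smul (f := fun q : Euc N × (Euc N × ℝ) => (√q.2.2)⁻¹) (by fun_prop) (by fun_prop)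
  exact (measurable_const.mul (by fun_prop)).mul (continuous_gaussian.measurable.comp harg)

theorem integral_heatKernel_mul {t : ℝ} (ht : 0 < t) (y : Euc N) (φ : Euc N → ℝ) :
    ∫ x, heatKernel (x, t) y * φ x =
      (∫ z : Euc N, gaussian z)⁻¹ * ∫ z, gaussian z * φ (y + √t • z) := by
  have hs : 0 < √t := Real.sqrt_pos.2 ht
  have hscale := Measure.integral_comp_smul (volume : Measure (Euc N))
    (fun x => gaussian ((√t)⁻¹ • x) * φ (y + x)) √t
  simp only [smul_smul, inv_mul_cancel₀ hs.ne', one_smul, finrank_euclideanSpace,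
    Fintype.card_fin] at hscale
  rw [abs_of_pos (by positivity)] at hscale
  rw [hscale, ← integral_sub_right_eq_self (fun x => gaussian ((√t)⁻¹ • x) * φ (y + x)) y,
    smul_eq_mul, ← mul_assoc, ← integral_const_mul]
  simp only [heatKernel, add_sub_cancel, mul_assoc]

theorem integrable_heatKernel {t : ℝ} (ht : 0 < t) (y : Euc N) :
    Integrable fun x => heatKernel (x, t) y := by
  have hscale : Integrable fun x : Euc N => gaussian ((√t)⁻¹ • x) :=
    (integrable_comp_smul_iff volume _ (by positivity)).2 integrable_gaussian
  exact (hscale.comp_sub_right y).const_mul ((∫ z : Euc N, gaussian z)⁻¹ * (√t ^ N)⁻¹)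

theorem integral_heatKernel {t : ℝ} (ht : 0 < t) (y : Euc N) :
    ∫ x, ‖heatKernel (x, t) y‖ = 1 := by
  simpa [Real.norm_of_nonneg (heatKernel_nonneg _ _),
    inv_mul_cancel₀ (integral_gaussian_pos (V := Euc N)).ne'] using
    integral_heatKernel_mul ht y fun _ => 1

theorem integrable_heatKernel_strip (y : Euc N) (T : ℝ) :
    Integrable (fun p : Euc N × ℝ => heatKernel p y)
      (volume.prod (volume.restrict (Ioo 0 T))) := by
  have hpos : ∀ᵐ t ∂volume.restrict (Ioo 0 T), 0 < t :=
    (ae_restrict_mem measurableSet_Ioo).mono fun t ht => ht.1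
  have hmeas : Measurable fun p : Euc N × ℝ => heatKernel p y :=
    measurable_heatKernel.comp measurable_prodMk_left
  rw [integrable_prod_iff' hmeas.aestronglyMeasurable]
  exact ⟨hpos.mono fun t ht => integrable_heatKernel ht y, (integrable_const 1).congr
    (hpos.mono fun t ht => (integral_heatKernel ht y).symm)⟩

theorem integrable_heatKernel_prod (ν : Measure (Euc N)) [IsFiniteMeasure ν] (T : ℝ) :
    Integrable (fun q : Euc N × (Euc N × ℝ) => heatKernel q.2 q.1)
      (ν.prod (volume.prod (volume.restrict (Ioo 0 T)))) := by
  rw [integrable_prod_iff measurable_heatKernel.aestronglyMeasurable]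
  refine ⟨Eventually.of_forall fun y => integrable_heatKernel_strip y T,
    (integrable_const (∫ _ in Ioo 0 T, (1 : ℝ))).congr (Eventually.of_forall fun y => ?_)⟩
  simp only
  rw [integral_prod_symm _ (integrable_heatKernel_strip y T).norm]
  exact setIntegral_congr_fun measurableSet_Ioo fun t ht => (integral_heatKernel ht.1 y).symm

theorem integrable_heatPotential (ν : Measure (Euc N)) [IsFiniteMeasure ν] (T : ℝ) :
    Integrable (heatPotential ν) (volume.prod (volume.restrict (Ioo 0 T))) :=
  (integrable_heatKernel_prod ν T).integral_prod_right

theorem integral_heatKernel_mul_heatAdj {ψ : Euc N → ℝ → ℝ} (h : C21 ψ)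
    (hs : HasCompactSupport fun p : Euc N × ℝ => ψ p.1 p.2) {T : ℝ} (hT : 0 ≤ T)
    (hψT : ∀ x, ψ x T = 0) (y : Euc N) :
    ∫ t in Ioo 0 T, ∫ x, heatKernel (x, t) y * heatAdj ψ (x, t) = -ψ y 0 := by
  rw [setIntegral_congr_fun measurableSet_Ioo fun t ht =>
    integral_heatKernel_mul ht.1 y fun x => heatAdj ψ (x, t), integral_const_mul,
    ← integral_Ioc_eq_integral_Ioo, ← intervalIntegral.integral_of_le hT,
    h.integral_gaussian_mul_heatAdj hs hT hψT, ← neg_mul_eq_mul_neg,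
    inv_mul_cancel_left₀ integral_gaussian_pos.ne']

theorem integral_heatPotential_mul_heatAdj (ν : Measure (Euc N)) [IsFiniteMeasure ν]
    {ψ : Euc N → ℝ → ℝ} (h : C21 ψ) (hs : HasCompactSupport fun p : Euc N × ℝ => ψ p.1 p.2)
    {T : ℝ} (hT : 0 ≤ T) (hψT : ∀ x, ψ x T = 0) :
    ∫ p, heatPotential ν p * heatAdj ψ p ∂(volume.prod (volume.restrict (Ioo 0 T))) =
      -∫ y, ψ y 0 ∂ν := by
  obtain ⟨L, hL⟩ := h.exists_norm_heatAdj_le hs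
  have hint : Integrable (fun q : Euc N × (Euc N × ℝ) => heatKernel q.2 q.1 * heatAdj ψ q.2)
      (ν.prod (volume.prod (volume.restrict (Ioo 0 T)))) :=
    (integrable_heatKernel_prod ν T).mul_bdd
      (h.continuous_heatAdj.comp continuous_snd).aestronglyMeasurable
      (Eventually.of_forall fun q => hL _)
  simp only [heatPotential, ← integral_mul_const]
  rw [integral_integral_swap (f := fun p y => heatKernel p y * heatAdj ψ p) hint.swap,
    ← integral_neg]
  refine integral_congr_ae ?_
  filter_upwards [hint.prod_right_ae] with y hy
  rw [integral_prod_symm _ hy]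
  exact integral_heatKernel_mul_heatAdj h hs hT hψT y

end HeatPotential

section CutoffFunctions

theorem exists_contDiff_eventually_eq_one {E : Type*} [NormedAddCommGroup E] [NormedSpace ℝ E]
    [FiniteDimensional ℝ E] {K U : Set E} (hK : IsCompact K) (hU : IsOpen U) (hKU : K ⊆ U) :
    ∃ θ : E → ℝ, ContDiff ℝ 2 θ ∧ HasCompactSupport θ ∧ tsupport θ ⊆ U ∧
      (∀ x ∈ K, ∀ᶠ y in 𝓝 x, θ y = 1) ∧ ∀ x, θ x ∈ Icc 0 1 := by
  obtain ⟨L, hL, hKL, hLU⟩ := exists_compact_between hK hU hKU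
  obtain ⟨θ, hθ1, hθ0, hθ⟩ := exists_contMDiffMap_one_nhds_of_subset_interior
    (modelWithCornersSelf ℝ E) (n := 2) hK.isClosed hKL
  have hsupp : tsupport θ ⊆ L := closure_minimal
    (fun x hx => by_contra fun hxL => hx (hθ0 x hxL)) hL.isClosed
  exact ⟨θ, θ.contMDiff.contDiff, HasCompactSupport.of_support_subset_isCompact hL
    (subset_tsupport _ |>.trans hsupp), hsupp.trans hLU,
    fun x hx => Filter.Eventually.filter_mono (nhds_le_nhdsSet hx) hθ1, hθ⟩

theorem isOpen_setOf_forall_mem_lt {X Y : Type*} [TopologicalSpace X] [TopologicalSpace Y]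
    {K : Set X} (hK : IsCompact K) {f : X × Y → ℝ} (hf : Continuous f) (r : ℝ) :
    IsOpen {y : Y | ∀ x ∈ K, f (x, y) < r} := by
  refine isOpen_iff_mem_nhds.2 fun y hy =>
    hK.eventually_forall_of_forall_eventually (P := fun y x => f (x, y) < r) fun x hx => ?_
  exact (isOpen_lt (hf.comp continuous_swap) continuous_const).mem_nhds (hy x hx)

end CutoffFunctions

section ZeroExtension

variable {N : ℕ} {Ω : Set (Euc N)} {φ : Euc N → ℝ → ℝ}

/-- The function equal to `φ` over `Ω` and to zero elsewhere. -/
def zeroExtension (Ω : Set (Euc N)) (φ : Euc N → ℝ → ℝ) (x : Euc N) (t : ℝ) : ℝ :=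
  Ω.indicator (fun y => φ y t) x

theorem zeroExtension_of_mem {x : Euc N} (hx : x ∈ Ω) (t : ℝ) : zeroExtension Ω φ x t = φ x t :=
  indicator_of_mem hx _

theorem zeroExtension_of_notMem {x : Euc N} (hx : x ∉ Ω) (t : ℝ) : zeroExtension Ω φ x t = 0 :=
  indicator_of_notMem hx _

theorem eventually_zeroExtension_eq (hΩ : IsOpen Ω) {p : Euc N × ℝ} (hp : p.1 ∈ Ω) :
    ∀ᶠ q in 𝓝 p, zeroExtension Ω φ q.1 q.2 = φ q.1 q.2 := by
  filter_upwards [(hΩ.preimage continuous_fst).mem_nhds hp] with q hq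
  exact zeroExtension_of_mem hq _

theorem eventually_zeroExtension_eq_zero (hΩ : IsOpen Ω)
    (hφ : ∀ p : Euc N × ℝ, p.1 ∈ frontier Ω → ∀ᶠ q in 𝓝 p, φ q.1 q.2 = 0) {p : Euc N × ℝ}
    (hp : p.1 ∉ Ω) : ∀ᶠ q in 𝓝 p, zeroExtension Ω φ q.1 q.2 = 0 := by
  by_cases hcl : p.1 ∈ closure Ω
  · filter_upwards [hφ p (hΩ.frontier_eq ▸ ⟨hcl, hp⟩)] with q hq
    exact indicator_apply_eq_zero.2 fun _ => hq
  · filter_upwards [(isClosed_closure.isOpen_compl.preimage continuous_fst).mem_nhds hcl] with q hq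
    exact zeroExtension_of_notMem (fun h => hq (subset_closure h)) _

theorem C21.zeroExtension (h : C21 φ) (hΩ : IsOpen Ω)
    (hφ : ∀ p : Euc N × ℝ, p.1 ∈ frontier Ω → ∀ᶠ q in 𝓝 p, φ q.1 q.2 = 0) :
    C21 (zeroExtension Ω φ) := by
  refine C21.of_eventuallyEq fun p => ?_
  by_cases hp : p.1 ∈ Ω
  · exact ⟨φ, h, eventually_zeroExtension_eq hΩ hp⟩
  · exact ⟨_, C21.zero, eventually_zeroExtension_eq_zero hΩ hφ hp⟩

theorem hasCompactSupport_zeroExtension (hΩb : Bornology.IsBounded Ω) {S : Set ℝ}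
    (hS : IsCompact S) (hφS : ∀ x, ∀ t ∉ S, φ x t = 0) :
    HasCompactSupport fun p : Euc N × ℝ => _root_.zeroExtension Ω φ p.1 p.2 := by
  refine HasCompactSupport.of_support_subset_isCompact (hΩb.isCompact_closure.prod hS)
    fun p hp => ⟨?_, ?_⟩
  · exact subset_closure (by_contra fun h => hp (zeroExtension_of_notMem h _))
  · exact by_contra fun h => hp (indicator_apply_eq_zero.2 fun _ => hφS _ _ h)

end ZeroExtension

section HeatPotentialKato

variable {N : ℕ} {Ω : Set (Euc N)} {T : ℝ} {ν : Measure (Euc N)}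

theorem prod_restrict_Ioo_eq (T : ℝ) :
    (volume : Measure (Euc N)).prod (volume.restrict (Ioo 0 T)) =
      volume.restrict (univ ×ˢ Ioo 0 T) := by
  rw [Measure.volume_eq_prod, ← Measure.prod_restrict, Measure.restrict_univ]

theorem integrableOn_heatPotential (Ω : Set (Euc N)) (ν : Measure (Euc N)) [IsFiniteMeasure ν]
    (T : ℝ) : IntegrableOn (heatPotential ν) (QT Ω T) :=
  IntegrableOn.mono_set (t := univ ×ˢ Ioo 0 T)
    (by simpa only [IntegrableOn, prod_restrict_Ioo_eq] using integrable_heatPotential ν T)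
    (prod_mono (subset_univ _) le_rfl)

theorem setIntegral_heatPotential_mul_heatAdj [IsFiniteMeasure ν] (hΩo : IsOpen Ω)
    (hΩb : Bornology.IsBounded Ω) (hν : ν Ωᶜ = 0) (hT : 0 ≤ T) {φ : Euc N → ℝ → ℝ} (h : C21 φ)
    (hφ : ∀ p : Euc N × ℝ, p.1 ∈ frontier Ω → ∀ᶠ q in 𝓝 p, φ q.1 q.2 = 0) {S : Set ℝ}
    (hS : IsCompact S) (hφS : ∀ x, ∀ t ∉ S, φ x t = 0) (hφT : ∀ x ∈ Ω, φ x T = 0) :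
    ∫ p in QT Ω T, heatPotential ν p * heatAdj φ p = -∫ x, φ x 0 ∂ν := by
  have hmain := integral_heatPotential_mul_heatAdj ν (h.zeroExtension hΩo hφ)
    (hasCompactSupport_zeroExtension hΩb hS hφS) hT
    (fun x => indicator_apply_eq_zero.2 fun hx => hφT x hx)
  have hinit : ∫ x, zeroExtension Ω φ x 0 ∂ν = ∫ x, φ x 0 ∂ν :=
    integral_congr_ae ((ae_iff.2 hν : ∀ᵐ x ∂ν, x ∈ Ω).mono fun x hx => zeroExtension_of_mem hx 0)
  rw [prod_restrict_Ioo_eq, hinit, setIntegral_eq_of_subset_of_forall_sdiff_eq_zero (s := QT Ω T)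
    (MeasurableSet.univ.prod measurableSet_Ioo) (prod_mono (subset_univ _) le_rfl)
    fun p hp => ?_] at hmain
  · rw [← hmain]
    refine setIntegral_congr_fun (measurableSet_QT hΩo T) fun p hp => ?_
    simp only [heatAdj_congr (eventually_zeroExtension_eq (φ := φ) hΩo hp.1)]
  · rw [heatAdj_eq_zero (eventually_zeroExtension_eq_zero hΩo hφ fun h => hp.2 ⟨h, hp.1.2⟩),
      mul_zero]

/-- `smoothRamp ε ∘ ζ` vanishes near `∂Ω × [0,T]`, hence can be cut off in time and extended by
zero to a test function on the whole space. -/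
theorem katoIneq_heatPotential [IsFiniteMeasure ν] (hΩo : IsOpen Ω)
    (hΩb : Bornology.IsBounded Ω) (hν : ν Ωᶜ = 0) (hT : 0 ≤ T) :
    KatoIneq Ω T ν (heatPotential ν) fun _ => 0 := by
  refine katoIneq_of_smoothRamp hΩo hΩb hν (heatPotential_nonneg ν)
    (integrableOn_heatPotential Ω ν T) (integrable_zero _ _ _) fun ε hε ζ hζ => ?_
  have hζc := hζ.1.continuous
  have hfr : IsCompact (frontier Ω) :=
    hΩb.isCompact_closure.of_isClosed_subset isClosed_frontier frontier_subset_closure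
  obtain ⟨θ, hθ, hθs, hθε, hθ1, -⟩ := exists_contDiff_eventually_eq_one
    (isCompact_Icc (a := 0) (b := T)) (isOpen_setOf_forall_mem_lt hfr hζc ε)
    fun t ht x hx => (hζ.2.1 x hx t ht).trans_lt hε
  obtain ⟨a, b, c, hd⟩ := (hζ.smoothRamp_comp ε).1.exists_hasC21Deriv
  have hφ := hd.time_mul (fun s => (hθ.differentiable two_ne_zero s).hasDerivAt)
    (hθ.continuous_deriv one_le_two)
  have hφfr : ∀ p : Euc N × ℝ, p.1 ∈ frontier Ω →
      ∀ᶠ q in 𝓝 p, θ q.2 * smoothRamp ε (ζ q.1 q.2) = 0 := fun p hp => by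
    by_cases hpθ : p.2 ∈ tsupport θ
    · filter_upwards [(isOpen_lt hζc continuous_const).mem_nhds (hθε hpθ _ hp)] with q hq
      rw [smoothRamp_of_le hε hq.le, mul_zero]
    · filter_upwards [continuous_snd.continuousAt.eventually
        (notMem_tsupport_iff_eventuallyEq.1 hpθ)] with q hq
      rw [hq, Pi.zero_apply, zero_mul]
  have hmain := setIntegral_heatPotential_mul_heatAdj hΩo hΩb hν hT hφ.c21 hφfr hθs
    (fun x t ht => by rw [image_eq_zero_of_notMem_tsupport ht, zero_mul])
    fun x hx => by rw [hζ.2.2 x (subset_closure hx), smoothRamp_zero, mul_zero]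
  rw [(hθ1 0 ⟨le_rfl, hT⟩).self_of_nhds] at hmain
  simp only [one_mul] at hmain
  rw [← neg_neg (∫ x, _ ∂ν), ← hmain, ← integral_neg]
  refine (setIntegral_congr_fun (measurableSet_QT hΩo T) fun p hp => ?_).le
  have heq : ∀ᶠ q : Euc N × ℝ in 𝓝 p,
      θ q.2 * smoothRamp ε (ζ q.1 q.2) = smoothRamp ε (ζ q.1 q.2) := by
    filter_upwards [continuous_snd.continuousAt.eventually (hθ1 p.2 (Ioo_subset_Icc_self hp.2))]
      with q hq
    rw [hq, one_mul]
  simp only [heatIntegrand, heatAdj_congr (ζ := fun x t => smoothRamp ε (ζ x t))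
    (ψ := fun x t => θ t * smoothRamp ε (ζ x t)) heq, mul_zero, add_zero, neg_mul]

end HeatPotentialKato

section HeatPotentialBound

variable {N : ℕ}

theorem pow_mul_exp_neg_mul_sq_le (n : ℕ) {a : ℝ} (ha : 0 < a) (s : ℝ) :
    s ^ n * Real.exp (-(a * s ^ 2)) ≤ 1 + n.factorial / a ^ n := by
  have hexp : Real.exp (-(a * s ^ 2)) ≤ 1 := Real.exp_le_one_iff.2 (neg_nonpos.2 (by positivity))
  have hpow : s ^ n ≤ 1 + (s ^ 2) ^ n := by
    rw [← pow_mul, mul_comm 2 n, pow_mul]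
    nlinarith [sq_nonneg (s ^ n - 1), sq_nonneg (s ^ n)]
  have hfact : (s ^ 2) ^ n * Real.exp (-(a * s ^ 2)) ≤ n.factorial / a ^ n := by
    have h := Real.pow_div_factorial_le_exp (a * s ^ 2) (by positivity) n
    rw [div_le_iff₀ (by positivity), mul_pow] at h
    rw [Real.exp_neg, ← div_eq_mul_inv, div_le_div_iff₀ (Real.exp_pos _) (by positivity)]
    linarith
  linarith [mul_le_mul_of_nonneg_right hpow (Real.exp_pos (-(a * s ^ 2))).le]

theorem heatKernel_le_of_le_time {τ : ℝ} (hτ : 0 < τ) {p : Euc N × ℝ} (hp : τ ≤ p.2)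
    (y : Euc N) : heatKernel p y ≤ (∫ z : Euc N, gaussian z)⁻¹ * (√τ ^ N)⁻¹ := by
  have hgauss : gaussian ((√p.2)⁻¹ • (p.1 - y)) ≤ 1 :=
    Real.exp_le_one_iff.2 (by nlinarith [sq_nonneg ‖(√p.2)⁻¹ • (p.1 - y)‖])
  have hpow : (√p.2 ^ N)⁻¹ ≤ (√τ ^ N)⁻¹ := by
    have : 0 < √τ := Real.sqrt_pos.2 hτ
    gcongr
  have hc : 0 ≤ (∫ z : Euc N, gaussian z)⁻¹ := inv_nonneg.2 integral_gaussian_pos.le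
  exact (mul_le_of_le_one_right (mul_nonneg hc (by positivity)) hgauss).trans
    (mul_le_mul_of_nonneg_left hpow hc)

theorem heatKernel_le_of_le_norm {r : ℝ} (hr : 0 < r) {p : Euc N × ℝ} {y : Euc N}
    (hy : r ≤ ‖p.1 - y‖) :
    heatKernel p y ≤
      (∫ z : Euc N, gaussian z)⁻¹ * (1 + N.factorial / (r ^ 2 / 4) ^ N) := by
  have hgauss : gaussian ((√p.2)⁻¹ • (p.1 - y)) ≤
      Real.exp (-(r ^ 2 / 4 * ((√p.2)⁻¹) ^ 2)) := by
    rw [gaussian, norm_smul, Real.norm_of_nonneg (by positivity), mul_pow]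
    refine Real.exp_le_exp.2 ?_
    have hsq : r ^ 2 ≤ ‖p.1 - y‖ ^ 2 := by gcongr
    nlinarith [sq_nonneg (√p.2)⁻¹]
  rw [heatKernel, mul_assoc, ← inv_pow]
  refine mul_le_mul_of_nonneg_left ?_ (inv_nonneg.2 integral_gaussian_pos.le)
  exact (mul_le_mul_of_nonneg_left hgauss (by positivity)).trans
    (pow_mul_exp_neg_mul_sq_le N (by positivity) _)

theorem exists_heatPotential_le (ν : Measure (Euc N)) [IsFiniteMeasure ν] {K : Set (Euc N)}
    (hK : ν Kᶜ = 0) {r τ : ℝ} (hr : 0 < r) (hτ : 0 < τ) :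
    ∃ C, 0 ≤ C ∧ ∀ p : Euc N × ℝ, (τ ≤ p.2 ∨ ∀ y ∈ K, r ≤ ‖p.1 - y‖) →
      heatPotential ν p ≤ C := by
  set c := (∫ z : Euc N, gaussian z)⁻¹
  have hc : 0 ≤ c := inv_nonneg.2 integral_gaussian_pos.le
  let C := max (c * (√τ ^ N)⁻¹) (c * (1 + N.factorial / (r ^ 2 / 4) ^ N))
  have : 0 ≤ C := le_max_of_le_left (by positivity)
  refine ⟨C * ν.real univ, by positivity, fun p hp => ?_⟩
  refine (le_abs_self _).trans (norm_integral_le_of_norm_le_const (f := heatKernel p) ?_)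
  filter_upwards [(ae_iff.2 hK : ∀ᵐ y ∂ν, y ∈ K)] with y hy
  rw [Real.norm_of_nonneg (heatKernel_nonneg p y)]
  rcases hp with htime | hspace
  · exact (heatKernel_le_of_le_time hτ htime y).trans (le_max_left _ _)
  · exact (heatKernel_le_of_le_norm hr (hspace y hy)).trans (le_max_right _ _)

end HeatPotentialBound

section ParabolicOperator

variable {G ι : Type*} [NormedAddCommGroup G] [NormedSpace ℝ G] [Fintype ι]
  {v₀ : G} {v : ι → G} {F ξ : G → ℝ}

/-- The directional derivative of `F` along `u`. -/
def dirDeriv (u : G) (F : G → ℝ) (p : G) : ℝ := fderiv ℝ F p u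

/-- The constant coefficient operator `∂_{v₀} + ∑ i, ∂_{v i}²`. On space-time it is the adjoint
heat operator `∂ₜ + Δ` for the standard directions; its formal adjoint is obtained by changing
the sign of `v₀`. -/
def parabolicOp (v₀ : G) (v : ι → G) (F : G → ℝ) (p : G) : ℝ :=
  dirDeriv v₀ F p + ∑ i, dirDeriv (v i) (dirDeriv (v i) F) p

theorem contDiff_one_dirDeriv (hF : ContDiff ℝ 2 F) (u : G) : ContDiff ℝ 1 (dirDeriv u F) :=
  (hF.fderiv_right (m := 1) le_rfl).clm_apply contDiff_const

theorem continuous_dirDeriv (hF : ContDiff ℝ 1 F) (u : G) : Continuous (dirDeriv u F) :=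
  (hF.continuous_fderiv one_ne_zero).clm_apply continuous_const

theorem continuous_parabolicOp (hF : ContDiff ℝ 2 F) : Continuous (parabolicOp v₀ v F) :=
  (contDiff_one_dirDeriv hF _).continuous.add
    (continuous_finsetSum _ fun _ _ => continuous_dirDeriv (contDiff_one_dirDeriv hF _) _)

theorem hasCompactSupport_dirDeriv (hF : HasCompactSupport F) (u : G) :
    HasCompactSupport (dirDeriv u F) :=
  hF.fderiv_apply ℝ u

theorem parabolicOp_eq_zero_of_notMem_tsupport {p : G} (hp : p ∉ tsupport F) :
    parabolicOp v₀ v F p = 0 := by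
  have hder {F : G → ℝ} (u : G) (hF : p ∉ tsupport F) : p ∉ tsupport (dirDeriv u F) :=
    fun h => hF (tsupport_fderiv_apply_subset ℝ u h)
  rw [parabolicOp, image_eq_zero_of_notMem_tsupport (hder _ hp), zero_add]
  exact Finset.sum_eq_zero fun i _ => image_eq_zero_of_notMem_tsupport (hder _ (hder _ hp))

theorem hasCompactSupport_parabolicOp (hF : HasCompactSupport F) :
    HasCompactSupport (parabolicOp v₀ v F) :=
  HasCompactSupport.intro hF fun _ => parabolicOp_eq_zero_of_notMem_tsupport

theorem dirDeriv_comp {j j' j'' : ℝ → ℝ} (hj : HasC2Deriv j j' j'') (hF : ContDiff ℝ 1 F)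
    (u p : G) : dirDeriv u (fun x => j (F x)) p = j' (F p) * dirDeriv u F p := by
  have h := (hj.hasDerivAt (F p)).comp_hasFDerivAt p
    (hF.differentiable one_ne_zero p).hasFDerivAt
  simp only [dirDeriv, show fderiv ℝ (fun x => j (F x)) p = _ from h.fderiv,
    smul_apply, smul_eq_mul]

theorem dirDeriv_dirDeriv_comp {j j' j'' : ℝ → ℝ} (hj : HasC2Deriv j j' j'')
    (hF : ContDiff ℝ 2 F) (u p : G) :
    dirDeriv u (dirDeriv u fun x => j (F x)) p =
      j' (F p) * dirDeriv u (dirDeriv u F) p + j'' (F p) * dirDeriv u F p ^ 2 := by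
  have hF1 : ContDiff ℝ 1 F := hF.of_le one_le_two
  have hj' := (hj.hasDerivAt_deriv (F p)).comp_hasFDerivAt p
    (hF1.differentiable one_ne_zero p).hasFDerivAt
  have hu := ((contDiff_one_dirDeriv hF u).differentiable one_ne_zero p).hasFDerivAt
  have h : fderiv ℝ (fun x => j' (F x) * dirDeriv u F x) p = _ := (hj'.mul hu).fderiv
  rw [funext (dirDeriv_comp hj hF1 u), dirDeriv, h]
  simp only [Function.comp_apply, dirDeriv, add_apply,
    smul_apply, smul_eq_mul]
  ring

theorem mul_parabolicOp_le_parabolicOp_comp {j j' j'' : ℝ → ℝ} (hj : HasC2Deriv j j' j'')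
    (hj'' : ∀ s, 0 ≤ j'' s) (hF : ContDiff ℝ 2 F) (p : G) :
    j' (F p) * parabolicOp v₀ v F p ≤ parabolicOp v₀ v (fun x => j (F x)) p := by
  rw [parabolicOp, parabolicOp, dirDeriv_comp hj (hF.of_le one_le_two), mul_add, Finset.mul_sum]
  gcongr with i
  rw [dirDeriv_dirDeriv_comp hj hF]
  exact le_add_of_nonneg_right (mul_nonneg (hj'' _) (sq_nonneg _))

theorem dirDeriv_comp_sub_left (η : G → ℝ) (u p q : G) :
    dirDeriv u (fun q => η (p - q)) q = -dirDeriv u η (p - q) := by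
  have h : fderiv ℝ (fun x => η (-x)) (q - p) = _ :=
    (ContinuousLinearEquiv.neg ℝ (M := G)).comp_right_fderiv (f := η) (x := q - p)
  have hshift := fderiv_comp_sub (𝕜 := ℝ) (f := fun x => η (-x)) (x := q) p
  simp only [neg_sub] at hshift
  rw [dirDeriv, hshift, h]
  simp [dirDeriv]

theorem dirDeriv_neg_left (u : G) (F : G → ℝ) (p : G) : dirDeriv (-u) F p = -dirDeriv u F p :=
  map_neg _ _

theorem dirDeriv_neg_right (u : G) (F : G → ℝ) (p : G) :
    dirDeriv u (fun q => -F q) p = -dirDeriv u F p := by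
  simp [dirDeriv, fderiv_fun_neg]

theorem parabolicOp_comp_sub_left (η : G → ℝ) (p q : G) :
    parabolicOp v₀ v (fun q => η (p - q)) q = parabolicOp (-v₀) v η (p - q) := by
  rw [parabolicOp, parabolicOp, dirDeriv_comp_sub_left, dirDeriv_neg_left]
  congr 1
  refine Finset.sum_congr rfl fun i _ => ?_
  rw [funext (dirDeriv_comp_sub_left η (v i) p), dirDeriv_neg_right,
    dirDeriv_comp_sub_left, neg_neg]

variable [FiniteDimensional ℝ G] [MeasurableSpace G] [BorelSpace G] {μ : Measure G}
  [μ.IsAddHaarMeasure]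

theorem integral_mul_dirDeriv (hF : ContDiff ℝ 1 F) (hξ : ContDiff ℝ 1 ξ)
    (hc : HasCompactSupport ξ) (u : G) :
    ∫ x, F x * dirDeriv u ξ x ∂μ = -∫ x, dirDeriv u F x * ξ x ∂μ :=
  integral_mul_fderiv_eq_neg_fderiv_mul_of_integrable
    (((continuous_dirDeriv hF u).mul hξ.continuous).integrable_of_hasCompactSupport hc.mul_left)
    ((hF.continuous.mul (continuous_dirDeriv hξ u)).integrable_of_hasCompactSupport
      (hasCompactSupport_dirDeriv hc u).mul_left)
    ((hF.continuous.mul hξ.continuous).integrable_of_hasCompactSupport hc.mul_left)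
    (fun x _ => hF.differentiable one_ne_zero x) fun x _ => hξ.differentiable one_ne_zero x

theorem integral_mul_dirDeriv_dirDeriv (hF : ContDiff ℝ 2 F) (hξ : ContDiff ℝ 2 ξ)
    (hc : HasCompactSupport ξ) (u : G) :
    ∫ x, F x * dirDeriv u (dirDeriv u ξ) x ∂μ = ∫ x, dirDeriv u (dirDeriv u F) x * ξ x ∂μ := by
  rw [integral_mul_dirDeriv (hF.of_le one_le_two) (contDiff_one_dirDeriv hξ u)
    (hasCompactSupport_dirDeriv hc u), integral_mul_dirDeriv (contDiff_one_dirDeriv hF u)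
    (hξ.of_le one_le_two) hc, neg_neg]

theorem integral_mul_parabolicOp (hF : ContDiff ℝ 2 F) (hξ : ContDiff ℝ 2 ξ)
    (hc : HasCompactSupport ξ) :
    ∫ x, F x * parabolicOp v₀ v ξ x ∂μ = ∫ x, parabolicOp (-v₀) v F x * ξ x ∂μ := by
  have hF2 (u : G) := continuous_dirDeriv (contDiff_one_dirDeriv hF u) u
  have hξ2 (u : G) := continuous_dirDeriv (contDiff_one_dirDeriv hξ u) u
  have hint1 : Integrable (fun x => F x * dirDeriv v₀ ξ x) μ :=
    (hF.continuous.mul (contDiff_one_dirDeriv hξ _).continuous).integrable_of_hasCompactSupport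
      (hasCompactSupport_dirDeriv hc _).mul_left
  have hint2 (i : ι) : Integrable (fun x => F x * dirDeriv (v i) (dirDeriv (v i) ξ) x) μ :=
    (hF.continuous.mul (hξ2 _)).integrable_of_hasCompactSupport
      (hasCompactSupport_dirDeriv (hasCompactSupport_dirDeriv hc _) _).mul_left
  have hint3 : Integrable (fun x => dirDeriv (-v₀) F x * ξ x) μ :=
    ((contDiff_one_dirDeriv hF _).continuous.mul
      hξ.continuous).integrable_of_hasCompactSupport hc.mul_left
  have hint4 (i : ι) : Integrable (fun x => dirDeriv (v i) (dirDeriv (v i) F) x * ξ x) μ :=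
    ((hF2 _).mul hξ.continuous).integrable_of_hasCompactSupport hc.mul_left
  simp only [parabolicOp, mul_add, add_mul, Finset.mul_sum, Finset.sum_mul]
  rw [integral_add hint1 (integrable_finsetSum _ fun i _ => hint2 i),
    integral_add hint3 (integrable_finsetSum _ fun i _ => hint4 i),
    integral_finsetSum _ fun i _ => hint2 i, integral_finsetSum _ fun i _ => hint4 i,
    integral_mul_dirDeriv (hF.of_le one_le_two) (hξ.of_le one_le_two) hc]
  simp only [dirDeriv_neg_left, neg_mul, integral_neg, integral_mul_dirDeriv_dirDeriv hF hξ hc]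

end ParabolicOperator

section Mollification

open scoped Convolution

-- Scheffé's lemma: `|a - b| = a + b - 2 * min a b`, and the minima converge by domination.
theorem tendsto_integral_abs_sub_of_nonneg {X : Type*} [MeasurableSpace X] {m : Measure X}
    {F : ℕ → X → ℝ} {f : X → ℝ} (hF : ∀ k, Integrable (F k) m) (hf : Integrable f m)
    (hF0 : ∀ k x, 0 ≤ F k x) (hf0 : ∀ x, 0 ≤ f x) (hint : ∀ k, ∫ x, F k x ∂m = ∫ x, f x ∂m)
    (hlim : ∀ᵐ x ∂m, Tendsto (fun k => F k x) atTop (𝓝 (f x))) :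
    Tendsto (fun k => ∫ x, |F k x - f x| ∂m) atTop (𝓝 0) := by
  have hmin (k : ℕ) : Integrable (fun x => min (F k x) (f x)) m := (hF k).inf hf
  have heq (k : ℕ) : ∫ x, |F k x - f x| ∂m =
      2 * (∫ x, f x ∂m) - 2 * ∫ x, min (F k x) (f x) ∂m := by
    have hpt (x : X) : |F k x - f x| = F k x + f x - 2 * min (F k x) (f x) := by
      rw [← max_sub_min_eq_abs', ← max_add_min (F k x) (f x)]
      ring
    simp only [hpt]
    rw [integral_sub (f := fun x => F k x + f x) ((hF k).add hf) ((hmin k).const_mul 2),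
      integral_add (hF k) hf, hint, integral_const_mul]
    ring
  have hmin_lim : Tendsto (fun k => ∫ x, min (F k x) (f x) ∂m) atTop (𝓝 (∫ x, f x ∂m)) := by
    refine tendsto_integral_of_dominated_convergence f (fun k => (hmin k).aestronglyMeasurable) hf
      (fun k => .of_forall fun x => ?_) (hlim.mono fun x hx => ?_)
    · rw [Real.norm_of_nonneg (le_min (hF0 k x) (hf0 x))]
      exact min_le_right _ _
    · simpa using hx.min (tendsto_const_nhds (x := f x))
  simp only [heq]
  simpa using (hmin_lim.const_mul 2).const_sub (2 * ∫ x, f x ∂m)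

/-- A smooth bump function at the origin, with support of radius `1 / (k + 1)`. -/
def mollifierBump (G : Type*) [NormedAddCommGroup G] [NormedSpace ℝ G] (k : ℕ) :
    ContDiffBump (0 : G) where
  rIn := 1 / ((k : ℝ) + 1) / 2
  rOut := 1 / ((k : ℝ) + 1)
  rIn_pos := by positivity
  rIn_lt_rOut := half_lt_self (by positivity)

theorem tendsto_mollifierBump_rOut (G : Type*) [NormedAddCommGroup G]
    [NormedSpace ℝ G] :
    Tendsto (fun k => (mollifierBump G k).rOut) atTop (𝓝 0) :=
  tendsto_one_div_add_atTop_nhds_zero_nat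

variable {G ι : Type*} [NormedAddCommGroup G] [NormedSpace ℝ G] [FiniteDimensional ℝ G]
  [Fintype ι] [MeasurableSpace G] [BorelSpace G] {μ : Measure G} [μ.IsAddHaarMeasure]
  {v₀ : G} {v : ι → G} {w η : G → ℝ}

theorem dirDeriv_convolution (hw : Integrable w μ) (hη : ContDiff ℝ 1 η)
    (hc : HasCompactSupport η) (u p : G) :
    dirDeriv u (w ⋆[ContinuousLinearMap.mul ℝ ℝ, μ] η) p =
      (w ⋆[ContinuousLinearMap.mul ℝ ℝ, μ] dirDeriv u η) p := by
  rw [dirDeriv, (hc.hasFDerivAt_convolution_right (ContinuousLinearMap.mul ℝ ℝ)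
    hw.locallyIntegrable hη p).fderiv, convolution_precompR_apply _ hw.locallyIntegrable
    (hc.fderiv ℝ) (hη.continuous_fderiv one_ne_zero)]
  rfl

theorem parabolicOp_convolution (hw : Integrable w μ) (hη : ContDiff ℝ 2 η)
    (hc : HasCompactSupport η) (p : G) :
    parabolicOp v₀ v (w ⋆[ContinuousLinearMap.mul ℝ ℝ, μ] η) p =
      (w ⋆[ContinuousLinearMap.mul ℝ ℝ, μ] parabolicOp v₀ v η) p := by
  have hη1 : ContDiff ℝ 1 η := hη.of_le one_le_two
  have hint {ψ : G → ℝ} (hψ : Continuous ψ) (hψc : HasCompactSupport ψ) :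
      Integrable (fun q => w q * ψ (p - q)) μ :=
    hψc.convolutionExists_right (ContinuousLinearMap.mul ℝ ℝ) hw.locallyIntegrable hψ p
  have hint1 := hint (continuous_dirDeriv hη1 v₀) (hasCompactSupport_dirDeriv hc v₀)
  have hint2 (i : ι) := hint (continuous_dirDeriv (contDiff_one_dirDeriv hη (v i)) (v i))
    (hasCompactSupport_dirDeriv (hasCompactSupport_dirDeriv hc (v i)) (v i))
  rw [parabolicOp, dirDeriv_convolution hw hη1 hc]
  simp only [funext (dirDeriv_convolution hw hη1 hc _),
    dirDeriv_convolution hw (contDiff_one_dirDeriv hη _) (hasCompactSupport_dirDeriv hc _)]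
  simp only [convolution_mul, parabolicOp, mul_add, Finset.mul_sum]
  rw [integral_add hint1 (integrable_finsetSum _ fun i _ => hint2 i),
    integral_finsetSum _ fun i _ => hint2 i]

/-- The smoothing `w ⋆ ηₖ` of `w`, where `ηₖ` is the normalised bump function of radius
`1 / (k + 1)`. -/
def mollify (μ : Measure G) [μ.IsAddHaarMeasure] (w : G → ℝ) (k : ℕ) : G → ℝ :=
  w ⋆[ContinuousLinearMap.mul ℝ ℝ, μ] (mollifierBump G k).normed μ

theorem mollify_eq_convolution_lsmul (w : G → ℝ) (k : ℕ) :
    mollify μ w k =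
      (mollifierBump G k).normed μ ⋆[ContinuousLinearMap.lsmul ℝ ℝ, μ] w := by
  funext p
  rw [convolution_lsmul_swap, mollify, convolution_mul]
  simp only [smul_eq_mul, mul_comm]

theorem contDiff_mollify (hw : Integrable w μ) (k : ℕ) : ContDiff ℝ 2 (mollify μ w k) :=
  (mollifierBump G k).hasCompactSupport_normed.contDiff_convolution_right (n := 2)
    (ContinuousLinearMap.mul ℝ ℝ) hw.locallyIntegrable (mollifierBump G k).contDiff_normed

theorem ae_tendsto_mollify (hw : Integrable w μ) :
    ∀ᵐ x ∂μ, Tendsto (fun k => mollify μ w k x) atTop (𝓝 (w x)) := by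
  simpa only [mollify_eq_convolution_lsmul] using
    ContDiffBump.ae_convolution_tendsto_right_of_locallyIntegrable (K := 2) (g := w)
      (tendsto_mollifierBump_rOut G) (.of_forall fun k => (mul_div_cancel₀ _ two_ne_zero).ge)
      hw.locallyIntegrable

theorem integrable_mollify (hw : Integrable w μ) (k : ℕ) : Integrable (mollify μ w k) μ := by
  rw [mollify_eq_convolution_lsmul]
  exact (mollifierBump G k).integrable_normed.integrable_convolution _ hw

theorem integral_mollify (hw : Integrable w μ) (k : ℕ) :
    ∫ x, mollify μ w k x ∂μ = ∫ x, w x ∂μ := by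
  rw [mollify_eq_convolution_lsmul,
    integral_convolution _ (mollifierBump G k).integrable_normed hw,
    (mollifierBump G k).integral_normed]
  exact one_smul ℝ _

theorem mollify_sub {w' : G → ℝ} (hw : Integrable w μ) (hw' : Integrable w' μ) (k : ℕ) (x : G) :
    mollify μ (fun y => w y - w' y) k x = mollify μ w k x - mollify μ w' k x := by
  have hint {h : G → ℝ} (hh : Integrable h μ) :
      Integrable (fun q => h q * (mollifierBump G k).normed μ (x - q)) μ :=
    (mollifierBump G k).hasCompactSupport_normed.convolutionExists_right
      (ContinuousLinearMap.mul ℝ ℝ) hh.locallyIntegrable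
      (mollifierBump G k).continuous_normed x
  simp only [mollify, convolution_mul, sub_mul]
  exact integral_sub (hint hw) (hint hw')

theorem tendsto_integral_abs_mollify_sub (hw : Integrable w μ) :
    Tendsto (fun k => ∫ x, |mollify μ w k x - w x| ∂μ) atTop (𝓝 0) := by
  have hnonneg {h : G → ℝ} (hh : Integrable h μ) (hh0 : ∀ x, 0 ≤ h x) :
      Tendsto (fun k => ∫ x, |mollify μ h k x - h x| ∂μ) atTop (𝓝 0) :=
    tendsto_integral_abs_sub_of_nonneg (integrable_mollify hh) hh
      (fun k x => integral_nonneg fun q =>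
        mul_nonneg (hh0 q) ((mollifierBump G k).nonneg_normed _)) hh0
      (integral_mollify hh) (ae_tendsto_mollify hh)
  have hpos := hw.pos_part
  have hneg := hw.neg_part
  have hsplit : w = fun x => max (w x) 0 - max (-w x) 0 := by
    funext x
    exact (max_zero_sub_max_neg_zero_eq_self (w x)).symm
  have hsum := (hnonneg hpos fun x => le_max_right _ _).add
    (hnonneg hneg fun x => le_max_right _ _)
  rw [add_zero] at hsum
  refine squeeze_zero (fun k => integral_nonneg fun x => abs_nonneg _) (fun k => ?_) hsum
  have hpos_k := ((integrable_mollify hpos k).sub hpos).abs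
  have hneg_k := ((integrable_mollify hneg k).sub hneg).abs
  refine (integral_mono ((integrable_mollify hw k).sub hw).abs (hpos_k.add hneg_k)
    fun x => ?_).trans (integral_add hpos_k hneg_k).le
  have hx : mollify μ w k x - w x =
      (mollify μ (fun x => max (w x) 0) k x - max (w x) 0) -
        (mollify μ (fun x => max (-w x) 0) k x - max (-w x) 0) := by
    rw [sub_sub_sub_comm, ← mollify_sub hpos hneg, ← hsplit, ← congr_fun hsplit x]
  exact (congr_arg abs hx).trans_le (abs_sub _ _)

end Mollification

section LocalKato

variable {G ι : Type*} [NormedAddCommGroup G] [NormedSpace ℝ G] [Fintype ι] [MeasurableSpace G]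
  {μ : Measure G} {O : Set G} {v₀ : G} {v : ι → G} {w f ξ : G → ℝ}

/-- The inequality `∂_{v₀} w - ∑ i, ∂_{v i}² w ≤ f` in the sense of distributions on the open
set `O`. The functions `w` and `f` are defined on the whole space. -/
def IsWeakSubsolution (O : Set G) (μ : Measure G) (v₀ : G) (v : ι → G) (w f : G → ℝ) : Prop :=
  ∀ φ : G → ℝ, ContDiff ℝ 2 φ → HasCompactSupport φ → tsupport φ ⊆ O → (∀ p, 0 ≤ φ p) →
    -∫ p, w p * parabolicOp v₀ v φ p ∂μ ≤ ∫ p, φ p * f p ∂μ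

theorem tendsto_integral_mul_of_tendsto_integral_abs_sub {X : Type*} [MeasurableSpace X]
    {m : Measure X} {a b : ℕ → X → ℝ} {a' b' : X → ℝ} {C : ℝ}
    (ha : ∀ k, AEStronglyMeasurable (a k) m) (hC : ∀ k x, ‖a k x‖ ≤ C)
    (halim : ∀ᵐ x ∂m, Tendsto (fun k => a k x) atTop (𝓝 (a' x))) (hb : ∀ k, Integrable (b k) m)
    (hb' : Integrable b' m) (hblim : Tendsto (fun k => ∫ x, |b k x - b' x| ∂m) atTop (𝓝 0)) :
    Tendsto (fun k => ∫ x, a k x * b k x ∂m) atTop (𝓝 (∫ x, a' x * b' x ∂m)) := by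
  have hdiff (k : ℕ) : Integrable (fun x => a k x * (b k x - b' x)) m :=
    ((hb k).sub hb').bdd_mul (ha k) (.of_forall (hC k))
  have hmul (k : ℕ) : Integrable (fun x => a k x * b' x) m := hb'.bdd_mul (ha k) (.of_forall (hC k))
  have hsplit (k : ℕ) : ∫ x, a k x * b k x ∂m =
      (∫ x, a k x * (b k x - b' x) ∂m) + ∫ x, a k x * b' x ∂m := by
    rw [← integral_add (hdiff k) (hmul k)]
    simp only [mul_sub, sub_add_cancel]
  have hlim0 : Tendsto (fun k => ∫ x, a k x * (b k x - b' x) ∂m) atTop (𝓝 0) := by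
    refine squeeze_zero_norm (fun k => ?_) (by simpa using hblim.const_mul C)
    rw [← integral_const_mul]
    refine norm_integral_le_of_norm_le (((hb k).sub hb').abs.const_mul C) (.of_forall fun x => ?_)
    rw [norm_mul]
    exact mul_le_mul_of_nonneg_right (hC k x) (abs_nonneg _)
  have hlim1 : Tendsto (fun k => ∫ x, a k x * b' x ∂m) atTop (𝓝 (∫ x, a' x * b' x ∂m)) := by
    refine tendsto_integral_of_dominated_convergence (fun x => C * |b' x|)
      (fun k => (hmul k).aestronglyMeasurable) (hb'.abs.const_mul C)
      (fun k => .of_forall fun x => ?_) (halim.mono fun x hx => hx.mul_const _)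
    rw [norm_mul]
    exact mul_le_mul_of_nonneg_right (hC k x) (abs_nonneg _)
  simpa only [hsplit, zero_add] using hlim0.add hlim1

namespace IsWeakSubsolution

variable [FiniteDimensional ℝ G] [BorelSpace G] [μ.IsAddHaarMeasure]

theorem neg_mollify_le_parabolicOp_mollify (h : IsWeakSubsolution O μ v₀ v w f)
    (hw : Integrable w μ) {k : ℕ} {p : G}
    (hp : Metric.closedBall p (mollifierBump G k).rOut ⊆ O) :
    -mollify μ f k p ≤ parabolicOp (-v₀) v (mollify μ w k) p := by
  set η := (mollifierBump G k).normed μ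
  have hη : ContDiff ℝ 2 η := (mollifierBump G k).contDiff_normed
  have hball : tsupport (fun q => η (p - q)) ⊆
      Metric.closedBall p (mollifierBump G k).rOut := by
    refine closure_minimal (fun q hq => ?_) Metric.isClosed_closedBall
    have hpq : p - q ∈ Function.support η := hq
    rw [(mollifierBump G k).support_normed_eq, mem_ball_zero_iff] at hpq
    rw [Metric.mem_closedBall, dist_comm, dist_eq_norm]
    exact hpq.le
  have htest := h (fun q => η (p - q)) (hη.comp (contDiff_const.sub contDiff_id))
    (.of_support_subset_isCompact (isCompact_closedBall p _) ((subset_tsupport _).trans hball))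
    (hball.trans hp) fun q => (mollifierBump G k).nonneg_normed _
  simp only [parabolicOp_comp_sub_left] at htest
  rw [mollify, mollify, parabolicOp_convolution hw hη (mollifierBump G k).hasCompactSupport_normed,
    convolution_mul, convolution_mul]
  simp only [mul_comm (f _)]
  linarith

theorem eventually_mollify (h : IsWeakSubsolution O μ v₀ v w f) (hw : Integrable w μ)
    (hf : Integrable f μ) (hO : IsOpen O) (hξ : ContDiff ℝ 2 ξ) (hc : HasCompactSupport ξ)
    (hs : tsupport ξ ⊆ O) (hξ0 : ∀ p, 0 ≤ ξ p) {ε : ℝ} (hε : 0 < ε) :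
    ∀ᶠ k in atTop, -∫ p, parabolicOp v₀ v ξ p * smoothRamp ε (mollify μ w k p) ∂μ ≤
      ∫ p, ξ p * smoothStep ε (mollify μ w k p) * mollify μ f k p ∂μ := by
  obtain ⟨δ, hδ, hδO⟩ := hc.exists_cthickening_subset_open hO hs
  filter_upwards [(tendsto_mollifierBump_rOut G).eventually_le_const hδ] with k hk
  have hcont := (contDiff_mollify hw k).continuous
  have hramp : ContDiff ℝ 2 fun p => smoothRamp ε (mollify μ w k p) :=
    (hasC2Deriv_smoothRamp ε).contDiff.comp (contDiff_mollify hw k)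
  simp only [mul_comm (parabolicOp v₀ v ξ _)]
  rw [integral_mul_parabolicOp hramp hξ hc, ← integral_neg]
  refine integral_mono
    (((continuous_parabolicOp hramp).mul hξ.continuous).integrable_of_hasCompactSupport
      hc.mul_left).neg
    (((hξ.continuous.mul ((continuous_smoothStep ε).comp hcont)).mul
      (contDiff_mollify hf k).continuous).integrable_of_hasCompactSupport
        (hc.mul_right.mul_right)) fun p => ?_
  by_cases hp : p ∈ tsupport ξ
  · have hball : Metric.closedBall p (mollifierBump G k).rOut ⊆ O := fun q hq =>
      hδO (Metric.mem_cthickening_of_dist_le q p δ _ hp (hq.trans hk))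
    have hchain := mul_parabolicOp_le_parabolicOp_comp (v₀ := -v₀) (v := v)
      (hasC2Deriv_smoothRamp ε) (deriv_smoothStep_nonneg hε) (contDiff_mollify hw k) p
    have hsub := mul_le_mul_of_nonneg_left (h.neg_mollify_le_parabolicOp_mollify hw hball)
      (smoothStep_nonneg ε (mollify μ w k p))
    calc -(parabolicOp (-v₀) v (fun p => smoothRamp ε (mollify μ w k p)) p * ξ p)
        = ξ p * -parabolicOp (-v₀) v (fun p => smoothRamp ε (mollify μ w k p)) p := by ring
      _ ≤ ξ p * (smoothStep ε (mollify μ w k p) * mollify μ f k p) :=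
        mul_le_mul_of_nonneg_left (by linarith) (hξ0 p)
      _ = ξ p * smoothStep ε (mollify μ w k p) * mollify μ f k p := (mul_assoc _ _ _).symm
  · simp [image_eq_zero_of_notMem_tsupport hp]

theorem smoothRamp_comp (h : IsWeakSubsolution O μ v₀ v w f) (hw : Integrable w μ)
    (hf : Integrable f μ) (hO : IsOpen O) {ε : ℝ} (hε : 0 < ε) :
    IsWeakSubsolution O μ v₀ v (fun p => smoothRamp ε (w p))
      fun p => smoothStep ε (w p) * f p := by
  intro ξ hξ hc hs hξ0
  obtain ⟨C, hC⟩ := hξ.continuous.bounded_above_of_compact_support hc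
  have hL : Continuous (parabolicOp v₀ v ξ) := continuous_parabolicOp hξ
  obtain ⟨C', hC'⟩ :=
    hL.bounded_above_of_compact_support (hasCompactSupport_parabolicOp hc)
  have hint {z : G → ℝ} (hz : Integrable z μ) : Integrable (fun p => smoothRamp ε (z p)) μ :=
    hz.abs.mono' ((continuous_smoothRamp ε).comp_aestronglyMeasurable hz.1)
      (.of_forall fun p => abs_smoothRamp_le hε _)
  have hramp_lim : Tendsto (fun k => ∫ p, |smoothRamp ε (mollify μ w k p) -
      smoothRamp ε (w p)| ∂μ) atTop (𝓝 0) :=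
    squeeze_zero (fun k => integral_nonneg fun p => abs_nonneg _) (fun k =>
      integral_mono ((hint (integrable_mollify hw k)).sub (hint hw)).abs
        ((integrable_mollify hw k).sub hw).abs fun p => abs_smoothRamp_sub_le ε _ _)
      (tendsto_integral_abs_mollify_sub hw)
  have hleft := tendsto_integral_mul_of_tendsto_integral_abs_sub
    (fun _ => hL.aestronglyMeasurable) (fun _ => hC') (.of_forall fun _ => tendsto_const_nhds)
    (fun k => hint (integrable_mollify hw k)) (hint hw) hramp_lim
  have hright := tendsto_integral_mul_of_tendsto_integral_abs_sub
    (a := fun k p => ξ p * smoothStep ε (mollify μ w k p))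
    (fun k => (hξ.continuous.mul ((continuous_smoothStep ε).comp
      (contDiff_mollify hw k).continuous)).aestronglyMeasurable)
    (fun k p => (norm_mul _ _).trans_le ((mul_le_of_le_one_right (norm_nonneg _)
      (abs_smoothStep_le_one ε _)).trans (hC p)))
    ((ae_tendsto_mollify hw).mono fun p hp =>
      (((continuous_smoothStep ε).tendsto _).comp hp).const_mul (ξ p))
    (integrable_mollify hf) hf (tendsto_integral_abs_mollify_sub hf)
  simp only [mul_comm (smoothRamp ε _), ← mul_assoc]
  exact le_of_tendsto_of_tendsto hleft.neg hright (h.eventually_mollify hw hf hO hξ hc hs hξ0 hε)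

theorem max_zero (h : IsWeakSubsolution O μ v₀ v w f) (hw : Integrable w μ)
    (hf : Integrable f μ) (hO : IsOpen O) :
    IsWeakSubsolution O μ v₀ v (fun p => max (w p) 0) ({p | 0 < w p}.indicator f) := by
  intro ξ hξ hc hs hξ0
  obtain ⟨C, hC⟩ := hξ.continuous.bounded_above_of_compact_support hc
  have hL : Continuous (parabolicOp v₀ v ξ) := continuous_parabolicOp hξ
  obtain ⟨C', hC'⟩ :=
    hL.bounded_above_of_compact_support (hasCompactSupport_parabolicOp hc)
  have hright := tendsto_integral_smoothStep_mul hw.1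
    (hf.bdd_mul hξ.continuous.aestronglyMeasurable (.of_forall hC))
  have hleft : Tendsto (fun n : ℕ => ∫ p, smoothRamp (1 / (n + 1)) (w p) * parabolicOp v₀ v ξ p ∂μ)
      atTop (𝓝 (∫ p, max (w p) 0 * parabolicOp v₀ v ξ p ∂μ)) := by
    refine tendsto_integral_of_dominated_convergence (fun p => |w p| * C')
      (fun _ => ((continuous_smoothRamp _).comp_aestronglyMeasurable hw.1).mul
        hL.aestronglyMeasurable) (hw.abs.mul_const C') (fun n => .of_forall fun p => ?_)
      (.of_forall fun p => (tendsto_smoothRamp (w p)).mul_const _)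
    rw [norm_mul]
    exact mul_le_mul (abs_smoothRamp_le Nat.one_div_pos_of_nat _) (hC' p) (norm_nonneg _)
      (abs_nonneg _)
  refine (le_of_tendsto_of_tendsto' hleft.neg hright fun n => ?_).trans_eq
    (integral_congr_ae (.of_forall fun p => ?_))
  · simpa only [mul_left_comm (ξ _)] using
      h.smoothRamp_comp hw hf hO Nat.one_div_pos_of_nat ξ hξ hc hs hξ0
  · by_cases hp : 0 < w p <;> simp [hp]

theorem max_zero_of_nonneg (h : IsWeakSubsolution O μ v₀ v w f) (hw : Integrable w μ)
    (hf : Integrable f μ) (hO : IsOpen O) (hwf : ∀ p, w p ≤ 0 → 0 ≤ f p) :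
    IsWeakSubsolution O μ v₀ v (fun p => max (w p) 0) f := by
  intro ξ hξ hc hs hξ0
  obtain ⟨C, hC⟩ := hξ.continuous.bounded_above_of_compact_support hc
  have hint {k : G → ℝ} (hk : Integrable k μ) :=
    hk.bdd_mul hξ.continuous.aestronglyMeasurable (.of_forall hC)
  have hpos : NullMeasurableSet {p | 0 < w p} μ :=
    nullMeasurableSet_lt aemeasurable_const hw.1.aemeasurable
  refine (h.max_zero hw hf hO ξ hξ hc hs hξ0).trans
    (integral_mono (hint (hf.indicator₀ hpos)) (hint hf) fun p =>
      mul_le_mul_of_nonneg_left ?_ (hξ0 p))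
  by_cases hp : 0 < w p
  · simp [hp]
  · simpa [hp] using hwf p (not_lt.1 hp)

end IsWeakSubsolution

end LocalKato

section SpaceTime

variable {N : ℕ} {Φ : Euc N × ℝ → ℝ}

/-- The time direction of `ℝ^N × ℝ`. -/
def timeDir (N : ℕ) : Euc N × ℝ := (0, 1)

/-- The coordinate directions of the space factor of `ℝ^N × ℝ`. -/
def spaceDir (i : Fin N) : Euc N × ℝ := (EuclideanSpace.single i 1, 0)

theorem c21_of_contDiff (h : ContDiff ℝ 2 Φ) : C21 fun x t => Φ (x, t) := by
  have hx : ContDiff ℝ 1 fun p : Euc N × ℝ => fderiv ℝ (fun y => Φ (y, p.2)) p.1 :=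
    ContDiff.fderiv (m := 2) (f := fun (p : Euc N × ℝ) y => Φ (y, p.2)) (by fun_prop)
      contDiff_fst le_rfl
  have ht : ContDiff ℝ 1 fun p : Euc N × ℝ => fderiv ℝ (fun t => Φ (p.1, t)) p.2 :=
    ContDiff.fderiv (m := 2) (f := fun (p : Euc N × ℝ) t => Φ (p.1, t)) (by fun_prop)
      contDiff_snd le_rfl
  have hxx : ContDiff ℝ 0
      fun p : Euc N × ℝ => fderiv ℝ (fun y => fderiv ℝ (fun z => Φ (z, p.2)) y) p.1 :=
    ContDiff.fderiv (m := 1)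
      (f := fun (p : Euc N × ℝ) y => fderiv ℝ (fun z => Φ (z, p.2)) y)
      (hx.comp (contDiff_snd.prodMk (contDiff_snd.comp contDiff_fst))) contDiff_fst le_rfl
  refine ⟨h.continuous, fun x t => ?_, ht.continuous.clm_apply continuous_const, fun t x => ?_,
    hx.continuous, fun t x => ?_, hxx.continuous⟩
  · exact (h.comp (contDiff_prodMk_right x)).differentiable two_ne_zero t
  · exact (h.comp (contDiff_prodMk_left t)).differentiable two_ne_zero x
  · exact (hx.comp (contDiff_prodMk_left t)).differentiable one_ne_zero x

theorem fderiv_slice (h : Differentiable ℝ Φ) (x : Euc N) (t : ℝ) (v : Euc N) :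
    fderiv ℝ (fun y => Φ (y, t)) x v = dirDeriv (v, 0) Φ (x, t) := by
  have hslice : HasFDerivAt (fun y => Φ (y, t)) _ x :=
    (h (x, t)).hasFDerivAt.comp x (hasFDerivAt_prodMk_left x t)
  rw [hslice.fderiv]
  rfl

theorem heatAdj_eq_parabolicOp (h : ContDiff ℝ 2 Φ) (p : Euc N × ℝ) :
    heatAdj (fun x t => Φ (x, t)) p = parabolicOp (timeDir N) spaceDir Φ p := by
  have hΦ : Differentiable ℝ Φ := h.differentiable two_ne_zero
  have htime : HasDerivAt (fun t => Φ (p.1, t)) (dirDeriv (timeDir N) Φ p) p.2 :=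
    (hΦ p).hasFDerivAt.comp_hasDerivAt p.2 ((hasDerivAt_const p.2 p.1).prodMk (hasDerivAt_id p.2))
  rw [heatAdj, htime.deriv, parabolicOp, lap]
  congr 1
  refine Finset.sum_congr rfl fun i _ => ?_
  simp only [fderiv_slice hΦ]
  exact fderiv_slice ((contDiff_one_dirDeriv h _).differentiable one_ne_zero) _ _ _

end SpaceTime

section Comparison

variable {N : ℕ} {Ω L : Set (Euc N)} {T : ℝ} {μ ν : Measure (Euc N)}
  {u U f F ξ : Euc N × ℝ → ℝ}

theorem testZero_of_tsupport_subset (hΩo : IsOpen Ω) (hξ : ContDiff ℝ 2 ξ)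
    (hs : tsupport ξ ⊆ Ω ×ˢ Iio T) : TestZero Ω T fun x t => ξ (x, t) := by
  have hzero (p) (hp : p ∉ Ω ×ˢ Iio T) : ξ p = 0 :=
    image_eq_zero_of_notMem_tsupport fun h => hp (hs h)
  refine ⟨c21_of_contDiff hξ, fun x hx t _ => hzero _ fun h => ?_,
    fun x _ => hzero _ fun h => lt_irrefl T h.2⟩
  rw [hΩo.frontier_eq] at hx
  exact hx.2 h.1

theorem integrable_slice_of_tsupport_subset (hμL : μ L ≠ ⊤)
    (hξ : Continuous ξ) (hc : HasCompactSupport ξ) (hs : tsupport ξ ⊆ L ×ˢ univ) (t : ℝ) :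
    Integrable (fun x => ξ (x, t)) μ := by
  obtain ⟨C, hC⟩ := hξ.bounded_above_of_compact_support hc
  refine IntegrableOn.integrable_of_forall_notMem_eq_zero (s := L) ?_ fun x hx =>
    image_eq_zero_of_notMem_tsupport fun h => hx (hs h).1
  exact Measure.integrableOn_of_bounded hμL
    (hξ.comp (Continuous.prodMk_left t)).aestronglyMeasurable (.of_forall fun x => hC _)

theorem integral_heatIntegrand_eq (hΩo : IsOpen Ω) (hL : MeasurableSet L) (hLΩ : L ⊆ Ω)
    (hu : IntegrableOn u (QT Ω T)) (hf : IntegrableOn f (QT L T)) (hξ : ContDiff ℝ 2 ξ)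
    (hc : HasCompactSupport ξ) (hs : tsupport ξ ⊆ L ×ˢ univ) :
    ∫ p in QT Ω T, heatIntegrand u f (fun x t => ξ (x, t)) p =
      -(∫ p, (QT Ω T).indicator u p * parabolicOp (timeDir N) spaceDir ξ p) +
        ∫ p, ξ p * (QT L T).indicator f p := by
  obtain ⟨C, hC⟩ := hξ.continuous.bounded_above_of_compact_support hc
  have hP := continuous_parabolicOp (v₀ := timeDir N) (v := spaceDir) hξ
  obtain ⟨C', hC'⟩ := hP.bounded_above_of_compact_support (hasCompactSupport_parabolicOp hc)
  have hQ := measurableSet_QT hΩo T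
  have hu' := (hu.integrable_indicator hQ).mul_bdd hP.aestronglyMeasurable (.of_forall hC')
  have hf' := (hf.integrable_indicator (hL.prod measurableSet_Ioo)).bdd_mul
    hξ.continuous.aestronglyMeasurable (.of_forall hC)
  rw [← integral_indicator hQ, ← integral_neg]
  refine Eq.trans ?_ (integral_add hu'.neg hf')
  refine integral_congr_ae (.of_forall fun p => ?_)
  by_cases hpΩ : p ∈ QT Ω T
  · have hξf : ξ p * (QT L T).indicator f p = ξ p * f p := by
      by_cases hpL : p ∈ QT L T
      · rw [indicator_of_mem hpL]
      · rw [image_eq_zero_of_notMem_tsupport fun h => hpL ⟨(hs h).1, hpΩ.2⟩, zero_mul, zero_mul]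
    simp only [indicator_of_mem hpΩ, hξf, heatIntegrand, heatAdj_eq_parabolicOp hξ,
      neg_mul, Prod.mk.eta]
  · have hpL : p ∉ QT L T := fun h => hpΩ ⟨hLΩ h.1, h.2⟩
    simp [hpΩ, hpL]

theorem WeakHeatEq.isWeakSubsolution_sub (h : WeakHeatEq Ω T ν u f) (H : WeakHeatEq Ω T μ U F)
    (hνμ : ν ≤ μ) (hΩo : IsOpen Ω) (hL : MeasurableSet L) (hLΩ : L ⊆ Ω) (hμL : μ L ≠ ⊤)
    (hu : IntegrableOn u (QT Ω T)) (hU : IntegrableOn U (QT Ω T))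
    (hf : IntegrableOn f (QT L T)) (hF : IntegrableOn F (QT L T)) :
    IsWeakSubsolution (interior L ×ˢ Iio T) volume (timeDir N) spaceDir
      (fun p => (QT Ω T).indicator u p - (QT Ω T).indicator U p)
      (fun p => (QT L T).indicator F p - (QT L T).indicator f p) := by
  intro ξ hξ hc hs hξ0
  obtain ⟨C, hC⟩ := hξ.continuous.bounded_above_of_compact_support hc
  have hP := continuous_parabolicOp (v₀ := timeDir N) (v := spaceDir) hξ
  obtain ⟨C', hC'⟩ := hP.bounded_above_of_compact_support (hasCompactSupport_parabolicOp hc)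
  have hsL : tsupport ξ ⊆ L ×ˢ univ := hs.trans (prod_mono interior_subset (subset_univ _))
  have hint {k : Euc N × ℝ → ℝ} (hk : IntegrableOn k (QT L T)) :=
    (hk.integrable_indicator (hL.prod measurableSet_Ioo)).bdd_mul
      hξ.continuous.aestronglyMeasurable (.of_forall hC)
  have hint' {k : Euc N × ℝ → ℝ} (hk : IntegrableOn k (QT Ω T)) :=
    (hk.integrable_indicator (measurableSet_QT hΩo T)).mul_bdd hP.aestronglyMeasurable
      (.of_forall hC')
  have hζ := testZero_of_tsupport_subset hΩo hξ (hs.trans (prod_mono (interior_subset.trans hLΩ)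
    subset_rfl))
  have hmono := integral_mono_measure hνμ (.of_forall fun x => hξ0 (x, 0))
    (integrable_slice_of_tsupport_subset hμL hξ.continuous hc hsL 0)
  rw [← h _ hζ, ← H _ hζ, integral_heatIntegrand_eq hΩo hL hLΩ hu hf hξ hc hsL,
    integral_heatIntegrand_eq hΩo hL hLΩ hU hF hξ hc hsL] at hmono
  simp only [sub_mul, mul_sub]
  rw [integral_sub (hint' hu) (hint' hU), integral_sub (hint hF) (hint hf)]
  linarith

instance instIsAddHaarMeasureVolumeSpaceTime :
    (volume : Measure (Euc N × ℝ)).IsAddHaarMeasure := by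
  rw [Measure.volume_eq_prod]
  infer_instance

theorem WeakHeatEq.integral_mul_le (h : WeakHeatEq Ω T ν u f) (H : WeakHeatEq Ω T μ U F)
    (hνμ : ν ≤ μ) (hΩo : IsOpen Ω) (hL : MeasurableSet L) (hLΩ : L ⊆ Ω) (hμL : μ L ≠ ⊤)
    (hu : IntegrableOn u (QT Ω T)) (hU : IntegrableOn U (QT Ω T))
    (hf : IntegrableOn f (QT L T)) (hF : IntegrableOn F (QT L T))
    (hfF : ∀ p, u p ≤ U p → f p ≤ F p) (hξ : ContDiff ℝ 2 ξ) (hc : HasCompactSupport ξ)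
    (hs : tsupport ξ ⊆ interior L ×ˢ Iio T) (hξ0 : ∀ p, 0 ≤ ξ p) :
    ∫ p in QT L T, ξ p * f p ≤ (∫ p in QT L T, ξ p * F p) +
      ∫ p in QT Ω T, max (u p - U p) 0 * parabolicOp (timeDir N) spaceDir ξ p := by
  obtain ⟨C, hC⟩ := hξ.continuous.bounded_above_of_compact_support hc
  have hQ := measurableSet_QT hΩo T
  have hQL : MeasurableSet (QT L T) := hL.prod measurableSet_Ioo
  have hint {k : Euc N × ℝ → ℝ} (hk : IntegrableOn k (QT L T)) :=
    hk.bdd_mul hξ.continuous.aestronglyMeasurable (.of_forall hC)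
  have hkato := (h.isWeakSubsolution_sub H hνμ hΩo hL hLΩ hμL hu hU hf hF).max_zero_of_nonneg
    ((hu.integrable_indicator hQ).sub (hU.integrable_indicator hQ))
    ((hF.integrable_indicator hQL).sub (hf.integrable_indicator hQL))
    (isOpen_interior.prod isOpen_Iio) ?_ ξ hξ hc hs hξ0
  · have hleft : (fun p => max ((QT Ω T).indicator u p - (QT Ω T).indicator U p) 0 *
        parabolicOp (timeDir N) spaceDir ξ p) = (QT Ω T).indicator fun p =>
          max (u p - U p) 0 * parabolicOp (timeDir N) spaceDir ξ p := by
      ext p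
      by_cases hp : p ∈ QT Ω T <;> simp [hp]
    have hright : (fun p => ξ p * ((QT L T).indicator F p - (QT L T).indicator f p)) =
        (QT L T).indicator fun p => ξ p * F p - ξ p * f p := by
      ext p
      by_cases hp : p ∈ QT L T <;> simp [hp, mul_sub]
    rw [hleft, hright, integral_indicator hQ, integral_indicator hQL,
      integral_sub (hint hF) (hint hf)] at hkato
    linarith
  · intro p hp
    by_cases hpL : p ∈ QT L T
    · have hpΩ : p ∈ QT Ω T := ⟨hLΩ hpL.1, hpL.2⟩
      simpa [hpL] using hfF p (by simpa [hpΩ] using hp)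
    · simp [hpL]

end Comparison

section UniformIntegrability

variable {α : Type*} {m : MeasurableSpace α} {μ : Measure α} [IsFiniteMeasure μ] {f : ℕ → α → ℝ}

theorem uniformIntegrable_of_setIntegral_le (hf : ∀ n, Integrable (f n) μ)
    (hf0 : ∀ n x, 0 ≤ f n x)
    (h : ∀ ε > 0, ∃ A, MeasurableSet A ∧ (∀ n, ∫ x in A, f n x ∂μ ≤ ε) ∧
      ∃ M, ∀ᵐ x ∂μ, x ∉ A → ∀ n, f n x ≤ M) : UniformIntegrable f 1 μ := by
  refine uniformIntegrable_of le_rfl ENNReal.one_ne_top (fun n => (hf n).aestronglyMeasurable)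
    fun ε hε => ?_
  obtain ⟨A, hA, hAε, M, hM⟩ := h ε hε
  refine ⟨M.toNNReal + 1, fun n => ?_⟩
  calc eLpNorm ({x | M.toNNReal + 1 ≤ ‖f n x‖₊}.indicator (f n)) 1 μ
      ≤ eLpNorm (A.indicator (f n)) 1 μ := eLpNorm_mono_ae (hM.mono fun x hx => ?_)
    _ = ENNReal.ofReal (∫ x in A, f n x ∂μ) := by
      rw [eLpNorm_indicator_eq_eLpNorm_restrict hA, eLpNorm_one_eq_lintegral_enorm,
        ← ofReal_integral_norm_eq_lintegral_enorm (hf n).integrableOn]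
      simp only [Real.norm_of_nonneg (hf0 n _)]
    _ ≤ ENNReal.ofReal ε := ENNReal.ofReal_le_ofReal (hAε n)
  by_cases hxA : x ∈ A
  · rw [indicator_of_mem hxA]
    exact norm_indicator_le_norm_self _ _
  · have hsmall : ¬ M.toNNReal + 1 ≤ ‖f n x‖₊ := by
      rw [← NNReal.coe_le_coe, coe_nnnorm, Real.norm_of_nonneg (hf0 n x), NNReal.coe_add,
        NNReal.coe_one]
      linarith [hx hxA n, Real.le_coe_toNNReal M]
    simp [hsmall]

theorem tendsto_integral_abs_sub_of_uniformIntegrable {g : α → ℝ}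
    (hf : UniformIntegrable f 1 μ) (hfg : ∀ᵐ x ∂μ, Tendsto (fun n => f n x) atTop (𝓝 (g x))) :
    Tendsto (fun n => ∫ x, |f n x - g x| ∂μ) atTop (𝓝 0) := by
  have hLp := tendsto_Lp_finite_of_tendsto_ae le_rfl ENNReal.one_ne_top hf.1
    (hf.memLp_of_ae_tendsto hfg) hf.unifIntegrable hfg
  refine ((ENNReal.tendsto_toReal ENNReal.zero_ne_top).comp hLp).congr fun n => ?_
  rw [Function.comp_apply, eLpNorm_one_eq_lintegral_enorm,
    ← integral_norm_eq_lintegral_enorm ((hf.1 n).sub (hf.integrable_of_ae_tendsto hfg).1)]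
  rfl

end UniformIntegrability

section InitialLayer

variable {N : ℕ} {Ω K L : Set (Euc N)} {T τ : ℝ}

theorem exists_contDiff_cutoff_deriv_nonpos (hτ : 0 < τ) :
    ∃ χ : ℝ → ℝ, ContDiff ℝ 2 χ ∧ HasCompactSupport χ ∧ Function.support χ ⊆ Iio (2 * τ) ∧
      (∀ t, χ t ∈ Icc 0 1) ∧ (∀ t ∈ Icc 0 τ, χ t = 1) ∧ ∀ t > 0, deriv χ t ≤ 0 := by
  let χ : ℝ → ℝ := fun t => Real.smoothTransition (t + 2) * Real.smoothTransition (2 - t / τ)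
  have hsupp : Function.support χ ⊆ Ioo (-2) (2 * τ) := fun t ht => by
    obtain ⟨hleft, hright⟩ := mul_ne_zero_iff.1 (Function.mem_support.1 ht)
    rw [Ne, Real.smoothTransition.zero_iff_nonpos, not_le] at hleft hright
    exact ⟨by linarith, (div_lt_iff₀ hτ).1 (by linarith)⟩
  have hχ (t : ℝ) (ht : 0 ≤ t) : χ t = Real.smoothTransition (2 - t / τ) := by
    simp only [χ]
    rw [Real.smoothTransition.one_of_one_le (by linarith : 1 ≤ t + 2), one_mul]
  refine ⟨χ, ?_, .of_support_subset_isCompact isCompact_Icc (hsupp.trans Ioo_subset_Icc_self),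
    fun t ht => (hsupp ht).2, fun t => ⟨?_, ?_⟩, fun t ht => ?_, fun t ht => ?_⟩
  · exact (Real.smoothTransition.contDiff.comp (contDiff_id.add contDiff_const)).mul
      (Real.smoothTransition.contDiff.comp (contDiff_const.sub (contDiff_id.div_const _)))
  · exact mul_nonneg (Real.smoothTransition.nonneg _) (Real.smoothTransition.nonneg _)
  · exact mul_le_one₀ (Real.smoothTransition.le_one _) (Real.smoothTransition.nonneg _)
      (Real.smoothTransition.le_one _)
  · have : t / τ ≤ 1 := (div_le_one hτ).2 ht.2
    rw [hχ t ht.1, Real.smoothTransition.one_of_one_le (by linarith)]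
  · have hev : χ =ᶠ[𝓝 t] fun s => Real.smoothTransition (2 - s / τ) :=
      (eventually_ge_nhds ht).mono hχ
    rw [hev.deriv_eq]
    exact Antitone.deriv_nonpos fun a b hab => Real.smoothTransition.monotone
      (sub_le_sub_left (div_le_div_of_nonneg_right hab hτ.le) 2)

theorem C21.heatAdj_time_mul {ζ : Euc N → ℝ → ℝ} (h : C21 ζ) {χ : ℝ → ℝ} (hχ : ContDiff ℝ 1 χ)
    (p : Euc N × ℝ) : heatAdj (fun x t => χ t * ζ x t) p =
      deriv χ p.2 * ζ p.1 p.2 + χ p.2 * heatAdj ζ p := by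
  obtain ⟨a, b, c, h⟩ := h.exists_hasC21Deriv
  rw [(h.time_mul (fun s => (hχ.differentiable one_ne_zero s).hasDerivAt)
    (hχ.continuous_deriv le_rfl)).heatAdj_eq, h.heatAdj_eq, bilinTrace_smul]
  ring

theorem parabolicOp_time_mul {θ : Euc N → ℝ} (hθ : ContDiff ℝ 2 θ) {χ : ℝ → ℝ}
    (hχ : ContDiff ℝ 2 χ) (p : Euc N × ℝ) :
    parabolicOp (timeDir N) spaceDir (fun q : Euc N × ℝ => χ q.2 * θ q.1) p =
      deriv χ p.2 * θ p.1 + χ p.2 * lap θ p.1 := by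
  have hθ' : C21 fun (x : Euc N) (_ : ℝ) => θ x := c21_of_contDiff (hθ.comp contDiff_fst)
  rw [← heatAdj_eq_parabolicOp (by fun_prop), hθ'.heatAdj_time_mul (hχ.of_le one_le_two)]
  simp [heatAdj]

theorem parabolicOp_time_mul_le {θ : Euc N → ℝ} (hθ : ContDiff ℝ 2 θ) {χ : ℝ → ℝ}
    (hχ : ContDiff ℝ 2 χ) {C : ℝ} (hC0 : 0 ≤ C) {p : Euc N × ℝ} (hC : lap θ p.1 ≤ C)
    (hθ0 : 0 ≤ θ p.1) (hχI : χ p.2 ∈ Icc 0 1) (hχ' : deriv χ p.2 ≤ 0) :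
    parabolicOp (timeDir N) spaceDir (fun q : Euc N × ℝ => χ q.2 * θ q.1) p ≤ C :=
  calc parabolicOp (timeDir N) spaceDir (fun q : Euc N × ℝ => χ q.2 * θ q.1) p
      = deriv χ p.2 * θ p.1 + χ p.2 * lap θ p.1 := parabolicOp_time_mul hθ hχ p
    _ ≤ 0 + χ p.2 * C := add_le_add (mul_nonpos_of_nonpos_of_nonneg hχ' hθ0)
        (mul_le_mul_of_nonneg_left hC hχI.1)
    _ ≤ C := (zero_add _).trans_le (mul_le_of_le_one_left hC0 hχI.2)

theorem exists_lap_le {θ : Euc N → ℝ} (hθ : ContDiff ℝ 2 θ) (hc : HasCompactSupport θ) :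
    ∃ C, 0 ≤ C ∧ ∀ x, lap θ x ≤ C := by
  have hlap : lap θ = fun x => heatAdj (fun y _ => θ y) (x, 0) := by
    ext x
    simp [heatAdj]
  have hcont : Continuous (lap θ) := by
    rw [hlap]
    exact (c21_of_contDiff (Φ := fun p : Euc N × ℝ => θ p.1) (hθ.comp contDiff_fst)
      ).continuous_heatAdj.comp (Continuous.prodMk_left 0)
  have hsupp : HasCompactSupport (lap θ) := HasCompactSupport.intro hc fun x hx => by
    rw [hlap]
    exact heatAdj_eq_zero
      (continuous_fst.continuousAt.eventually (notMem_tsupport_iff_eventuallyEq.1 hx))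
  obtain ⟨C, hC⟩ := hcont.bounded_above_of_compact_support hsupp
  exact ⟨C, (norm_nonneg _).trans (hC 0), fun x => (le_abs_self _).trans (hC x)⟩

theorem tendsto_setIntegral_QT {h : Euc N × ℝ → ℝ} (hL : volume L ≠ ⊤) (hLm : MeasurableSet L)
    (hT : 0 < T) (hh : IntegrableOn h (QT L T)) :
    Tendsto (fun s => ∫ p in QT L s, h p) (𝓝[>] 0) (𝓝 0) := by
  have hvol : Tendsto (fun s => volume (QT L s)) (𝓝[>] 0) (𝓝 0) := by
    have hlim : Tendsto (fun s : ℝ => volume L * ENNReal.ofReal s) (𝓝[>] 0) (𝓝 0) := by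
      simpa using ENNReal.Tendsto.const_mul
        ((ENNReal.continuous_ofReal.tendsto 0).mono_left nhdsWithin_le_nhds) (.inr hL)
    refine hlim.congr fun s => ?_
    rw [QT, Measure.volume_eq_prod, Measure.prod_prod, Real.volume_Ioo, sub_zero]
  refine ((hh.integrable_indicator (hLm.prod measurableSet_Ioo)
    ).tendsto_setIntegral_nhds_zero hvol).congr' ?_
  filter_upwards [Ioc_mem_nhdsGT hT] with s hs
  exact setIntegral_congr_fun (hLm.prod measurableSet_Ioo) fun p hp =>
    indicator_of_mem (s := QT L T) ⟨hp.1, hp.2.1, hp.2.2.trans_le hs.2⟩ _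

variable {μ ν : Measure (Euc N)} {u U f F : Euc N × ℝ → ℝ}

theorem QT_mono {S S' : Set (Euc N)} {s s' : ℝ} (hS : S ⊆ S') (hs : s ≤ s') :
    QT S s ⊆ QT S' s' :=
  prod_mono hS (Ioo_subset_Ioo_right hs)

theorem tsupport_time_mul_subset {χ : ℝ → ℝ} {θ : Euc N → ℝ} :
    tsupport (fun q : Euc N × ℝ => χ q.2 * θ q.1) ⊆ tsupport θ ×ˢ tsupport χ := fun _ hp =>
  ⟨tsupport_comp_subset_preimage θ continuous_fst (tsupport_mul_subset_right hp),
    tsupport_comp_subset_preimage χ continuous_snd (tsupport_mul_subset_left hp)⟩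

theorem setIntegral_QT_le_of_cutoff {ξ : Euc N × ℝ → ℝ} (hK : MeasurableSet K) (hKL : K ⊆ L)
    (hτT : τ ≤ T) (hf : IntegrableOn f (QT L T)) (hf0 : ∀ p, 0 ≤ f p) (hξ : Continuous ξ)
    (hξI : ∀ p, ξ p ∈ Icc 0 1) (hξ1 : ∀ p ∈ QT K τ, ξ p = 1) :
    ∫ p in QT K τ, f p ≤ ∫ p in QT L T, ξ p * f p := by
  have hξ_norm (p) : ‖ξ p‖ ≤ 1 := by
    rw [Real.norm_of_nonneg (hξI p).1]
    exact (hξI p).2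
  calc ∫ p in QT K τ, f p
      = ∫ p in QT K τ, ξ p * f p := setIntegral_congr_fun (hK.prod measurableSet_Ioo)
        fun p hp => by rw [hξ1 p hp, one_mul]
    _ ≤ ∫ p in QT L T, ξ p * f p := setIntegral_mono_set
        (hf.bdd_mul hξ.aestronglyMeasurable (.of_forall hξ_norm))
        (.of_forall fun p => mul_nonneg (hξI p).1 (hf0 p)) (QT_mono hKL hτT).eventuallyLE

theorem setIntegral_cutoff_mul_le {ξ : Euc N × ℝ → ℝ} (hL : MeasurableSet L) (hτT : τ ≤ T)
    (hF : IntegrableOn F (QT L T)) (hF0 : ∀ p, 0 ≤ F p) (hξ : Continuous ξ)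
    (hξI : ∀ p, ξ p ∈ Icc 0 1) (hξ0 : ∀ p, τ ≤ p.2 → ξ p = 0) :
    ∫ p in QT L T, ξ p * F p ≤ ∫ p in QT L τ, F p := by
  have hQ := QT_mono (subset_refl L) hτT
  have hm : MeasurableSet (QT L T) := hL.prod measurableSet_Ioo
  have hξ_norm (p) : ‖ξ p‖ ≤ 1 := by
    rw [Real.norm_of_nonneg (hξI p).1]
    exact (hξI p).2
  rw [setIntegral_eq_of_subset_of_forall_sdiff_eq_zero hm hQ fun p hp => by
    rw [hξ0 p (not_lt.1 fun h => hp.2 ⟨hp.1.1, hp.1.2.1, h⟩), zero_mul]]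
  exact integral_mono ((hF.mono_set hQ).bdd_mul hξ.aestronglyMeasurable (.of_forall hξ_norm))
    (hF.mono_set hQ) fun p => mul_le_of_le_one_left (hF0 p) (hξI p).2

theorem setIntegral_mul_le_of_nonpos_of_le {w P : Euc N × ℝ → ℝ} {C : ℝ} (hL : MeasurableSet L)
    (hτT : τ ≤ T) (hw : IntegrableOn w (QT L T)) (hw0 : ∀ p, 0 ≤ w p)
    (hwP : IntegrableOn (fun p => w p * P p) (QT L T)) (hP : ∀ p ∈ QT L T, P p ≤ C)
    (hP0 : ∀ p ∈ QT L T, τ ≤ p.2 → P p ≤ 0) :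
    ∫ p in QT L T, w p * P p ≤ C * ∫ p in QT L τ, w p := by
  have hQ := QT_mono (subset_refl L) hτT
  have hm (s : ℝ) : MeasurableSet (QT L s) := hL.prod measurableSet_Ioo
  calc ∫ p in QT L T, w p * P p
      ≤ ∫ p in QT L T, (QT L τ).indicator (fun p => C * w p) p :=
        setIntegral_mono_on hwP ((hw.const_mul C).indicator (hm τ)) (hm T) fun p hp => ?_
    _ = C * ∫ p in QT L τ, w p := by
      rw [setIntegral_indicator (hm τ), inter_eq_right.2 hQ, integral_const_mul]
  by_cases hpτ : p ∈ QT L τ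
  · rw [indicator_of_mem hpτ, mul_comm]
    exact mul_le_mul_of_nonneg_right (hP p hp) (hw0 p)
  · rw [indicator_of_notMem hpτ]
    exact mul_nonpos_of_nonneg_of_nonpos (hw0 p)
      (hP0 p hp (not_lt.1 fun h => hpτ ⟨hp.1, hp.2.1, h⟩))

/-- Test the comparison inequality with `χ(t) θ(x)`: the time cutoff only helps as `χ' ≤ 0`, and
`Δθ` is bounded independently of `τ`. -/
theorem WeakHeatEq.exists_setIntegral_le (H : WeakHeatEq Ω T μ U F) (hνμ : ν ≤ μ)
    (hΩo : IsOpen Ω) (hK : IsCompact K) (hKL : K ⊆ interior L) (hL : MeasurableSet L)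
    (hLΩ : L ⊆ Ω) (hμL : μ L ≠ ⊤) (hU : IntegrableOn U (QT Ω T)) (hF : IntegrableOn F (QT L T))
    (hF0 : ∀ p, 0 ≤ F p) :
    ∃ C, 0 ≤ C ∧ ∀ u f, WeakHeatEq Ω T ν u f → IntegrableOn u (QT Ω T) →
      IntegrableOn f (QT L T) → (∀ p, 0 ≤ f p) → (∀ p, u p ≤ U p → f p ≤ F p) →
      ∀ τ > 0, 2 * τ < T → ∫ p in QT K τ, f p ≤
        (∫ p in QT L (2 * τ), F p) + C * ∫ p in QT Ω (2 * τ), max (u p - U p) 0 := by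
  obtain ⟨θ, hθ, hθc, hθs, hθ1, hθI⟩ := exists_contDiff_eventually_eq_one hK isOpen_interior hKL
  obtain ⟨C, hC0, hC⟩ := exists_lap_le hθ hθc
  refine ⟨C, hC0, fun u f h hu hf hf0 hfF τ hτ hτT => ?_⟩
  obtain ⟨χ, hχ, hχc, hχs, hχI, hχ1, hχ'⟩ := exists_contDiff_cutoff_deriv_nonpos hτ
  have hχ0 (t : ℝ) (ht : 2 * τ ≤ t) : χ t = 0 :=
    Function.notMem_support.1 fun h => (hχs h).not_ge ht
  let ξ : Euc N × ℝ → ℝ := fun q => χ q.2 * θ q.1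
  have hξ : ContDiff ℝ 2 ξ := by fun_prop
  have hξI (p) : ξ p ∈ Icc 0 1 := ⟨mul_nonneg (hχI _).1 (hθI _).1,
    mul_le_one₀ (hχI _).2 (hθI _).1 (hθI _).2⟩
  have hξs : tsupport ξ ⊆ tsupport θ ×ˢ tsupport χ := tsupport_time_mul_subset
  have hξc : HasCompactSupport ξ := (hθc.prod hχc).of_isClosed_subset (isClosed_tsupport _) hξs
  have hξT : tsupport ξ ⊆ interior L ×ˢ Iio T := hξs.trans <| prod_mono hθs <|
    (closure_minimal (hχs.trans Iio_subset_Iic_self) isClosed_Iic).trans (Iic_subset_Iio.2 hτT)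
  have hP := continuous_parabolicOp (v₀ := timeDir N) (v := spaceDir) hξ
  obtain ⟨C', hC'⟩ := hP.bounded_above_of_compact_support (hasCompactSupport_parabolicOp hξc)
  have hmax : IntegrableOn (fun p => max (u p - U p) 0) (QT Ω T) := (hu.sub hU).pos_part
  calc ∫ p in QT K τ, f p
      ≤ ∫ p in QT L T, ξ p * f p :=
        setIntegral_QT_le_of_cutoff hK.measurableSet (hKL.trans interior_subset)
          (by linarith) hf hf0 hξ.continuous hξI fun p hp => by
            simp only [ξ, hχ1 _ (Ioo_subset_Icc_self hp.2), (hθ1 _ hp.1).self_of_nhds, mul_one]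
    _ ≤ (∫ p in QT L T, ξ p * F p) +
          ∫ p in QT Ω T, max (u p - U p) 0 * parabolicOp (timeDir N) spaceDir ξ p :=
        h.integral_mul_le H hνμ hΩo hL hLΩ hμL hu hU hf hF hfF hξ hξc hξT fun p => (hξI p).1
    _ ≤ _ := add_le_add
        (setIntegral_cutoff_mul_le hL hτT.le hF hF0 hξ.continuous hξI fun p hp => by
          simp only [ξ, hχ0 _ hp, zero_mul])
        (setIntegral_mul_le_of_nonpos_of_le hΩo.measurableSet hτT.le hmax
          (fun p => le_max_right _ _) (hmax.mul_bdd hP.aestronglyMeasurable (.of_forall hC'))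
          (fun p hp =>
            parabolicOp_time_mul_le hθ hχ hC0 (hC _) (hθI _).1 (hχI _) (hχ' _ hp.2.1))
          fun p hp hpτ => by
            rw [parabolicOp_time_mul hθ hχ, hχ0 _ hpτ, zero_mul, add_zero]
            exact mul_nonpos_of_nonpos_of_nonneg (hχ' _ hp.2.1) (hθI _).1)

end InitialLayer

section Reduction

variable {N : ℕ} {Ω K : Set (Euc N)} {T : ℝ} {g : ℝ → ℝ} {μ ν : Measure (Euc N)}
  {u U W F : Euc N × ℝ → ℝ}

theorem isFiniteMeasure_restrict_QT (hΩb : Bornology.IsBounded Ω) (T : ℝ) :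
    IsFiniteMeasure (volume.restrict (QT Ω T)) :=
  isFiniteMeasure_restrict.2 ((measure_mono QT_subset_closure_prod_Icc).trans_lt
    (isCompact_closure_prod_Icc hΩb T).measure_lt_top).ne

theorem weakSol_iff : WeakSol Ω T g μ u ↔ IntegrableOn u (QT Ω T) ∧
    IntegrableOn (fun p => g (u p) * rho Ω p.1) (QT Ω T) ∧
    WeakHeatEq Ω T μ u fun p => g (u p) := by
  have heq (ζ : Euc N → ℝ → ℝ) (p : Euc N × ℝ) : heatIntegrand u (fun p => g (u p)) ζ p =
      -(u p) * deriv (ζ p.1) p.2 - u p * lap (fun y => ζ y p.2) p.1 + ζ p.1 p.2 * g (u p) := by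
    rw [heatIntegrand, heatAdj]
    ring
  simp only [WeakSol, WeakHeatEq, heq]

theorem exists_pos_forall_le_rho (hΩo : IsOpen Ω) (hΩc : (Ωᶜ).Nonempty) (hK : IsCompact K)
    (hKΩ : K ⊆ Ω) : ∃ c > 0, ∀ x ∈ K, c ≤ rho Ω x :=
  hK.exists_forall_le' (Metric.continuous_infDist_pt _).continuousOn fun _ hx =>
    (hΩo.isClosed_compl.notMem_iff_infDist_pos hΩc).1 fun h => h (hKΩ hx)

theorem integrableOn_of_integrableOn_mul_rho (hΩo : IsOpen Ω) (hΩc : (Ωᶜ).Nonempty)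
    (hK : IsCompact K) (hKΩ : K ⊆ Ω) (hFm : AEStronglyMeasurable F (volume.restrict (QT Ω T)))
    (hF : IntegrableOn (fun p => F p * rho Ω p.1) (QT Ω T)) : IntegrableOn F (QT K T) := by
  obtain ⟨c, hc, hcK⟩ := exists_pos_forall_le_rho hΩo hΩc hK hKΩ
  have hQ : QT K T ⊆ QT Ω T := QT_mono hKΩ le_rfl
  refine Integrable.mono' ((hF.mono_set hQ).norm.const_mul c⁻¹)
    (hFm.mono_measure (Measure.restrict_mono_set _ hQ)) ?_
  filter_upwards [ae_restrict_mem (hK.measurableSet.prod measurableSet_Ioo)] with p hp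
  rw [inv_mul_eq_div, le_div_iff₀ hc, norm_mul]
  exact mul_le_mul_of_nonneg_left ((hcK _ hp.1).trans (le_abs_self _)) (norm_nonneg _)

theorem integrableOn_mul_rho (hΩo : IsOpen Ω) (hΩb : Bornology.IsBounded Ω)
    (hF : IntegrableOn F (QT Ω T)) : IntegrableOn (fun p => F p * rho Ω p.1) (QT Ω T) := by
  have hρ : Continuous fun p : Euc N × ℝ => rho Ω p.1 :=
    (Metric.continuous_infDist_pt _).comp continuous_fst
  simpa only [mul_comm] using integrableOn_QT_continuous_mul hΩo hΩb hρ hF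

theorem WeakHeatEq.exists_forall_setIntegral_le {ι : Type*} {un fn : ι → Euc N × ℝ → ℝ}
    (H : WeakHeatEq Ω T μ U F) (hνμ : ν ≤ μ) (hμ : ∀ L ⊆ Ω, IsCompact L → μ L < ⊤)
    (hΩo : IsOpen Ω) (hΩb : Bornology.IsBounded Ω) (hT : 0 < T) (hK : IsCompact K) (hKΩ : K ⊆ Ω)
    (hU : IntegrableOn U (QT Ω T)) (hF : ∀ L ⊆ Ω, IsCompact L → IntegrableOn F (QT L T))
    (hF0 : ∀ p, 0 ≤ F p) (hW : IntegrableOn W (QT Ω T)) (hW0 : ∀ p, 0 ≤ W p)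
    (h : ∀ n, WeakHeatEq Ω T ν (un n) (fn n)) (hui : ∀ n, IntegrableOn (un n) (QT Ω T))
    (huW : ∀ n p, un n p ≤ W p) (hfi : ∀ n, IntegrableOn (fn n) (QT Ω T))
    (hf0 : ∀ n p, 0 ≤ fn n p) (hfF : ∀ n p, un n p ≤ U p → fn n p ≤ F p) {ε : ℝ} (hε : 0 < ε) :
    ∃ τ ∈ Ioo 0 T, ∀ n, ∫ p in QT K τ, fn n p ≤ ε := by
  obtain ⟨L, hL, hKL, hLΩ⟩ := exists_compact_between hK hΩo hKΩ
  obtain ⟨C, hC0, hC⟩ := H.exists_setIntegral_le hνμ hΩo hK hKL hL.measurableSet hLΩ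
    (hμ L hLΩ hL).ne hU (hF L hLΩ hL) hF0
  have hWU : IntegrableOn (fun p => W p + |U p|) (QT Ω T) := hW.add hU.abs
  have hlim : Tendsto (fun s => (∫ p in QT L s, F p) + C * ∫ p in QT Ω s, (W p + |U p|))
      (𝓝[>] 0) (𝓝 0) := by
    simpa using (tendsto_setIntegral_QT hL.measure_lt_top.ne hL.measurableSet hT (hF L hLΩ hL)).add
      ((tendsto_setIntegral_QT hΩb.measure_lt_top.ne hΩo.measurableSet hT hWU).const_mul C)
  obtain ⟨s, hsε, hs0, hsT⟩ :=
    ((hlim.eventually (gt_mem_nhds hε)).and (Ioo_mem_nhdsGT hT)).exists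
  refine ⟨s / 2, ⟨by linarith, by linarith⟩, fun n => ?_⟩
  have hQ : QT Ω s ⊆ QT Ω T := QT_mono subset_rfl hsT.le
  have hn := hC (un n) (fn n) (h n) (hui n) ((hfi n).mono_set (QT_mono hLΩ le_rfl)) (hf0 n)
    (hfF n) (s / 2) (by linarith) (by linarith)
  rw [mul_div_cancel₀ s two_ne_zero] at hn
  have hpos : IntegrableOn (fun p => max (un n p - U p) 0) (QT Ω T) := ((hui n).sub hU).pos_part
  have hmax : ∫ p in QT Ω s, max (un n p - U p) 0 ≤ ∫ p in QT Ω s, (W p + |U p|) :=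
    integral_mono (hpos.mono_set hQ) (hWU.mono_set hQ) fun p =>
      max_le (by linarith [huW n p, neg_abs_le (U p)]) (add_nonneg (hW0 p) (abs_nonneg _))
  linarith [mul_le_mul_of_nonneg_left hmax hC0]

/-- Away from `K × {0}` the heat potential of `ν` bounds the `fn`, so that their mass can only
concentrate in the initial layer. -/
theorem uniformIntegrable_of_le_heatPotential [IsFiniteMeasure ν] {fn : ℕ → Euc N × ℝ → ℝ}
    (hΩo : IsOpen Ω) (hΩb : Bornology.IsBounded Ω) (hg : Monotone g) (hK : IsCompact K)
    (hKΩ : K ⊆ Ω) (hν : ν Kᶜ = 0) (hfi : ∀ n, IntegrableOn (fn n) (QT Ω T))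
    (hf0 : ∀ n p, 0 ≤ fn n p) (hf : ∀ n p, fn n p ≤ g (heatPotential ν p))
    (h : ∀ L ⊆ Ω, IsCompact L → ∀ ε > 0, ∃ τ ∈ Ioo 0 T, ∀ n, ∫ p in QT L τ, fn n p ≤ ε) :
    UniformIntegrable fn 1 (volume.restrict (QT Ω T)) := by
  have := isFiniteMeasure_restrict_QT hΩb T
  obtain ⟨L, hL, hKL, hLΩ⟩ := exists_compact_between hK hΩo hKΩ
  obtain ⟨r, hr, hrL⟩ := hK.exists_cthickening_subset_open isOpen_interior hKL
  have hfar (x : Euc N) (hx : x ∉ L) (y : Euc N) (hy : y ∈ K) : r ≤ ‖x - y‖ := by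
    by_contra! hlt
    rw [← dist_eq_norm] at hlt
    exact hx (interior_subset (hrL (Metric.mem_cthickening_of_dist_le x y r K hy hlt.le)))
  refine uniformIntegrable_of_setIntegral_le hfi hf0 fun ε hε => ?_
  obtain ⟨τ, ⟨hτ, hτT⟩, hle⟩ := h L hLΩ hL ε hε
  obtain ⟨M, -, hM⟩ := exists_heatPotential_le ν hν hr hτ
  refine ⟨QT L τ, hL.measurableSet.prod measurableSet_Ioo, fun n => ?_, g M, ?_⟩
  · rw [Measure.restrict_restrict_of_subset (QT_mono hLΩ hτT.le)]
    exact hle n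
  · filter_upwards [ae_restrict_mem (measurableSet_QT hΩo T)] with p hp hpA n
    refine (hf n p).trans (hg (hM p ?_))
    by_contra! ⟨hpτ, y, hy, hyr⟩
    exact hpA ⟨by_contra fun hpL => hyr.not_ge (hfar _ hpL y hy), hp.2.1, hpτ⟩

theorem WeakSol.of_tendsto {un fn : ℕ → Euc N × ℝ → ℝ} (hΩo : IsOpen Ω)
    (hΩb : Bornology.IsBounded Ω) (hW : IntegrableOn W (QT Ω T)) (hu0 : ∀ n p, 0 ≤ un n p)
    (huW : ∀ n p, un n p ≤ W p) (hui : ∀ n, IntegrableOn (un n) (QT Ω T))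
    (hul : ∀ p, Tendsto (un · p) atTop (𝓝 (u p))) (h : ∀ n, WeakHeatEq Ω T ν (un n) (fn n))
    (hf : UniformIntegrable fn 1 (volume.restrict (QT Ω T)))
    (hfl : ∀ p, Tendsto (fn · p) atTop (𝓝 (g (u p)))) : WeakSol Ω T g ν u := by
  have := isFiniteMeasure_restrict_QT hΩb T
  have hum := aestronglyMeasurable_of_tendsto_ae atTop (fun n => (hui n).aestronglyMeasurable)
    (.of_forall hul)
  have hgu : IntegrableOn (fun p => g (u p)) (QT Ω T) :=
    hf.integrable_of_ae_tendsto (.of_forall hfl)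
  refine weakSol_iff.2 ⟨integrableOn_of_nonneg_of_le hum
    (fun p => ge_of_tendsto' (hul p) (hu0 · p)) (fun p => le_of_tendsto' (hul p) (huW · p)) hW,
    integrableOn_mul_rho hΩo hΩb hgu, ?_⟩
  exact WeakHeatEq.of_tendsto h hΩo hΩb hW (fun n => (hui n).aestronglyMeasurable)
    (fun n p => (abs_of_nonneg (hu0 n p)).trans_le (huW n p)) hul
    (fun n => memLp_one_iff_integrable.1 (hf.memLp n)) hgu
    (tendsto_integral_abs_sub_of_uniformIntegrable hf (.of_forall hfl))

theorem GoodMeasure.of_le (h : GoodMeasure Ω T g μ) (hνμ : ν ≤ μ) (hμ : MemM1 Ω μ)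
    (hg : GoodG g) (hΩo : IsOpen Ω) (hΩb : Bornology.IsBounded Ω) (hΩc : (Ωᶜ).Nonempty)
    (hT : 0 < T) (hK : IsCompact K) (hKΩ : K ⊆ Ω) (hν : ν Kᶜ = 0) : GoodMeasure Ω T g ν := by
  obtain ⟨U, hU⟩ := h
  obtain ⟨hUi, hgU, hUeq⟩ := weakSol_iff.1 hU
  have : IsFiniteMeasure ν := ⟨by
    rw [← measure_add_measure_compl hK.measurableSet, hν, add_zero]
    exact (hνμ K).trans_lt (hμ.2.1 K hKΩ hK)⟩
  have hνΩ : ν Ωᶜ = 0 := measure_mono_null (compl_subset_compl.2 hKΩ) hν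
  have hW := integrableOn_heatPotential Ω ν T
  obtain ⟨u, hu0, huW, hu_anti, hui, hu⟩ := exists_antitone_solutions_lipApprox hg hΩo hΩb hνΩ
    (heatPotential_nonneg ν) hW (katoIneq_heatPotential hΩo hΩb hνΩ hT.le)
  have hbdd (p) : BddBelow (range fun n => u n p) := ⟨0, forall_mem_range.2 (hu0 · p)⟩
  have hul (p) := tendsto_atTop_ciInf (hu_anti p) (hbdd p)
  have hfi (n : ℕ) : IntegrableOn (fun p => lipApprox g n (u n p)) (QT Ω T) :=
    (lipschitzAbsorption_lipApprox hg n).integrable_comp (hu0 n) (hui n)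
  have hf0 (n p) : 0 ≤ lipApprox g n (u n p) := lipApprox_nonneg hg n _
  have hfg (n p) (s : ℝ) (hs : u n p ≤ s) : lipApprox g n (u n p) ≤ g s :=
    (lipApprox_le hg n _).trans (hg.2.1 hs)
  have hgU_loc (L) (hLΩ : L ⊆ Ω) (hL : IsCompact L) : IntegrableOn (fun p => g (U p)) (QT L T) :=
    integrableOn_of_integrableOn_mul_rho hΩo hΩc hL hLΩ
      (hg.1.comp_aestronglyMeasurable hUi.aestronglyMeasurable) hgU
  have hUI : UniformIntegrable (fun n p => lipApprox g n (u n p)) 1 (volume.restrict (QT Ω T)) :=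
    uniformIntegrable_of_le_heatPotential hΩo hΩb hg.2.1 hK hKΩ hν hfi hf0
      (fun n p => hfg n p _ (huW n p)) fun L hLΩ hL ε hε =>
        hUeq.exists_forall_setIntegral_le hνμ hμ.2.1 hΩo hΩb hT hL hLΩ hUi hgU_loc
          (fun p => hg.nonneg _) hW (heatPotential_nonneg ν) hu hui huW hfi hf0
          (fun n p => hfg n p _) hε
  exact ⟨_, .of_tendsto hΩo hΩb hW hu0 huW hui hul hu hUI fun p =>
    tendsto_lipApprox_comp hg (hul p) fun n => ciInf_le (hbdd p) n⟩

theorem MemM1.of_le (h : MemM1 Ω μ) (hνμ : ν ≤ μ) : MemM1 Ω ν :=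
  ⟨le_antisymm ((hνμ _).trans h.1.le) bot_le, fun K hKΩ hK => (hνμ K).trans_lt (h.2.1 K hKΩ hK),
    (lintegral_mono' hνμ le_rfl).trans_lt h.2.2⟩

theorem IsReducedMeasure.restrict_inf_restrict_le {μ' μstar : Measure (Euc N)}
    (h : IsReducedMeasure Ω T g μ μstar) (hμ' : MemM1 Ω μ') (hgood : GoodMeasure Ω T g μ')
    (hg : GoodG g) (hΩo : IsOpen Ω) (hΩb : Bornology.IsBounded Ω) (hΩc : (Ωᶜ).Nonempty)
    (hT : 0 < T) (hK : IsCompact K) (hKΩ : K ⊆ Ω) :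
    μ'.restrict K ⊓ μ.restrict K ≤ μstar := by
  have hle' : μ'.restrict K ⊓ μ.restrict K ≤ μ' := inf_le_left.trans Measure.restrict_le_self
  have hnull : (μ'.restrict K ⊓ μ.restrict K) Kᶜ = 0 := nonpos_iff_eq_zero.1 <|
    (inf_le_left (a := μ'.restrict K) Kᶜ).trans_eq <| by
      rw [Measure.restrict_apply hK.measurableSet.compl, compl_inter_self, measure_empty]
  exact h.2.2.2 _ (hμ'.of_le hle')
    (hgood.of_le hle' hμ' hg hΩo hΩb hΩc hT hK hKΩ hnull)
    (inf_le_right.trans Measure.restrict_le_self)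

theorem isSigmaCompact_of_isOpen (hΩo : IsOpen Ω) : IsSigmaCompact Ω := by
  have := hΩo.locallyCompactSpace
  exact isSigmaCompact_iff_sigmaCompactSpace.2 inferInstance

theorem nonempty_compl_of_isBounded (hN : 1 ≤ N) (hΩb : Bornology.IsBounded Ω) :
    (Ωᶜ).Nonempty := by
  have : Nonempty (Fin N) := ⟨⟨0, hN⟩⟩
  exact nonempty_compl.2 fun h => NormedSpace.unbounded_univ ℝ (Euc N) (h ▸ hΩb)

end Reduction

section MeasureLattice

variable {α : Type*} [MeasurableSpace α]

theorem measure_add_le_inf_add_sup (μ ν : Measure α) [IsFiniteMeasure μ] [IsFiniteMeasure ν] :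
    μ + ν ≤ μ ⊓ ν + μ ⊔ ν := by
  obtain ⟨s, hs⟩ := exists_isHahnDecomposition μ ν
  have hsplit (m : Measure α) : m.restrict s + m.restrict sᶜ = m :=
    Measure.restrict_add_restrict_compl hs.measurableSet
  have hinf : μ.restrict s + ν.restrict sᶜ ≤ μ ⊓ ν := by
    refine le_inf ?_ ?_
    · exact (add_le_add_right hs.ge_on_compl _).trans_eq (hsplit μ)
    · exact (add_le_add_left hs.le_on _).trans_eq (hsplit ν)
  have hsup : ν.restrict s + μ.restrict sᶜ ≤ μ ⊔ ν :=
    (add_le_add (Measure.restrict_mono_measure le_sup_right _)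
      (Measure.restrict_mono_measure le_sup_left _)).trans_eq (hsplit _)
  calc μ + ν = (μ.restrict s + μ.restrict sᶜ) + (ν.restrict s + ν.restrict sᶜ) := by
        rw [hsplit, hsplit]
    _ = (μ.restrict s + ν.restrict sᶜ) + (ν.restrict s + μ.restrict sᶜ) := by abel
    _ ≤ μ ⊓ ν + μ ⊔ ν := add_le_add hinf hsup

theorem measure_le_of_forall_isCompact_restrict_le [TopologicalSpace α] {μ ν : Measure α}
    {Ω : Set α} (hΩ : IsSigmaCompact Ω) (hμ : μ Ωᶜ = 0)
    (h : ∀ K ⊆ Ω, IsCompact K → μ.restrict K ≤ ν) : μ ≤ ν := by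
  obtain ⟨K, hK, hKΩ⟩ := hΩ
  have hcompact (n : ℕ) : IsCompact (accumulate K n) := isCompact_accumulate hK n
  rw [← Measure.restrict_eq_self_of_ae_mem (mem_ae_iff.2 hμ), ← hKΩ, ← iUnion_accumulate]
  refine Measure.le_iff.2 fun A hA => ?_
  rw [Measure.restrict_iUnion_apply_eq_iSup monotone_accumulate.directed_le hA]
  exact iSup_le fun n => h _ ((accumulate_subset_iUnion n).trans_eq hKΩ) (hcompact n) A

end MeasureLattice

theorem stmt_13_general {N : ℕ} (hN : 1 ≤ N) {Ω : Set (Euc N)} (hΩo : IsOpen Ω)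
    (hΩb : Bornology.IsBounded Ω) {T : ℝ} (hT : 0 < T) {g : ℝ → ℝ} (hg : GoodG g)
    {μ₁ μ₂ μ₁star μ₂star : Measure (Euc N)} (hμ₁ : MemM1 Ω μ₁) (hle : μ₁ ≤ μ₂)
    (hred₁ : IsReducedMeasure Ω T g μ₁ μ₁star) (hred₂ : IsReducedMeasure Ω T g μ₂ μ₂star) :
    μ₁star ≤ μ₂star ∧ μ₂star + μ₁ ≤ μ₁star + μ₂ := by
  obtain ⟨hμ₂s, hs₂, hgood₂, hmax₂⟩ := hred₂
  refine ⟨hmax₂ _ hred₁.1 hred₁.2.2.1 (hred₁.2.1.trans hle),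
    measure_le_of_forall_isCompact_restrict_le (isSigmaCompact_of_isOpen hΩo)
      (by rw [Measure.add_apply, hμ₂s.1, hμ₁.1, add_zero]) fun K hKΩ hK => ?_⟩
  have : IsFiniteMeasure (μ₂star.restrict K) := isFiniteMeasure_restrict.2 (hμ₂s.2.1 K hKΩ hK).ne
  have : IsFiniteMeasure (μ₁.restrict K) := isFiniteMeasure_restrict.2 (hμ₁.2.1 K hKΩ hK).ne
  calc (μ₂star + μ₁).restrict K = μ₂star.restrict K + μ₁.restrict K := Measure.restrict_add ..
    _ ≤ μ₂star.restrict K ⊓ μ₁.restrict K + μ₂star.restrict K ⊔ μ₁.restrict K :=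
      measure_add_le_inf_add_sup _ _
    _ ≤ μ₁star + μ₂ := add_le_add
      (hred₁.restrict_inf_restrict_le hμ₂s hgood₂ hg hΩo hΩb
        (nonempty_compl_of_isBounded hN hΩb) hT hK hKΩ)
      (sup_le (Measure.restrict_le_self.trans hs₂) (Measure.restrict_le_self.trans hle))

/-- **Theorem 2.17.** If `μ₁ ≤ μ₂` then `μ₁* ≤ μ₂*` and
`μ₂* − μ₁* ≤ μ₂ − μ₁`, i.e. `μ₂*(A) + μ₁(A) ≤ μ₁*(A) + μ₂(A)` for every Borel
set `A ⊆ Ω`. -/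
theorem stmt_13 {N : ℕ} (hN : 1 ≤ N) (Ω : Set (Euc N)) (hΩo : IsOpen Ω)
    (hΩc : IsConnected Ω) (hΩb : Bornology.IsBounded Ω) (T : ℝ) (hT : 0 < T)
    (g : ℝ → ℝ) (hg : GoodG g) (μ₁ μ₂ μ₁star μ₂star : Measure (Euc N))
    (hμ₁ : MemM1 Ω μ₁) (hμ₂ : MemM1 Ω μ₂) (hle : μ₁ ≤ μ₂)
    (hred₁ : IsReducedMeasure Ω T g μ₁ μ₁star)
    (hred₂ : IsReducedMeasure Ω T g μ₂ μ₂star) :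
    μ₁star ≤ μ₂star ∧
    ∀ A : Set (Euc N), MeasurableSet A → A ⊆ Ω →
      μ₂star A + μ₁ A ≤ μ₁star A + μ₂ A := by
  obtain ⟨hmono, hadd⟩ := stmt_13_general hN hΩo hΩb hT hg hμ₁ hle hred₁ hred₂
  exact ⟨hmono, fun A _ _ => hadd A⟩
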